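/- Let k be a field of characteristic p > 0, I an infinitesimal group scheme over k, X a scheme of finite type over k with an I-action, φ : X → X/I the categorical quotient, and ψ : X/I → X^{(p^n)} the factorization of F^n_{X/k} through φ, for an integer n ≥ h(I). For any line bundle L on X, the sheaf M := ψ^*(L^{(p^n)}) is a line bundle on X/I with φ^*(M) ≅ L^{⊗ p^n}; moreover, L is ample if and only if M is ample. -/

import Mathlib

open AlgebraicGeometry CategoryTheory CategoryTheory.Limits Opposite

universe u

noncomputable section

/-- The spectrum of the field `k`, the base of all schemes considered. -/
abbrev Spk (k : Type u) [Field k] : Scheme.{u} := Spec (CommRingCat.of k)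

/-- A scheme over the field `k`: a scheme together with a structure morphism to `Spec k`. -/
structure SchemeOver (k : Type u) [Field k] : Type (u + 1) where
  carrier : Scheme.{u}
  str : carrier ⟶ Spk k

variable (k : Type u) [Field k]

/-- A group scheme over `k`, presented via its functor of points: for every scheme `T`
and every pair of `T`-points lying over the same `T`-point of `Spec k`, a product point,
together with unit and inverse, satisfying the group axioms functorially. -/
structure GroupSchemeOver extends SchemeOver k where
  mul : ∀ {T : Scheme.{u}} (a b : T ⟶ carrier), a ≫ str = b ≫ str → (T ⟶ carrier)
  one : Spk k ⟶ carrier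
  inv : ∀ {T : Scheme.{u}}, (T ⟶ carrier) → (T ⟶ carrier)
  mul_str : ∀ {T : Scheme.{u}} (a b : T ⟶ carrier) (h), mul a b h ≫ str = a ≫ str
  one_str : one ≫ str = 𝟙 (Spk k)
  inv_str : ∀ {T : Scheme.{u}} (a : T ⟶ carrier), inv a ≫ str = a ≫ str
  mul_natural : ∀ {T' T : Scheme.{u}} (g : T' ⟶ T) (a b : T ⟶ carrier) (h h'),
    g ≫ mul a b h = mul (g ≫ a) (g ≫ b) h'
  inv_natural : ∀ {T' T : Scheme.{u}} (g : T' ⟶ T) (a : T ⟶ carrier),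
    g ≫ inv a = inv (g ≫ a)
  mul_assoc : ∀ {T : Scheme.{u}} (a b c : T ⟶ carrier) (h₁ h₂ h₃ h₄),
    mul (mul a b h₁) c h₂ = mul a (mul b c h₃) h₄
  one_mul : ∀ {T : Scheme.{u}} (a : T ⟶ carrier) (h), mul (a ≫ str ≫ one) a h = a
  mul_one : ∀ {T : Scheme.{u}} (a : T ⟶ carrier) (h), mul a (a ≫ str ≫ one) h = a
  inv_mul : ∀ {T : Scheme.{u}} (a : T ⟶ carrier) (h), mul (inv a) a h = a ≫ str ≫ one

variable {k}

theorem GroupSchemeOver.mul_congr (G : GroupSchemeOver k) {T : Scheme.{u}}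
    {a a' b b' : T ⟶ G.carrier} (ha : a = a') (hb : b = b') (h h') :
    G.mul a b h = G.mul a' b' h' := by subst ha; subst hb; rfl

/-- A homomorphism of group schemes over `k`. -/
structure GroupHom (G H : GroupSchemeOver k) where
  hom : G.carrier ⟶ H.carrier
  hom_str : hom ≫ H.str = G.str
  hom_one : G.one ≫ hom = H.one
  hom_mul : ∀ {T : Scheme.{u}} (a b : T ⟶ G.carrier) (h h'),
    G.mul a b h ≫ hom = H.mul (a ≫ hom) (b ≫ hom) h'

/-- An action of a group scheme `G` over `k` on a scheme `X` over `k`, presented via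
its functor of points. -/
structure ActionOver (G : GroupSchemeOver k) (X : SchemeOver k) where
  act : ∀ {T : Scheme.{u}} (g : T ⟶ G.carrier) (x : T ⟶ X.carrier),
    g ≫ G.str = x ≫ X.str → (T ⟶ X.carrier)
  act_str : ∀ {T : Scheme.{u}} (g : T ⟶ G.carrier) (x : T ⟶ X.carrier) (h),
    act g x h ≫ X.str = x ≫ X.str
  act_natural : ∀ {T' T : Scheme.{u}} (f : T' ⟶ T) (g : T ⟶ G.carrier)
    (x : T ⟶ X.carrier) (h h'), f ≫ act g x h = act (f ≫ g) (f ≫ x) h'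
  one_act : ∀ {T : Scheme.{u}} (x : T ⟶ X.carrier) (h), act (x ≫ X.str ≫ G.one) x h = x
  mul_act : ∀ {T : Scheme.{u}} (g g' : T ⟶ G.carrier) (x : T ⟶ X.carrier) (h₁ h₂ h₃ h₄),
    act (G.mul g g' h₁) x h₂ = act g (act g' x h₃) h₄

theorem ActionOver.act_congr {G : GroupSchemeOver k} {X : SchemeOver k}
    (α : ActionOver G X) {T : Scheme.{u}} {g g' : T ⟶ G.carrier} {x x' : T ⟶ X.carrier}
    (hg : g = g') (hx : x = x') (h h') : α.act g x h = α.act g' x' h' := by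
  subst hg; subst hx; rfl

/-- The action of a group scheme on itself by left translations. -/
def GroupSchemeOver.selfAction (G : GroupSchemeOver k) : ActionOver G G.toSchemeOver where
  act g x h := G.mul g x h
  act_str g x h := (G.mul_str g x h).trans h
  act_natural f g x h h' := G.mul_natural f g x h h'
  one_act x h := G.one_mul x h
  mul_act g g' x h₁ h₂ h₃ h₄ := G.mul_assoc g g' x h₁ h₂ h₃ h₄

/-- Restriction of an action along a homomorphism of group schemes. -/
def ActionOver.res {G H : GroupSchemeOver k} {X : SchemeOver k} (φ : GroupHom H G)
    (α : ActionOver G X) : ActionOver H X where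
  act g x h := α.act (g ≫ φ.hom) x (by rw [Category.assoc, φ.hom_str, h])
  act_str g x h := α.act_str _ _ _
  act_natural f g x h h' := by
    refine (α.act_natural f (g ≫ φ.hom) x _ ?_).trans (α.act_congr ?_ rfl _ _)
    · simp only [Category.assoc, φ.hom_str, ← h']
    · simp only [Category.assoc]
  one_act x h := by
    refine (α.act_congr ?_ rfl _ ?_).trans (α.one_act x ?_)
    · simp only [Category.assoc, φ.hom_one]
    · simp only [Category.assoc, G.one_str, Category.comp_id]
    · simp only [Category.assoc, G.one_str, Category.comp_id]
  mul_act g g' x h₁ h₂ h₃ h₄ := by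
    have hg : g ≫ H.str = x ≫ X.str := (H.mul_str g g' h₁).symm.trans h₂
    have hg' : g' ≫ H.str = x ≫ X.str := h₁.symm.trans hg
    have p1 : (g ≫ φ.hom) ≫ G.str = (g' ≫ φ.hom) ≫ G.str := by
      simp only [Category.assoc, φ.hom_str]; exact h₁
    have p3 : (g' ≫ φ.hom) ≫ G.str = x ≫ X.str := by
      simp only [Category.assoc, φ.hom_str]; exact hg'
    refine (α.act_congr (φ.hom_mul g g' h₁ p1) rfl _ ?_).trans
      (α.mul_act (g ≫ φ.hom) (g' ≫ φ.hom) x p1 ?_ p3 ?_)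
    · rw [G.mul_str]
      simp only [Category.assoc, φ.hom_str]; exact hg
    · rw [G.mul_str]
      simp only [Category.assoc, φ.hom_str]; exact hg
    · rw [α.act_str]
      simp only [Category.assoc, φ.hom_str]; exact hg
/-! ### Vector bundles and line bundles, geometrically -/

/-- The data underlying a (geometric) vector bundle on a scheme `X`: a total space `π : tot ⟶ X`
together with a fiberwise `Γ(T, ⊤)`-module structure on the `T`-points of `tot` over a fixed
`T`-point of `X`, functorially in `T`. -/
structure VecBundleData (X : Scheme.{u}) : Type (u + 1) where
  tot : Scheme.{u}
  π : tot ⟶ X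
  zero : X ⟶ tot
  zero_π : zero ≫ π = 𝟙 X
  add : ∀ {T : Scheme.{u}} (a b : T ⟶ tot), a ≫ π = b ≫ π → (T ⟶ tot)
  smul : ∀ {T : Scheme.{u}} (f : Γ(T, ⊤)) (a : T ⟶ tot), T ⟶ tot
  add_π : ∀ {T : Scheme.{u}} (a b : T ⟶ tot) (h), add a b h ≫ π = a ≫ π
  smul_π : ∀ {T : Scheme.{u}} (f : Γ(T, ⊤)) (a : T ⟶ tot), smul f a ≫ π = a ≫ π
  add_natural : ∀ {T' T : Scheme.{u}} (g : T' ⟶ T) (a b : T ⟶ tot) (h h'),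
    g ≫ add a b h = add (g ≫ a) (g ≫ b) h'
  smul_natural : ∀ {T' T : Scheme.{u}} (g : T' ⟶ T) (f : Γ(T, ⊤)) (a : T ⟶ tot),
    g ≫ smul f a = smul (g.appTop f) (g ≫ a)
  add_comm : ∀ {T : Scheme.{u}} (a b : T ⟶ tot) (h h'), add a b h = add b a h'
  add_assoc : ∀ {T : Scheme.{u}} (a b c : T ⟶ tot) (h₁ h₂ h₃ h₄),
    add (add a b h₁) c h₂ = add a (add b c h₃) h₄
  zero_add : ∀ {T : Scheme.{u}} (a : T ⟶ tot) (h), add ((a ≫ π) ≫ zero) a h = a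
  one_smul : ∀ {T : Scheme.{u}} (a : T ⟶ tot), smul 1 a = a
  mul_smul : ∀ {T : Scheme.{u}} (f g : Γ(T, ⊤)) (a : T ⟶ tot), smul (f * g) a = smul f (smul g a)
  smul_add : ∀ {T : Scheme.{u}} (f : Γ(T, ⊤)) (a b : T ⟶ tot) (h h'),
    smul f (add a b h) = add (smul f a) (smul f b) h'
  add_smul : ∀ {T : Scheme.{u}} (f g : Γ(T, ⊤)) (a : T ⟶ tot) (h),
    smul (f + g) a = add (smul f a) (smul g a) h
  zero_smul : ∀ {T : Scheme.{u}} (a : T ⟶ tot), smul 0 a = (a ≫ π) ≫ zero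
  smul_zero : ∀ {T : Scheme.{u}} (f : Γ(T, ⊤)) (x : T ⟶ X), smul f (x ≫ zero) = x ≫ zero

namespace VecBundleData

variable {X : Scheme.{u}} (E : VecBundleData X)

theorem add_congr {T : Scheme.{u}} {a a' b b' : T ⟶ E.tot} (ha : a = a') (hb : b = b')
    (h h') : E.add a b h = E.add a' b' h' := by subst ha; subst hb; rfl

/-- The fiber of a vector bundle over a `T`-point of the base. -/
abbrev Fiber {T : Scheme.{u}} (x : T ⟶ X) : Type u := { a : T ⟶ E.tot // a ≫ E.π = x }

instance fiberZero {T : Scheme.{u}} (x : T ⟶ X) : Zero (E.Fiber x) :=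
  ⟨⟨x ≫ E.zero, by rw [Category.assoc, E.zero_π, Category.comp_id]⟩⟩

instance fiberAdd {T : Scheme.{u}} (x : T ⟶ X) : Add (E.Fiber x) :=
  ⟨fun a b => ⟨E.add a.1 b.1 (a.2.trans b.2.symm), (E.add_π _ _ _).trans a.2⟩⟩

instance fiberSMul {T : Scheme.{u}} (x : T ⟶ X) : SMul Γ(T, ⊤) (E.Fiber x) :=
  ⟨fun f a => ⟨E.smul f a.1, (E.smul_π _ _).trans a.2⟩⟩

@[simp] theorem coe_fiber_zero {T : Scheme.{u}} (x : T ⟶ X) :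
    ((0 : E.Fiber x) : T ⟶ E.tot) = x ≫ E.zero := rfl

@[simp] theorem coe_fiber_add {T : Scheme.{u}} (x : T ⟶ X) (a b : E.Fiber x) :
    ((a + b : E.Fiber x) : T ⟶ E.tot) = E.add a.1 b.1 (a.2.trans b.2.symm) := rfl

@[simp] theorem coe_fiber_smul {T : Scheme.{u}} (x : T ⟶ X) (f : Γ(T, ⊤)) (a : E.Fiber x) :
    ((f • a : E.Fiber x) : T ⟶ E.tot) = E.smul f a.1 := rfl

instance {T : Scheme.{u}} (x : T ⟶ X) : AddCommMonoid (E.Fiber x) where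
  add_assoc a b c := Subtype.ext (E.add_assoc _ _ _ _ _ _ _)
  add_comm a b := Subtype.ext (E.add_comm _ _ _ _)
  zero_add a := Subtype.ext (by
    have hz : ((a.1 ≫ E.π) ≫ E.zero) ≫ E.π = a.1 ≫ E.π := by
      rw [Category.assoc, E.zero_π, Category.comp_id]
    show E.add (x ≫ E.zero) a.1 _ = a.1
    exact (E.add_congr (by rw [a.2]) rfl _ hz).trans (E.zero_add a.1 hz))
  add_zero a := Subtype.ext (by
    have hz : ((a.1 ≫ E.π) ≫ E.zero) ≫ E.π = a.1 ≫ E.π := by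
      rw [Category.assoc, E.zero_π, Category.comp_id]
    have hz' : (x ≫ E.zero) ≫ E.π = a.1 ≫ E.π := by
      rw [Category.assoc, E.zero_π, Category.comp_id, a.2]
    show E.add a.1 (x ≫ E.zero) _ = a.1
    exact (E.add_comm _ _ _ hz').trans
      ((E.add_congr (by rw [a.2]) rfl _ hz).trans (E.zero_add a.1 hz)))
  nsmul := nsmulRec
  nsmul_zero _ := rfl
  nsmul_succ _ _ := rfl

instance {T : Scheme.{u}} (x : T ⟶ X) : Module Γ(T, ⊤) (E.Fiber x) where
  one_smul a := Subtype.ext (E.one_smul a.1)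
  mul_smul f g a := Subtype.ext (E.mul_smul f g a.1)
  smul_zero f := Subtype.ext (E.smul_zero f x)
  smul_add f a b := Subtype.ext (E.smul_add f a.1 b.1 _ _)
  add_smul f g a := Subtype.ext (E.add_smul f g a.1 _)
  zero_smul a := Subtype.ext ((E.zero_smul a.1).trans (by rw [a.2]; rfl))

/-- A family of `n` local sections of `E` over an open subset `U` is a frame if every point
of the total space over `U` is, in a unique way, a linear combination of these sections. -/
def IsFrame {n : ℕ} (U : X.Opens) (s : Fin n → (U.toScheme ⟶ E.tot)) : Prop :=
  ∃ hs : ∀ i, s i ≫ E.π = U.ι,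
    ∀ {T : Scheme.{u}} (x : T ⟶ U.toScheme),
      Function.Bijective (fun f : Fin n → Γ(T, ⊤) =>
        (∑ i, f i • (⟨x ≫ s i, by rw [Category.assoc, hs i]⟩ : E.Fiber (x ≫ U.ι))))

/-- A family of `n` global sections of `E` is a global frame if every point of the total
space is, in a unique way, a linear combination of these sections. -/
def IsGlobalFrame {n : ℕ} (s : Fin n → (X ⟶ E.tot)) : Prop :=
  ∃ hs : ∀ i, s i ≫ E.π = 𝟙 X,
    ∀ {T : Scheme.{u}} (x : T ⟶ X),
      Function.Bijective (fun f : Fin n → Γ(T, ⊤) =>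
        (∑ i, f i • (⟨x ≫ s i, by rw [Category.assoc, hs i, Category.comp_id]⟩ : E.Fiber x)))

end VecBundleData

/-- A (geometric) vector bundle of rank `n` on `X`: bundle data which is locally trivial,
i.e. admits local frames around every point of `X`. -/
structure VecBundle (n : ℕ) (X : Scheme.{u}) extends VecBundleData X where
  locTriv : ∀ x : X, ∃ (U : X.Opens) (s : Fin n → (U.toScheme ⟶ tot)),
    x ∈ U ∧ toVecBundleData.IsFrame U s

/-- A (geometric) line bundle on a scheme. -/
abbrev LineBundle (X : Scheme.{u}) := VecBundle 1 X

/-- A morphism of total spaces of vector bundles over `X` is linear if it commutes with the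
projections, the fiberwise additions and the fiberwise scalar multiplications. -/
def IsLinearHom {X : Scheme.{u}} (E F : VecBundleData X) (φ : E.tot ⟶ F.tot) : Prop :=
  (φ ≫ F.π = E.π) ∧
  (∀ {T : Scheme.{u}} (a b : T ⟶ E.tot) (h h'), E.add a b h ≫ φ = F.add (a ≫ φ) (b ≫ φ) h') ∧
  (∀ {T : Scheme.{u}} (f : Γ(T, ⊤)) (a : T ⟶ E.tot), E.smul f a ≫ φ = F.smul f (a ≫ φ))

/-- Two vector bundles on `X` are isomorphic if there is a linear isomorphism between them. -/
def VBIso {X : Scheme.{u}} {n m : ℕ} (E : VecBundle n X) (F : VecBundle m X) : Prop :=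
  ∃ φ : E.tot ⟶ F.tot, IsLinearHom E.toVecBundleData F.toVecBundleData φ ∧ IsIso φ

/-- `F` is a pullback of the vector bundle `E` along `g : Y ⟶ X`. -/
def IsPullbackBundle {Y X : Scheme.{u}} (g : Y ⟶ X) {n : ℕ} (E : VecBundle n X)
    (F : VecBundle n Y) : Prop :=
  ∃ τ : F.tot ⟶ E.tot,
    (τ ≫ E.π = F.π ≫ g) ∧
    (∀ {T : Scheme.{u}} (a b : T ⟶ F.tot) (h h'), F.add a b h ≫ τ = E.add (a ≫ τ) (b ≫ τ) h') ∧
    (∀ {T : Scheme.{u}} (f : Γ(T, ⊤)) (a : T ⟶ F.tot), F.smul f a ≫ τ = E.smul f (a ≫ τ)) ∧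
    (∀ {T : Scheme.{u}} (y : T ⟶ Y) (a : T ⟶ E.tot), a ≫ E.π = y ≫ g →
      ∃! b : T ⟶ F.tot, b ≫ F.π = y ∧ b ≫ τ = a)

/-- A vector bundle is trivial if it admits a global frame. -/
def IsTrivialBundle {X : Scheme.{u}} {n : ℕ} (E : VecBundle n X) : Prop :=
  ∃ s : Fin n → (X ⟶ E.tot), E.toVecBundleData.IsGlobalFrame s

/-- `N` is a tensor product of the line bundles `L` and `M`: witnessed by a fiberwise
bilinear pairing taking local frames to local frames. -/
def IsTensor {X : Scheme.{u}} (L M N : LineBundle X) : Prop :=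
  ∃ β : ∀ {T : Scheme.{u}} (a : T ⟶ L.tot) (b : T ⟶ M.tot), a ≫ L.π = b ≫ M.π → (T ⟶ N.tot),
    (∀ {T : Scheme.{u}} (a : T ⟶ L.tot) (b : T ⟶ M.tot) (h), β a b h ≫ N.π = a ≫ L.π) ∧
    (∀ {T' T : Scheme.{u}} (g : T' ⟶ T) (a : T ⟶ L.tot) (b : T ⟶ M.tot) (h h'),
      g ≫ β a b h = β (g ≫ a) (g ≫ b) h') ∧
    (∀ {T : Scheme.{u}} (a a' : T ⟶ L.tot) (b : T ⟶ M.tot) (h₁ h₂ h₃ h₄ h₅),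
      β (L.add a a' h₁) b h₂ = N.add (β a b h₃) (β a' b h₄) h₅) ∧
    (∀ {T : Scheme.{u}} (a : T ⟶ L.tot) (b b' : T ⟶ M.tot) (h₁ h₂ h₃ h₄ h₅),
      β a (M.add b b' h₁) h₂ = N.add (β a b h₃) (β a b' h₄) h₅) ∧
    (∀ {T : Scheme.{u}} (f : Γ(T, ⊤)) (a : T ⟶ L.tot) (b : T ⟶ M.tot) (h₁ h₂),
      β (L.smul f a) b h₁ = N.smul f (β a b h₂)) ∧
    (∀ {T : Scheme.{u}} (f : Γ(T, ⊤)) (a : T ⟶ L.tot) (b : T ⟶ M.tot) (h₁ h₂),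
      β a (M.smul f b) h₁ = N.smul f (β a b h₂)) ∧
    (∀ (U : X.Opens) (sL : Fin 1 → (U.toScheme ⟶ L.tot)) (sM : Fin 1 → (U.toScheme ⟶ M.tot)),
      L.toVecBundleData.IsFrame U sL → M.toVecBundleData.IsFrame U sM →
      ∀ (h : sL 0 ≫ L.π = sM 0 ≫ M.π),
        N.toVecBundleData.IsFrame (n := 1) U (fun _ => β (sL 0) (sM 0) h))

/-- `N` is an `m`-th tensor power of the line bundle `L`. -/
def IsTensorPow {X : Scheme.{u}} (L : LineBundle X) : ℕ → LineBundle X → Prop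
  | 0, N => IsTrivialBundle N
  | m + 1, N => ∃ M : LineBundle X, IsTensorPow L m M ∧ IsTensor M L N

/-- A line bundle is ample if the base is quasi-compact and quasi-separated and the
non-vanishing loci of global sections of positive tensor powers give an affine open cover. -/
def IsAmple {X : Scheme.{u}} (L : LineBundle X) : Prop :=
  CompactSpace X ∧ QuasiSeparatedSpace X ∧
  ∀ x : X, ∃ (m : ℕ), 0 < m ∧ ∃ (N : LineBundle X), IsTensorPow L m N ∧
    ∃ (s : X ⟶ N.tot), s ≫ N.π = 𝟙 X ∧
      ∃ U : X.Opens, IsAffineOpen U ∧ x ∈ U ∧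
        (U : Set X) = {y : X | s.base y ≠ N.zero.base y}
/-! ### Properties of schemes and group schemes over `k` -/

/-- An algebraic group over `k` is a group scheme of finite type over `k`. -/
def GroupSchemeOver.IsAlgebraic {k : Type u} [Field k] (G : GroupSchemeOver k) : Prop :=
  LocallyOfFiniteType G.str ∧ QuasiCompact G.str

/-- A scheme of finite type over `k`. -/
def SchemeOver.IsFiniteType {k : Type u} [Field k] (X : SchemeOver k) : Prop :=
  LocallyOfFiniteType X.str ∧ QuasiCompact X.str

/-- A variety over `k`: an integral separated scheme of finite type over `k`. -/
def SchemeOver.IsVariety {k : Type u} [Field k] (X : SchemeOver k) : Prop :=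
  IsIntegral X.carrier ∧ AlgebraicGeometry.IsSeparated X.str ∧ X.IsFiniteType

/-- A scheme is normal if all its local rings are integrally closed domains. -/
def IsNormalScheme (X : Scheme.{u}) : Prop :=
  ∀ x : X, IsDomain (X.presheaf.stalk x) ∧ IsIntegrallyClosed (X.presheaf.stalk x)

/-- The base change of a scheme over `k` to the algebraic closure of `k`. -/
def SchemeOver.geomFiber {k : Type u} [Field k] (X : SchemeOver k) : Scheme.{u} :=
  pullback X.str (Spec.map (CommRingCat.ofHom (algebraMap k (AlgebraicClosure k))))

/-- A scheme over `k` is geometrically integral if its base change to an algebraic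
closure of `k` is integral. -/
def SchemeOver.IsGeomIntegral {k : Type u} [Field k] (X : SchemeOver k) : Prop :=
  IsIntegral X.geomFiber

/-- A scheme over `k` is geometrically connected if its base change to an algebraic
closure of `k` is connected. -/
def SchemeOver.IsGeomConnected {k : Type u} [Field k] (X : SchemeOver k) : Prop :=
  ConnectedSpace X.geomFiber

/-- A scheme over `k` is geometrically irreducible if its base change to an algebraic
closure of `k` is irreducible. -/
def SchemeOver.IsGeomIrreducible {k : Type u} [Field k] (X : SchemeOver k) : Prop :=
  IrreducibleSpace X.geomFiber

/-- An open subscheme of a scheme over `k`, as a scheme over `k`. -/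
def SchemeOver.ofOpens {k : Type u} [Field k] (X : SchemeOver k) (U : X.carrier.Opens) :
    SchemeOver k :=
  ⟨U.toScheme, U.ι ≫ X.str⟩

/-- A scheme over `k` is quasi-projective if it is separated, of finite type, and carries
an ample line bundle. -/
def SchemeOver.IsQuasiProjective {k : Type u} [Field k] (X : SchemeOver k) : Prop :=
  AlgebraicGeometry.IsSeparated X.str ∧ X.IsFiniteType ∧
    ∃ L : LineBundle X.carrier, IsAmple L

/-- An open subset of `X` is stable under an action of `G` if the action preserves its
`T`-points, for all `T`. -/
def ActionOver.Stable {k : Type u} [Field k] {G : GroupSchemeOver k} {X : SchemeOver k}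
    (α : ActionOver G X) (U : X.carrier.Opens) : Prop :=
  ∀ {T : Scheme.{u}} (g : T ⟶ G.carrier) (x : T ⟶ X.carrier) (h),
    Set.range x.base ⊆ (U : Set X.carrier) →
      Set.range (α.act g x h).base ⊆ (U : Set X.carrier)

/-- A `G`-linearization of a vector bundle `E` on a `G`-scheme `X`: an action of `G` on the
total space of `E`, lifting the action on `X` and acting linearly on the fibers (equivalently,
an action of `G × 𝔾ₘ` on `E` for which the projection is equivariant and `𝔾ₘ` acts by
multiplication on the fibers). -/
structure LinearizationData {k : Type u} [Field k] {G : GroupSchemeOver k} {X : SchemeOver k}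
    (α : ActionOver G X) {n : ℕ} (E : VecBundle n X.carrier) where
  lact : ∀ {T : Scheme.{u}} (g : T ⟶ G.carrier) (e : T ⟶ E.tot),
    g ≫ G.str = (e ≫ E.π) ≫ X.str → (T ⟶ E.tot)
  lact_π : ∀ {T : Scheme.{u}} (g : T ⟶ G.carrier) (e : T ⟶ E.tot) (h h'),
    lact g e h ≫ E.π = α.act g (e ≫ E.π) h'
  lact_natural : ∀ {T' T : Scheme.{u}} (f : T' ⟶ T) (g : T ⟶ G.carrier) (e : T ⟶ E.tot) (h h'),
    f ≫ lact g e h = lact (f ≫ g) (f ≫ e) h'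
  one_lact : ∀ {T : Scheme.{u}} (e : T ⟶ E.tot) (h), lact (((e ≫ E.π) ≫ X.str) ≫ G.one) e h = e
  mul_lact : ∀ {T : Scheme.{u}} (g g' : T ⟶ G.carrier) (e : T ⟶ E.tot) (h₁ h₂ h₃ h₄),
    lact (G.mul g g' h₁) e h₂ = lact g (lact g' e h₃) h₄
  lact_add : ∀ {T : Scheme.{u}} (g : T ⟶ G.carrier) (a b : T ⟶ E.tot) (h₁ h₂ h₃ h₄ h₅),
    lact g (E.add a b h₁) h₂ = E.add (lact g a h₃) (lact g b h₄) h₅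
  lact_smul : ∀ {T : Scheme.{u}} (g : T ⟶ G.carrier) (f : Γ(T, ⊤)) (a : T ⟶ E.tot) (h₁ h₂),
    lact g (E.smul f a) h₁ = E.smul f (lact g a h₂)

/-- A vector bundle is `G`-linearized (linearizable) if it admits a linearization. -/
def ActionOver.IsLinearized {k : Type u} [Field k] {G : GroupSchemeOver k} {X : SchemeOver k}
    (α : ActionOver G X) {n : ℕ} (E : VecBundle n X.carrier) : Prop :=
  Nonempty (LinearizationData α E)

/-- Equivariance of a morphism relative to a homomorphism of group schemes. -/
def IsEquivariantRel {k : Type u} [Field k] {G H : GroupSchemeOver k} {X Y : SchemeOver k}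
    (φ : GroupHom G H) (α : ActionOver G X) (β : ActionOver H Y)
    (f : X.carrier ⟶ Y.carrier) : Prop :=
  f ≫ Y.str = X.str ∧
  ∀ {T : Scheme.{u}} (g : T ⟶ G.carrier) (x : T ⟶ X.carrier) (h h'),
    α.act g x h ≫ f = β.act (g ≫ φ.hom) (x ≫ f) h'

/-- Equivariance of a morphism of `G`-schemes. -/
def IsEquivariant {k : Type u} [Field k] {G : GroupSchemeOver k} {X Y : SchemeOver k}
    (α : ActionOver G X) (β : ActionOver G Y) (f : X.carrier ⟶ Y.carrier) : Prop :=
  f ≫ Y.str = X.str ∧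
  ∀ {T : Scheme.{u}} (g : T ⟶ G.carrier) (x : T ⟶ X.carrier) (h h'),
    α.act g x h ≫ f = β.act g (x ≫ f) h'

/-- A `T`-point of `G` acts trivially if it acts trivially on all points of `X` over `T`. -/
def ActionOver.ActsTrivially {k : Type u} [Field k] {G : GroupSchemeOver k}
    {X : SchemeOver k} (α : ActionOver G X) {T : Scheme.{u}} (g : T ⟶ G.carrier) : Prop :=
  ∀ {T' : Scheme.{u}} (t : T' ⟶ T) (x : T' ⟶ X.carrier) (h), α.act (t ≫ g) x h = x

/-- An action is almost faithful if its kernel is finite, i.e. all trivially acting points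
factor through a fixed closed subscheme of `G` which is finite over `k`. -/
def ActionOver.IsAlmostFaithful {k : Type u} [Field k] {G : GroupSchemeOver k}
    {X : SchemeOver k} (α : ActionOver G X) : Prop :=
  ∃ (K : Scheme.{u}) (ι : K ⟶ G.carrier), IsClosedImmersion ι ∧ IsFinite (ι ≫ G.str) ∧
    ∀ {T : Scheme.{u}} (g : T ⟶ G.carrier), α.ActsTrivially g → ∃ g' : T ⟶ K, g' ≫ ι = g

/-- An abelian variety over `k` is a smooth connected proper algebraic group over `k`. -/
def GroupSchemeOver.IsAbelianVariety {k : Type u} [Field k] (G : GroupSchemeOver k) : Prop :=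
  G.IsAlgebraic ∧ IsSmooth G.str ∧ ConnectedSpace G.carrier ∧ IsProper G.str
/-! ### Frobenius twists and quotients in characteristic `p` -/

/-- The morphism `Spec k ⟶ Spec k` induced by the `n`-th iterate of the Frobenius of `k`. -/
def frobSpec (k : Type u) [Field k] (p : ℕ) [Fact p.Prime] [CharP k p] (n : ℕ) :
    Spk k ⟶ Spk k :=
  Spec.map (CommRingCat.ofHom (iterateFrobenius k p n))

/-- `F : X ⟶ X` is the absolute `q`-power Frobenius endomorphism of `X`: the identity on the
underlying space, and the `q`-th power map on functions. -/
def IsAbsoluteFrobenius (X : Scheme.{u}) (q : ℕ) (F : X ⟶ X) : Prop :=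
  (∀ x : X, F.base x = x) ∧
  ∀ (U : X.Opens) (e : Opposite.op U = Opposite.op (F ⁻¹ᵁ U)) (a : Γ(X, U)),
    F.app U a = X.presheaf.map (eqToHom e) (a ^ q)

/-- Data exhibiting the `n`-th Frobenius twist `X^{(pⁿ)}` of a scheme `X` over `k` (as the base
change of `X` along the `n`-th Frobenius of `k`), together with the relative Frobenius morphism
`F^n_{X/k} : X ⟶ X^{(pⁿ)}` (the canonical factorization of the absolute Frobenius). -/
structure FrobeniusData (k : Type u) [Field k] (p : ℕ) [Fact p.Prime] [CharP k p] (n : ℕ)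
    (X : SchemeOver k) where
  tw : SchemeOver k
  pr : tw.carrier ⟶ X.carrier
  is_pullback : IsPullback pr tw.str X.str (frobSpec k p n)
  rel : X.carrier ⟶ tw.carrier
  rel_str : rel ≫ tw.str = X.str
  abs : X.carrier ⟶ X.carrier
  abs_frob : IsAbsoluteFrobenius X.carrier (p ^ n) abs
  rel_pr : rel ≫ pr = abs

/-- A group scheme over `k` is infinitesimal if it is finite and radicial over `Spec k`. -/
def GroupSchemeOver.IsInfinitesimal {k : Type u} [Field k] (I : GroupSchemeOver k) : Prop :=
  I.IsAlgebraic ∧ IsFinite I.str ∧ UniversallyInjective I.str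

/-- `n` is at least the height of the infinitesimal group scheme `I`, i.e. the `n`-th relative
Frobenius of `I` factors through the unit section of the twist (equivalently `I_n = I`). -/
def FrobKillsAt (k : Type u) [Field k] (p : ℕ) [Fact p.Prime] [CharP k p]
    (I : GroupSchemeOver k) (n : ℕ) : Prop :=
  ∀ FD : FrobeniusData k p n I.toSchemeOver,
    ∃ u : Spk k ⟶ FD.tw.carrier,
      u ≫ FD.pr = frobSpec k p n ≫ I.one ∧ u ≫ FD.tw.str = 𝟙 (Spk k) ∧
      FD.rel = I.str ≫ u

/-- `φ : X ⟶ Q` is a categorical quotient (in the category of schemes over `k`) of `X` by the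
action `α`. -/
def IsCatQuotient {k : Type u} [Field k] {I : GroupSchemeOver k} {X : SchemeOver k}
    (α : ActionOver I X) (Q : SchemeOver k) (φ : X.carrier ⟶ Q.carrier) : Prop :=
  φ ≫ Q.str = X.str ∧
  (∀ {T : Scheme.{u}} (g : T ⟶ I.carrier) (x : T ⟶ X.carrier) (h),
    α.act g x h ≫ φ = x ≫ φ) ∧
  ∀ (Z : SchemeOver k) (u : X.carrier ⟶ Z.carrier), u ≫ Z.str = X.str →
    (∀ {T : Scheme.{u}} (g : T ⟶ I.carrier) (x : T ⟶ X.carrier) (h),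
      α.act g x h ≫ u = x ≫ u) →
    ∃! v : Q.carrier ⟶ Z.carrier, φ ≫ v = u

/-- Data exhibiting the Frobenius twist `G^{(pⁿ)}` of a group scheme `G` over `k`, as a group
scheme, together with the relative Frobenius homomorphism. -/
structure TwistedGroupData (k : Type u) [Field k] (p : ℕ) [Fact p.Prime] [CharP k p] (n : ℕ)
    (G : GroupSchemeOver k) where
  tw : GroupSchemeOver k
  pr : tw.carrier ⟶ G.carrier
  is_pullback : IsPullback pr tw.str G.str (frobSpec k p n)
  pr_mul : ∀ {T : Scheme.{u}} (a b : T ⟶ tw.carrier) (h h'),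
    tw.mul a b h ≫ pr = G.mul (a ≫ pr) (b ≫ pr) h'
  rel : GroupHom G tw
  abs : G.carrier ⟶ G.carrier
  abs_frob : IsAbsoluteFrobenius G.carrier (p ^ n) abs
  rel_pr : rel.hom ≫ pr = abs

/-- Data exhibiting the Frobenius twist of an action: the induced action of `G^{(pⁿ)}` on
`X^{(pⁿ)}`, compatible with the projections and with the relative Frobenii. -/
structure TwistedActionData {k : Type u} [Field k] {p : ℕ} [Fact p.Prime] [CharP k p] {n : ℕ}
    {G : GroupSchemeOver k} {X : SchemeOver k} (α : ActionOver G X)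
    (GT : TwistedGroupData k p n G) (FD : FrobeniusData k p n X) where
  tact : ActionOver GT.tw FD.tw
  compat : ∀ {T : Scheme.{u}} (g : T ⟶ GT.tw.carrier) (x : T ⟶ FD.tw.carrier) (h h'),
    tact.act g x h ≫ FD.pr = α.act (g ≫ GT.pr) (x ≫ FD.pr) h'
  rel_equivariant : ∀ {T : Scheme.{u}} (g : T ⟶ G.carrier) (x : T ⟶ X.carrier) (h h'),
    α.act g x h ≫ FD.rel = tact.act (g ≫ GT.rel.hom) (x ≫ FD.rel) h'


/-! ### Gluing morphisms -/

theorem hom_ext_local {T Z : Scheme.{u}} (f g : T ⟶ Z)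
    (h : ∀ y : T, ∃ U : T.Opens, y ∈ U ∧ U.ι ≫ f = U.ι ≫ g) : f = g := by
  choose U hU hfg using h
  have hc : TopologicalSpace.IsOpenCover U := by
    rw [TopologicalSpace.IsOpenCover, eq_top_iff]
    intro y _
    exact TopologicalSpace.Opens.mem_iSup.mpr ⟨y, hU y⟩
  exact (T.openCoverOfIsOpenCover U hc).hom_ext _ _ (fun y => hfg y)

theorem glue_hom {T Z : Scheme.{u}} (C : ∀ U : T.Opens, (U.toScheme ⟶ Z) → Prop)
    (hres : ∀ (U V : T.Opens) (h : U ≤ V) (c : V.toScheme ⟶ Z), C V c → C U (T.homOfLE h ≫ c))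
    (huniq : ∀ (U : T.Opens) (c c' : U.toScheme ⟶ Z), C U c → C U c' → c = c')
    (hex : ∀ y : T, ∃ U : T.Opens, y ∈ U ∧ ∃ c, C U c) :
    ∃ c : T ⟶ Z, ∀ (y : T), ∃ U : T.Opens, y ∈ U ∧ C U (U.ι ≫ c) := by
  choose U hU c hc using hex
  have hcov : TopologicalSpace.IsOpenCover U := by
    rw [TopologicalSpace.IsOpenCover, eq_top_iff]
    intro y _
    exact TopologicalSpace.Opens.mem_iSup.mpr ⟨y, hU y⟩
  let 𝒰 := T.openCoverOfIsOpenCover U hcov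
  have key : ∀ x y : T, pullback.fst (U x).ι (U y).ι ≫ c x =
      pullback.snd (U x).ι (U y).ι ≫ c y := by
    intro x y
    let V : T.Opens := U x ⊓ U y
    let j := pullback.fst (U x).ι (U y).ι ≫ (U x).ι
    have hj : j = pullback.snd (U x).ι (U y).ι ≫ (U y).ι := pullback.condition
    have hr : Set.range j ⊆ Set.range V.ι := by
      rw [Scheme.Opens.range_ι]
      rintro _ ⟨z, rfl⟩
      refine ⟨?_, ?_⟩
      · exact ((pullback.fst (U x).ι (U y).ι) z).2
      · rw [hj]; exact ((pullback.snd (U x).ι (U y).ι) z).2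
    let l := IsOpenImmersion.lift V.ι j hr
    have hl : l ≫ V.ι = j := IsOpenImmersion.lift_fac _ _ _
    have h1 : pullback.fst (U x).ι (U y).ι = l ≫ T.homOfLE inf_le_left := by
      rw [← cancel_mono (U x).ι, Category.assoc, Scheme.homOfLE_ι, hl]
    have h2 : pullback.snd (U x).ι (U y).ι = l ≫ T.homOfLE inf_le_right := by
      rw [← cancel_mono (U y).ι, Category.assoc, Scheme.homOfLE_ι, hl, hj]
    rw [h1, h2, Category.assoc, Category.assoc]
    congr 1
    exact huniq V _ _ (hres _ _ _ _ (hc x)) (hres _ _ _ _ (hc y))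
  refine ⟨Scheme.Cover.glueMorphisms 𝒰 c key, fun y => ⟨U y, hU y, ?_⟩⟩
  have : (U y).ι ≫ Scheme.Cover.glueMorphisms 𝒰 c key = c y :=
    Scheme.Cover.ι_glueMorphisms 𝒰 c key y
  rw [this]
  exact hc y

/-! ### Absolute Frobenius -/

/-- The `q`-power ring endomorphism, when it is additive. -/
def powHom (R : Type u) [CommRing R] (q : ℕ) (hq : 0 < q) (h : ∀ a b : R, (a + b) ^ q = a ^ q + b ^ q) :
    R →+* R where
  toFun a := a ^ q
  map_one' := one_pow q
  map_mul' a b := mul_pow a b q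
  map_zero' := zero_pow hq.ne'
  map_add' := h

theorem add_pow_of_over {k : Type u} [Field k] (p : ℕ) [Fact p.Prime] [CharP k p] (n : ℕ)
    {T : Scheme.{u}} (t : T ⟶ Spk k) (U : T.Opens) (a b : Γ(T, U)) :
    (a + b) ^ (p ^ n) = a ^ (p ^ n) + b ^ (p ^ n) := by
  have hp : (p : Γ(T, U)) = 0 := by
    let r : k →+* Γ(T, U) :=
      (((Scheme.ΓSpecIso (CommRingCat.of k)).inv ≫ t.appTop ≫
        T.presheaf.map (homOfLE le_top).op).hom : k →+* Γ(T,U))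
    have := map_natCast r p
    rw [CharP.cast_eq_zero, map_zero] at this
    exact this.symm
  have : ExpChar Γ(T,U) p ∨ Subsingleton Γ(T, U) := by
    rcases subsingleton_or_nontrivial Γ(T, U) with h | h
    · exact Or.inr h
    · left
      have : CharP Γ(T,U) p := by
        have h1 : ringChar Γ(T,U) ∣ p := ringChar.dvd hp
        rcases (Nat.dvd_prime Fact.out).mp h1 with h2 | h2
        · exact absurd h2 CharP.ringChar_ne_one
        · exact ringChar.of_eq h2
      infer_instance
  rcases this with h | h
  · exact add_pow_expChar_pow a b p n
  · exact Subsingleton.elim _ _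

theorem exists_absFrob {T : Scheme.{u}} (q : ℕ) (hq : 0 < q)
    (h : ∀ (U : T.Opens) (a b : Γ(T, U)), (a + b) ^ q = a ^ q + b ^ q) :
    ∃ F : T ⟶ T, IsAbsoluteFrobenius T q F := by
  let c : T.presheaf ⟶ ((TopCat.Presheaf.pushforward _ (𝟙 T.toPresheafedSpace.carrier)).obj T.presheaf) :=
    { app := fun U => CommRingCat.ofHom (powHom Γ(T, U.unop) q hq (h U.unop))
      naturality := by
        intro U V i
        ext a
        exact (map_pow (T.presheaf.map i).hom a q).symm }
  let F0 : T.toPresheafedSpace ⟶ T.toPresheafedSpace := { base := 𝟙 _, c := c }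
  have hst : ∀ x : T, ∀ a : T.presheaf.stalk x, (PresheafedSpace.Hom.stalkMap F0 x) a = a ^ q := by
    intro x a
    obtain ⟨U, hxU, s, rfl⟩ := T.presheaf.exists_germ_eq a
    have := PresheafedSpace.stalkMap_germ_apply F0 U x hxU s
    refine this.trans ?_
    exact map_pow (T.presheaf.germ U x hxU).hom s q
  let F : T ⟶ T := ⟨⟨F0, fun x => ⟨fun a ha => by
    have ha' : IsUnit ((a : T.presheaf.stalk x) ^ q) := Eq.mp (congrArg IsUnit (hst x a)) ha
    exact (isUnit_pow_iff hq.ne').mp ha'⟩⟩⟩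
  refine ⟨F, fun x => rfl, fun U e a => ?_⟩
  have he : T.presheaf.map (eqToHom e) = 𝟙 _ := T.presheaf.map_id _
  rw [he]
  rfl

theorem IsAbsoluteFrobenius.preimage {T : Scheme.{u}} {q : ℕ} {F : T ⟶ T}
    (hF : IsAbsoluteFrobenius T q F) (U : T.Opens) : F ⁻¹ᵁ U = U := by
  ext x
  change F x ∈ U ↔ x ∈ U
  have : F x = x := hF.1 x
  rw [this]

theorem IsAbsoluteFrobenius.app_eq {T : Scheme.{u}} {q : ℕ} {F : T ⟶ T}
    (hF : IsAbsoluteFrobenius T q F) (U : T.Opens) (a : Γ(T, U)) :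
    F.appLE U U (hF.preimage U).ge a = a ^ q := by
  have h := hF.2 U (congrArg _ (hF.preimage U).symm) a
  rw [Scheme.Hom.appLE, CommRingCat.comp_apply, h, ← CommRingCat.comp_apply, ← Functor.map_comp]
  have : ∀ (i : op U ⟶ op U), T.presheaf.map i = 𝟙 _ := fun i => by
    rw [Subsingleton.elim i (𝟙 _)]; exact T.presheaf.map_id _
  rw [this]
  rfl

theorem IsAbsoluteFrobenius.appTop_eq {T : Scheme.{u}} {q : ℕ} {F : T ⟶ T}
    (hF : IsAbsoluteFrobenius T q F) (a : Γ(T, ⊤)) :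
    F.appTop a = a ^ q := by
  have := hF.app_eq ⊤ a
  exact (congrArg (fun r => r.hom a) (Scheme.Hom.appLE_eq_app F (U := ⊤))).symm.trans this

theorem hom_ext_appLE {X Y : Scheme.{u}} (f g : X ⟶ Y) (hb : ∀ x, f x = g x)
    (h : ∀ (U : Y.Opens) (e : f ⁻¹ᵁ U ≤ f ⁻¹ᵁ U) (e' : f ⁻¹ᵁ U ≤ g ⁻¹ᵁ U) (a : Γ(Y, U)),
      f.appLE U (f ⁻¹ᵁ U) e a = g.appLE U (f ⁻¹ᵁ U) e' a) : f = g := by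
  have hbase : f.base = g.base := by
    ext x; exact hb x
  have hpre : ∀ U : Y.Opens, f ⁻¹ᵁ U = g ⁻¹ᵁ U := by
    intro U; ext x
    change f x ∈ U ↔ g x ∈ U
    rw [hb]
  refine Scheme.Hom.ext hbase fun U => ?_
  have h1 : f.appLE U (f ⁻¹ᵁ U) le_rfl = g.appLE U (f ⁻¹ᵁ U) (hpre U).le := by
    ext a; exact h U _ _ a
  have h2 : f.appLE U (g ⁻¹ᵁ U) (hpre U).ge = g.appLE U (g ⁻¹ᵁ U) le_rfl := by
    rw [← Scheme.Hom.appLE_map f le_rfl (homOfLE (hpre U).ge).op, h1, Scheme.Hom.appLE_map]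
  rw [Scheme.Hom.appLE_eq_app] at h2
  rw [← h2]
  rfl

theorem IsAbsoluteFrobenius.natural {T X : Scheme.{u}} {q : ℕ} {F : T ⟶ T} {G : X ⟶ X}
    (hF : IsAbsoluteFrobenius T q F) (hG : IsAbsoluteFrobenius X q G) (h : T ⟶ X) :
    h ≫ G = F ≫ h := by
  refine hom_ext_appLE _ _ (fun x => ?_) (fun U e e' a => ?_)
  · have h1 : G (h x) = h x := hG.1 _
    have h2 : F x = x := hF.1 _
    simp only [Scheme.Hom.comp_apply, h1, h2]
  · have hU : (h ≫ G) ⁻¹ᵁ U = h ⁻¹ᵁ U := by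
      change h ⁻¹ᵁ G ⁻¹ᵁ U = _
      rw [hG.preimage]
    have key : ∀ (V : T.Opens) (hV : V = h ⁻¹ᵁ U) (e : V ≤ (h ≫ G) ⁻¹ᵁ U)
        (e' : V ≤ (F ≫ h) ⁻¹ᵁ U), (h ≫ G).appLE U V e a = (F ≫ h).appLE U V e' a := by
      intro V hV e e'
      subst hV
      rw [← Scheme.Hom.appLE_comp_appLE h G U U (h ⁻¹ᵁ U) (hG.preimage U).ge le_rfl,
        ← Scheme.Hom.appLE_comp_appLE F h U (h ⁻¹ᵁ U) (h ⁻¹ᵁ U) le_rfl (hF.preimage _).ge,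
        CommRingCat.comp_apply, CommRingCat.comp_apply, hG.app_eq, hF.app_eq, map_pow]
    exact key _ hU e e'

theorem frobSpec_natural {k : Type u} [Field k] (p : ℕ) [Fact p.Prime] [CharP k p] (n : ℕ)
    {T : Scheme.{u}} (t : T ⟶ Spk k) {F : T ⟶ T} (hF : IsAbsoluteFrobenius T (p ^ n) F) :
    t ≫ frobSpec k p n = F ≫ t := by
  apply ext_of_isAffine
  ext a
  rw [Scheme.Hom.comp_appTop, Scheme.Hom.comp_appTop, CommRingCat.comp_apply,
    CommRingCat.comp_apply, hF.appTop_eq, ← map_pow]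
  congr 1
  obtain ⟨b, rfl⟩ := (Scheme.ΓSpecIso (CommRingCat.of k)).commRingCatIsoToRingEquiv.symm.surjective a
  change ((Scheme.ΓSpecIso (CommRingCat.of k)).inv ≫ (frobSpec k p n).appTop) b =
    ((Scheme.ΓSpecIso (CommRingCat.of k)).inv b) ^ (p ^ n)
  rw [frobSpec, ← Scheme.ΓSpecIso_inv_naturality, ← map_pow, CommRingCat.comp_apply]
  congr 1

theorem exists_frobeniusData {k : Type u} [Field k] (p : ℕ) [Fact p.Prime] [CharP k p] (n : ℕ)
    (X : SchemeOver k) : Nonempty (FrobeniusData k p n X) := by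
  obtain ⟨F, hF⟩ := exists_absFrob (T := X.carrier) (p ^ n) (pow_pos (Fact.out : p.Prime).pos n)
    (fun U a b => add_pow_of_over p n X.str U a b)
  exact ⟨{
    tw := ⟨pullback X.str (frobSpec k p n), pullback.snd _ _⟩
    pr := pullback.fst _ _
    is_pullback := IsPullback.of_hasPullback _ _
    rel := pullback.lift F X.str (frobSpec_natural p n X.str hF).symm
    rel_str := pullback.lift_snd _ _ _
    abs := F
    abs_frob := hF
    rel_pr := pullback.lift_fst _ _ _ }⟩

theorem act_frob_invariant {k : Type u} [Field k] (p : ℕ) [Fact p.Prime] [CharP k p] (n : ℕ)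
    (I : GroupSchemeOver k) (hheight : FrobKillsAt k p I n) (X : SchemeOver k)
    (α : ActionOver I X) {F : X.carrier ⟶ X.carrier}
    (hF : IsAbsoluteFrobenius X.carrier (p ^ n) F) {T : Scheme.{u}}
    (g : T ⟶ I.carrier) (x : T ⟶ X.carrier) (h) : α.act g x h ≫ F = x ≫ F := by
  obtain ⟨FD⟩ := exists_frobeniusData p n I.toSchemeOver
  obtain ⟨u, hu1, hu2, hu3⟩ := hheight FD
  obtain ⟨G, hG⟩ := exists_absFrob (T := T) (p ^ n) (pow_pos (Fact.out : p.Prime).pos n)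
    (fun U a b => add_pow_of_over p n (x ≫ X.str) U a b)
  have e1 : G ≫ g = (x ≫ F) ≫ X.str ≫ I.one := by
    rw [← hG.natural FD.abs_frob g, ← FD.rel_pr, hu3]
    simp only [Category.assoc, hu1]
    have e3 : g ≫ I.str ≫ frobSpec k p n ≫ I.one = (g ≫ I.str) ≫ frobSpec k p n ≫ I.one := by
      rw [Category.assoc]
    have e4 : x ≫ F ≫ X.str ≫ I.one = x ≫ (F ≫ X.str) ≫ I.one := by rw [Category.assoc]
    rw [e3, h, e4, ← frobSpec_natural p n X.str hF]
    simp only [Category.assoc]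
  have e2 : G ≫ x = x ≫ F := (hG.natural hF x).symm
  have h' : (G ≫ g) ≫ I.str = (G ≫ x) ≫ X.str := by simp only [Category.assoc, h]
  rw [hG.natural hF, α.act_natural G g x h h']
  have h'' : ((x ≫ F) ≫ X.str ≫ I.one) ≫ I.str = (x ≫ F) ≫ X.str := by
    simp only [Category.assoc, I.one_str, Category.comp_id]
  exact (α.act_congr e1 e2 h' h'').trans (α.one_act _ _)


/-! ### Local functions -/

/-- Functions as morphisms to an affine line over the integers. -/
def funHom {T : Scheme.{u}} (f : Γ(T, ⊤)) :
    T ⟶ Spec (CommRingCat.of (MvPolynomial PUnit.{u+1} (ULift.{u} ℤ))) :=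
  (AffineSpace.toSpecMvPolyIntEquiv PUnit.{u+1}).symm (fun _ => f)

theorem funHom_inj {T : Scheme.{u}} {f g : Γ(T, ⊤)} (h : funHom f = funHom g) : f = g := by
  have := (AffineSpace.toSpecMvPolyIntEquiv PUnit.{u+1}).symm.injective h
  exact congrFun this PUnit.unit

theorem comp_funHom {T' T : Scheme.{u}} (t : T' ⟶ T) (f : Γ(T, ⊤)) :
    t ≫ funHom f = funHom (t.appTop f) := by
  apply (AffineSpace.toSpecMvPolyIntEquiv PUnit.{u+1}).injective
  ext i
  rw [AffineSpace.toSpecMvPolyIntEquiv_comp]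
  simp only [funHom, Equiv.apply_symm_apply]

theorem funHom_surj {T : Scheme.{u}}
    (c : T ⟶ Spec (CommRingCat.of (MvPolynomial PUnit.{u+1} (ULift.{u} ℤ)))) :
    ∃ f, c = funHom f := by
  refine ⟨AffineSpace.toSpecMvPolyIntEquiv PUnit.{u+1} c PUnit.unit, ?_⟩
  apply (AffineSpace.toSpecMvPolyIntEquiv PUnit.{u+1}).injective
  ext i
  simp only [funHom, Equiv.apply_symm_apply]

theorem fun_ext_local {T : Scheme.{u}} (f g : Γ(T, ⊤))
    (h : ∀ y : T, ∃ U : T.Opens, y ∈ U ∧ U.ι.appTop f = U.ι.appTop g) : f = g := by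
  apply funHom_inj
  apply hom_ext_local
  intro y
  obtain ⟨U, hy, hU⟩ := h y
  exact ⟨U, hy, by rw [comp_funHom, comp_funHom, hU]⟩

/-- Local unique existence of morphisms implies global unique existence. -/
theorem exists_unique_hom {T Z : Scheme.{u}} (C : ∀ (T' : Scheme.{u}), (T' ⟶ T) → (T' ⟶ Z) → Prop)
    (hnat : ∀ (T'' T' : Scheme.{u}) (s : T'' ⟶ T') (t : T' ⟶ T) (c : T' ⟶ Z), C T' t c →
      C T'' (s ≫ t) (s ≫ c))
    (hloc : ∀ (c : T ⟶ Z), (∀ y : T, ∃ U : T.Opens, y ∈ U ∧ C U.toScheme U.ι (U.ι ≫ c)) →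
      C T (𝟙 T) c)
    (huniq : ∀ (T' : Scheme.{u}) (t : T' ⟶ T) (c c' : T' ⟶ Z), C T' t c → C T' t c' → c = c')
    (hex : ∀ y : T, ∃ U : T.Opens, y ∈ U ∧ ∃ c, C U.toScheme U.ι c) :
    ∃! c : T ⟶ Z, C T (𝟙 T) c := by
  obtain ⟨c, hc⟩ := glue_hom (T := T) (Z := Z) (fun U c => C U.toScheme U.ι c)
    (fun U V h c hc => by
      have := hnat _ _ (T.homOfLE h) _ _ hc
      rwa [Scheme.homOfLE_ι] at this)
    (fun U c c' => huniq _ _ c c') hex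
  exact ⟨c, hloc c hc, fun c' hc' => huniq _ _ _ _ hc' (hloc c hc)⟩

/-- Local unique existence of functions implies global unique existence. -/
theorem exists_unique_fun {T : Scheme.{u}} (C : ∀ (T' : Scheme.{u}), (T' ⟶ T) → Γ(T', ⊤) → Prop)
    (hnat : ∀ (T'' T' : Scheme.{u}) (s : T'' ⟶ T') (t : T' ⟶ T) (c : Γ(T', ⊤)), C T' t c →
      C T'' (s ≫ t) (s.appTop c))
    (hloc : ∀ (c : Γ(T, ⊤)), (∀ y : T, ∃ U : T.Opens, y ∈ U ∧ C U.toScheme U.ι (U.ι.appTop c)) →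
      C T (𝟙 T) c)
    (huniq : ∀ (T' : Scheme.{u}) (t : T' ⟶ T) (c c' : Γ(T', ⊤)), C T' t c → C T' t c' → c = c')
    (hex : ∀ y : T, ∃ U : T.Opens, y ∈ U ∧ ∃ c, C U.toScheme U.ι c) :
    ∃! c : Γ(T, ⊤), C T (𝟙 T) c := by
  obtain ⟨c, hc, hu⟩ := exists_unique_hom (T := T) (fun T' t c => ∃ f, c = funHom f ∧ C T' t f)
    (fun T'' T' s t c ⟨f, hf, hC⟩ => ⟨s.appTop f, by rw [hf, comp_funHom], hnat _ _ _ _ _ hC⟩)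
    (fun c hc => by
      obtain ⟨f, rfl⟩ := funHom_surj c
      refine ⟨f, rfl, hloc f fun y => ?_⟩
      obtain ⟨U, hy, g, hg, hC⟩ := hc y
      rw [comp_funHom] at hg
      exact ⟨U, hy, by rwa [funHom_inj hg]⟩)
    (fun T' t c c' ⟨f, hf, hC⟩ ⟨f', hf', hC'⟩ => by rw [hf, hf', huniq _ _ _ _ hC hC'])
    (fun y => by
      obtain ⟨U, hy, c, hc⟩ := hex y
      exact ⟨U, hy, _, c, rfl, hc⟩)
  obtain ⟨f, rfl, hC⟩ := hc
  exact ⟨f, hC, fun f' hf' => huniq _ _ _ _ hf' hC⟩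

/-! ### Frames -/

theorem appTop_comp_apply {T'' T' T : Scheme.{u}} (s : T'' ⟶ T') (t : T' ⟶ T) (f : Γ(T, ⊤)) :
    (s ≫ t).appTop f = s.appTop (t.appTop f) := by
  rw [Scheme.Hom.comp_appTop]; rfl

theorem appTop_id_apply {T : Scheme.{u}} (f : Γ(T, ⊤)) :
    (𝟙 T : T ⟶ T).appTop f = f := by
  rw [Scheme.Hom.id_appTop]; rfl

/-- Restricting a morphism to the preimage of an open subset. -/
theorem exists_restrict {T' T : Scheme.{u}} (t : T' ⟶ T) (U : T.Opens) :
    ∃ r : (t ⁻¹ᵁ U).toScheme ⟶ U.toScheme, r ≫ U.ι = (t ⁻¹ᵁ U).ι ≫ t :=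
  ⟨t ∣_ U, morphismRestrict_ι t U⟩

namespace VecBundleData
variable {X : Scheme.{u}} (E : VecBundleData X)

/-- A generating (frame) point of a bundle of rank one. -/
def GenFrame {T : Scheme.{u}} (e : T ⟶ E.tot) : Prop :=
  ∀ (T' : Scheme.{u}) (t : T' ⟶ T) (a : T' ⟶ E.tot), a ≫ E.π = t ≫ e ≫ E.π →
    ∃! f : Γ(T', ⊤), a = E.smul f (t ≫ e)

variable {E}

theorem GenFrame.comp {T' T : Scheme.{u}} {e : T ⟶ E.tot} (he : E.GenFrame e) (g : T' ⟶ T) :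
    E.GenFrame (g ≫ e) := by
  intro T'' t a h
  have := he T'' (t ≫ g) a (by rw [h]; simp only [Category.assoc])
  simpa only [Category.assoc] using this

theorem GenFrame.exists_coef {T : Scheme.{u}} {e : T ⟶ E.tot} (he : E.GenFrame e)
    (a : T ⟶ E.tot) (h : a ≫ E.π = e ≫ E.π) : ∃ f : Γ(T, ⊤), a = E.smul f e := by
  obtain ⟨f, hf, -⟩ := he T (𝟙 T) a (by rw [Category.id_comp, h])
  exact ⟨f, by rwa [Category.id_comp] at hf⟩

theorem GenFrame.smul_inj {T : Scheme.{u}} {e : T ⟶ E.tot} (he : E.GenFrame e)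
    {f g : Γ(T, ⊤)} (h : E.smul f e = E.smul g e) : f = g := by
  have := (he T (𝟙 T) (E.smul f e) (by rw [Category.id_comp, E.smul_π])).unique
    (y₁ := f) (y₂ := g) (by rw [Category.id_comp]) (by rw [Category.id_comp, h])
  exact this

theorem GenFrame.of_local {T : Scheme.{u}} {e : T ⟶ E.tot}
    (h : ∀ y : T, ∃ U : T.Opens, y ∈ U ∧ E.GenFrame (U.ι ≫ e)) : E.GenFrame e := by
  intro T' t a ha
  have hloc : ∀ y : T', ∃ U : T'.Opens, y ∈ U ∧ E.GenFrame (U.ι ≫ t ≫ e) := by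
    intro y
    obtain ⟨U, hy, hU⟩ := h (t y)
    obtain ⟨r, hr⟩ := exists_restrict t U
    refine ⟨t ⁻¹ᵁ U, hy, ?_⟩
    have := hU.comp r
    rwa [← Category.assoc, hr, Category.assoc] at this
  have key := exists_unique_fun (T := T') (fun S s f => s ≫ a = E.smul f (s ≫ t ≫ e))
    (fun T'' T' s t c hc => by
      rw [Category.assoc, hc, E.smul_natural, Category.assoc])
    (fun c hc => by
      apply hom_ext_local
      intro y
      obtain ⟨U, hy, hU⟩ := hc y
      exact ⟨U, hy, by rw [Category.id_comp, hU, E.smul_natural, Category.id_comp]⟩)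
    (fun S s c c' hc hc' => by
      apply fun_ext_local
      intro y
      obtain ⟨U, hy, hU⟩ := hloc (s y)
      obtain ⟨r, hr⟩ := exists_restrict s U
      refine ⟨s ⁻¹ᵁ U, hy, ?_⟩
      have hF : E.GenFrame ((s ⁻¹ᵁ U).ι ≫ s ≫ t ≫ e) := by
        have := hU.comp r
        rwa [← Category.assoc, hr, Category.assoc] at this
      apply hF.smul_inj
      rw [← E.smul_natural, ← E.smul_natural, ← hc, ← hc'])
    (fun y => by
      obtain ⟨U, hy, hU⟩ := hloc y
      refine ⟨U, hy, hU.exists_coef _ ?_⟩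
      simp only [Category.assoc, ha])
  simpa only [Category.id_comp] using key

theorem GenFrame.smul_unit {T : Scheme.{u}} {e : T ⟶ E.tot} (he : E.GenFrame e)
    {u : Γ(T, ⊤)} (hu : IsUnit u) : E.GenFrame (E.smul u e) := by
  intro T' t a h
  obtain ⟨v, hv⟩ := hu.exists_right_inv
  have hv' : t.appTop u * t.appTop v = 1 := by rw [← map_mul, hv, map_one]
  obtain ⟨f, hf⟩ := (he.comp t).exists_coef a (by rw [h, E.smul_π, Category.assoc])
  refine ⟨f * t.appTop v, ?_, fun g hg => ?_⟩
  · beta_reduce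
    rw [E.smul_natural, ← E.mul_smul, mul_assoc, mul_comm (t.appTop v), hv', mul_one, hf]
  · simp only [E.smul_natural, ← E.mul_smul] at hg
    have := (he.comp t).smul_inj (hf.symm.trans hg)
    rw [this, mul_assoc, hv', mul_one]

theorem GenFrame.exists_unit {T : Scheme.{u}} {e e' : T ⟶ E.tot} (he : E.GenFrame e)
    (he' : E.GenFrame e') (h : e' ≫ E.π = e ≫ E.π) : ∃ u : Γ(T, ⊤), IsUnit u ∧ e' = E.smul u e := by
  obtain ⟨f, hf⟩ := he.exists_coef e' h
  obtain ⟨g, hg⟩ := he'.exists_coef e h.symm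
  refine ⟨f, IsUnit.of_mul_eq_one g ?_, hf⟩
  apply he'.smul_inj
  rw [E.mul_smul, ← hg, ← hf, E.one_smul]

theorem isFrame_iff {U : X.Opens} {s : Fin 1 → (U.toScheme ⟶ E.tot)} :
    E.IsFrame U s ↔ s 0 ≫ E.π = U.ι ∧ E.GenFrame (s 0) := by
  constructor
  · rintro ⟨hs, h⟩
    refine ⟨hs 0, fun T t a ha => ?_⟩
    have ha' : a ≫ E.π = t ≫ U.ι := by rw [ha, hs 0]
    obtain ⟨f, hf, hu⟩ := Function.Bijective.existsUnique (h t) ⟨a, ha'⟩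
    refine ⟨f 0, ?_, fun g hg => ?_⟩
    · simp only [Finset.univ_unique, Fin.default_eq_zero, Finset.sum_singleton] at hf
      exact (congrArg Subtype.val hf).symm
    · have := hu (fun _ => g) (by
        simp only [Finset.univ_unique, Fin.default_eq_zero, Finset.sum_singleton]
        exact Subtype.ext hg.symm)
      rw [← this]
  · rintro ⟨hs, h⟩
    refine ⟨fun i => by rw [Subsingleton.elim i 0, hs], fun {T} t => ?_⟩
    constructor
    · intro f g hfg
      simp only [Finset.univ_unique, Fin.default_eq_zero, Finset.sum_singleton] at hfg
      have := (h.comp t).smul_inj (congrArg Subtype.val hfg)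
      ext i
      rw [Subsingleton.elim i 0, this]
    · rintro ⟨a, ha⟩
      obtain ⟨f, hf⟩ := (h.comp t).exists_coef a (by rw [ha, Category.assoc, hs])
      refine ⟨fun _ => f, ?_⟩
      simp only [Finset.univ_unique, Fin.default_eq_zero, Finset.sum_singleton]
      exact Subtype.ext hf.symm

theorem isGlobalFrame_of {s : X ⟶ E.tot} (hs : s ≫ E.π = 𝟙 X) (h : E.GenFrame s) :
    E.IsGlobalFrame (n := 1) (fun _ => s) := by
  refine ⟨fun i => hs, fun {T} t => ?_⟩
  constructor
  · intro f g hfg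
    simp only [Finset.univ_unique, Fin.default_eq_zero, Finset.sum_singleton] at hfg
    have := (h.comp t).smul_inj (congrArg Subtype.val hfg)
    ext i
    rw [Subsingleton.elim i 0, this]
  · rintro ⟨a, ha⟩
    obtain ⟨f, hf⟩ := (h.comp t).exists_coef a (by rw [ha, Category.assoc, hs, Category.comp_id])
    refine ⟨fun _ => f, ?_⟩
    simp only [Finset.univ_unique, Fin.default_eq_zero, Finset.sum_singleton]
    exact Subtype.ext hf.symm

theorem IsGlobalFrame.genFrame {s : Fin 1 → (X ⟶ E.tot)} (h : E.IsGlobalFrame s) :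
    s 0 ≫ E.π = 𝟙 X ∧ E.GenFrame (s 0) := by
  obtain ⟨hs, h⟩ := h
  refine ⟨hs 0, fun T t a ha => ?_⟩
  have ha' : a ≫ E.π = t := by rw [ha, hs 0, Category.comp_id]
  obtain ⟨f, hf, hu⟩ := Function.Bijective.existsUnique (h t) ⟨a, ha'⟩
  refine ⟨f 0, ?_, fun g hg => ?_⟩
  · simp only [Finset.univ_unique, Fin.default_eq_zero, Finset.sum_singleton] at hf
    exact (congrArg Subtype.val hf).symm
  · have := hu (fun _ => g) (by
      simp only [Finset.univ_unique, Fin.default_eq_zero, Finset.sum_singleton]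
      exact Subtype.ext hg.symm)
    rw [← this]

end VecBundleData

open VecBundleData

theorem VecBundle.exists_genFrame {X : Scheme.{u}} (L : LineBundle X) {T : Scheme.{u}} (x : T ⟶ X) (y : T) :
    ∃ U : T.Opens, y ∈ U ∧ ∃ e : U.toScheme ⟶ L.tot, e ≫ L.π = U.ι ≫ x ∧
      L.toVecBundleData.GenFrame e := by
  obtain ⟨V, s, hV, hs⟩ := L.locTriv (x y)
  obtain ⟨h1, h2⟩ := isFrame_iff.mp hs
  obtain ⟨r, hr⟩ := exists_restrict x V
  exact ⟨x ⁻¹ᵁ V, hV, r ≫ s 0, by rw [Category.assoc, h1, hr], h2.comp r⟩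

/-- Build a line bundle from generating points. -/
def mkLineBundle {X : Scheme.{u}} (E : VecBundleData X)
    (h : ∀ x : X, ∃ U : X.Opens, x ∈ U ∧ ∃ e : U.toScheme ⟶ E.tot, e ≫ E.π = U.ι ∧
      E.GenFrame e) : LineBundle X where
  toVecBundleData := E
  locTriv x := by
    obtain ⟨U, hx, e, he, hg⟩ := h x
    exact ⟨U, fun _ => e, hx, isFrame_iff.mpr ⟨he, hg⟩⟩


/-! ### Pullback bundles -/

/-- The data of the pullback of a bundle. -/
def pullbackData {Y X : Scheme.{u}} (g : Y ⟶ X) (E : VecBundleData X) : VecBundleData Y where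
  tot := pullback E.π g
  π := pullback.snd _ _
  zero := pullback.lift (g ≫ E.zero) (𝟙 Y) (by rw [Category.assoc, E.zero_π, Category.comp_id, Category.id_comp])
  zero_π := pullback.lift_snd _ _ _
  add {T} a b h := pullback.lift
    (E.add (a ≫ pullback.fst _ _) (b ≫ pullback.fst _ _) (by
      rw [Category.assoc, Category.assoc, pullback.condition, ← Category.assoc, h, Category.assoc]))
    (a ≫ pullback.snd _ _) (by rw [E.add_π, Category.assoc, Category.assoc, pullback.condition])
  smul {T} f a := pullback.lift (E.smul f (a ≫ pullback.fst _ _)) (a ≫ pullback.snd _ _)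
    (by rw [E.smul_π, Category.assoc, Category.assoc, pullback.condition])
  add_π a b h := pullback.lift_snd _ _ _
  smul_π f a := pullback.lift_snd _ _ _
  add_natural t a b h h' := by
    apply pullback.hom_ext
    · rw [Category.assoc, pullback.lift_fst, pullback.lift_fst, E.add_natural]
      · exact E.add_congr (Category.assoc _ _ _).symm (Category.assoc _ _ _).symm _ _
      · simp only [Category.assoc, pullback.condition]
        rw [reassoc_of% h]
    · rw [Category.assoc, pullback.lift_snd, pullback.lift_snd, Category.assoc]
  smul_natural t f a := by
    apply pullback.hom_ext
    · rw [Category.assoc, pullback.lift_fst, pullback.lift_fst, E.smul_natural, Category.assoc]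
    · rw [Category.assoc, pullback.lift_snd, pullback.lift_snd, Category.assoc]
  add_comm a b h h' := by
    apply pullback.hom_ext
    · rw [pullback.lift_fst, pullback.lift_fst, E.add_comm]
    · rw [pullback.lift_snd, pullback.lift_snd, h]
  add_assoc a b c h₁ h₂ h₃ h₄ := by
    apply pullback.hom_ext
    · simp only [pullback.lift_fst]
      exact E.add_assoc _ _ _ _ _ _ _
    · simp only [pullback.lift_snd]
  zero_add a h := by
    have hc : a ≫ pullback.fst E.π g ≫ E.π = a ≫ pullback.snd E.π g ≫ g := by rw [pullback.condition]
    apply pullback.hom_ext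
    · rw [pullback.lift_fst]
      refine (E.add_congr ?_ rfl _ ?_).trans (E.zero_add (a ≫ pullback.fst _ _) ?_)
      · simp only [Category.assoc, pullback.lift_fst, reassoc_of% hc]
      · simp only [Category.assoc, E.zero_π, Category.comp_id]
      · simp only [Category.assoc, E.zero_π, Category.comp_id]
    · rw [pullback.lift_snd, h]
  one_smul a := by
    apply pullback.hom_ext
    · rw [pullback.lift_fst, E.one_smul]
    · rw [pullback.lift_snd]
  mul_smul f f' a := by
    apply pullback.hom_ext
    · simp only [pullback.lift_fst, E.mul_smul]
    · simp only [pullback.lift_snd]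
  smul_add f a b h h' := by
    apply pullback.hom_ext
    · simp only [pullback.lift_fst]
      exact E.smul_add _ _ _ _ _
    · simp only [pullback.lift_snd]
  add_smul f f' a h := by
    apply pullback.hom_ext
    · simp only [pullback.lift_fst]
      exact E.add_smul _ _ _ _
    · simp only [pullback.lift_snd]
  zero_smul a := by
    have hc : a ≫ pullback.fst E.π g ≫ E.π = a ≫ pullback.snd E.π g ≫ g := by rw [pullback.condition]
    apply pullback.hom_ext
    · simp only [pullback.lift_fst, Category.assoc, E.zero_smul, reassoc_of% hc]
    · simp only [pullback.lift_snd, Category.assoc, Category.comp_id]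
  smul_zero f x := by
    apply pullback.hom_ext
    · simp only [pullback.lift_fst, Category.assoc]
      rw [← Category.assoc, E.smul_zero]
    · simp only [pullback.lift_snd]

/-- The conditions on the comparison map of a pullback bundle. -/
structure IsPB {Y X : Scheme.{u}} (g : Y ⟶ X) (E : VecBundleData X) (F : VecBundleData Y)
    (τ : F.tot ⟶ E.tot) : Prop where
  comm : τ ≫ E.π = F.π ≫ g
  add : ∀ {T : Scheme.{u}} (a b : T ⟶ F.tot) (h h'), F.add a b h ≫ τ = E.add (a ≫ τ) (b ≫ τ) h'
  smul : ∀ {T : Scheme.{u}} (f : Γ(T, ⊤)) (a : T ⟶ F.tot), F.smul f a ≫ τ = E.smul f (a ≫ τ)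
  exu : ∀ {T : Scheme.{u}} (y : T ⟶ Y) (a : T ⟶ E.tot), a ≫ E.π = y ≫ g →
      ∃! b : T ⟶ F.tot, b ≫ F.π = y ∧ b ≫ τ = a

theorem isPullbackBundle_iff {Y X : Scheme.{u}} (g : Y ⟶ X) (E : LineBundle X) (F : LineBundle Y) :
    IsPullbackBundle g E F ↔ ∃ τ, IsPB g E.toVecBundleData F.toVecBundleData τ :=
  ⟨fun ⟨τ, h1, h2, h3, h4⟩ => ⟨τ, h1, h2, h3, h4⟩,
   fun ⟨τ, h⟩ => ⟨τ, h.comm, h.add, h.smul, h.exu⟩⟩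

theorem pullbackData_isPB {Y X : Scheme.{u}} (g : Y ⟶ X) (E : VecBundleData X) :
    IsPB g E (pullbackData g E) (pullback.fst E.π g) where
  comm := pullback.condition
  add a b h h' := pullback.lift_fst _ _ _
  smul f a := pullback.lift_fst _ _ _
  exu y a h := ⟨pullback.lift a y h, ⟨pullback.lift_snd _ _ _, pullback.lift_fst _ _ _⟩,
    fun b ⟨h1, h2⟩ => by
      apply pullback.hom_ext
      · rw [pullback.lift_fst]; exact h2
      · rw [pullback.lift_snd]; exact h1⟩

namespace IsPB
variable {Y X : Scheme.{u}} {g : Y ⟶ X} {E : VecBundleData X} {F : VecBundleData Y}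
    {τ : F.tot ⟶ E.tot}

theorem ext (H : IsPB g E F τ) {T : Scheme.{u}} {a b : T ⟶ F.tot} (h1 : a ≫ F.π = b ≫ F.π) (h2 : a ≫ τ = b ≫ τ) :
    a = b :=
  (H.exu (b ≫ F.π) (b ≫ τ) (by rw [Category.assoc, H.comm, Category.assoc])).unique
    ⟨h1, h2⟩ ⟨rfl, rfl⟩

theorem genFrame_iff (H : IsPB g E F τ) {T : Scheme.{u}} {e : T ⟶ F.tot} :
    F.GenFrame e ↔ E.GenFrame (e ≫ τ) := by
  constructor
  · intro he T' t a h
    obtain ⟨b, ⟨hb1, hb2⟩, -⟩ := H.exu (t ≫ e ≫ F.π) a (by rw [h]; simp only [Category.assoc, H.comm])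
    obtain ⟨f, hf⟩ := (he.comp t).exists_coef b (by rw [hb1, Category.assoc])
    refine ⟨f, ?_, fun f' hf' => ?_⟩
    · beta_reduce
      rw [← hb2, hf, H.smul, Category.assoc]
    · apply (he.comp t).smul_inj
      rw [← hf]
      apply H.ext
      · rw [F.smul_π, hb1, Category.assoc]
      · rw [H.smul, hb2, Category.assoc, ← hf']
  · intro he T' t a h
    obtain ⟨f, hf⟩ := (he.comp t).exists_coef (a ≫ τ) (by
      simp only [Category.assoc, H.comm]; rw [reassoc_of% h])
    refine ⟨f, ?_, fun f' hf' => ?_⟩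
    · apply H.ext
      · rw [F.smul_π, h, Category.assoc]
      · rw [H.smul, hf, Category.assoc]
    · apply (he.comp t).smul_inj
      rw [← hf, hf', H.smul, Category.assoc]

theorem zero_comp (H : IsPB g E F τ) : F.zero ≫ τ = g ≫ E.zero := by
  have h := congrArg (· ≫ τ) (F.zero_smul F.zero)
  simp only [H.smul, F.zero_π, Category.id_comp] at h
  rw [← h, E.zero_smul, Category.assoc F.zero τ, H.comm, ← Category.assoc F.zero, F.zero_π, Category.id_comp]

end IsPB

theorem IsPB.trans {Z Y X : Scheme.{u}} {g : Y ⟶ X} {E : VecBundleData X} {F : VecBundleData Y}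
    {τ : F.tot ⟶ E.tot} (H : IsPB g E F τ) {g' : Z ⟶ Y} {F' : VecBundleData Z}
    {τ' : F'.tot ⟶ F.tot} (H' : IsPB g' F F' τ') : IsPB (g' ≫ g) E F' (τ' ≫ τ) where
  comm := by rw [Category.assoc, H.comm, ← Category.assoc, H'.comm, Category.assoc]
  add a b h h' := by
    have h'' : (a ≫ τ') ≫ F.π = (b ≫ τ') ≫ F.π := by
      simp only [Category.assoc, H'.comm]
      rw [reassoc_of% h]
    rw [← Category.assoc, H'.add a b h h'', H.add]
    · exact E.add_congr (Category.assoc _ _ _) (Category.assoc _ _ _) _ _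
    · simpa only [Category.assoc] using h'
  smul f a := by rw [← Category.assoc, H'.smul, H.smul, Category.assoc]
  exu y a h := by
    obtain ⟨b, ⟨hb1, hb2⟩, -⟩ := H.exu (y ≫ g') a (by rw [h, Category.assoc])
    obtain ⟨c, ⟨hc1, hc2⟩, -⟩ := H'.exu y b hb1
    refine ⟨c, ⟨hc1, by rw [← Category.assoc, hc2, hb2]⟩, fun c' ⟨h1, h2⟩ => ?_⟩
    apply H'.ext (h1.trans hc1.symm)
    apply H.ext
    · simp only [Category.assoc, H'.comm]
      rw [reassoc_of% h1, reassoc_of% hc1]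
    · rw [hc2, hb2, Category.assoc, h2]

/-- The pullback of a line bundle. -/
def pullbackBundle {Y X : Scheme.{u}} (g : Y ⟶ X) (L : LineBundle X) : LineBundle Y :=
  mkLineBundle (pullbackData g L.toVecBundleData) fun y => by
    obtain ⟨U, hy, e, he, hg⟩ := L.exists_genFrame g y
    refine ⟨U, hy, pullback.lift e U.ι he, pullback.lift_snd _ _ _, ?_⟩
    refine (pullbackData_isPB g L.toVecBundleData).genFrame_iff.mpr ?_
    have : (pullback.lift e U.ι he : _ ⟶ pullback L.π g) ≫ pullback.fst L.π g = e :=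
      pullback.lift_fst _ _ _
    exact Eq.mpr (congrArg _ this) hg

theorem pullbackBundle_isPB {Y X : Scheme.{u}} (g : Y ⟶ X) (L : LineBundle X) :
    IsPB g L.toVecBundleData (pullbackBundle g L).toVecBundleData (pullback.fst L.π g) :=
  pullbackData_isPB g _

/-! ### Powers -/

/-- A power map of degree `m` between line bundles. -/
structure IsPowMap {X : Scheme.{u}} (L : VecBundleData X) (m : ℕ) (N : VecBundleData X)
    (P : L.tot ⟶ N.tot) : Prop where
  comm : P ≫ N.π = L.π
  smul : ∀ {T : Scheme.{u}} (f : Γ(T, ⊤)) (a : T ⟶ L.tot), L.smul f a ≫ P = N.smul (f ^ m) (a ≫ P)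
  frame : ∀ {T : Scheme.{u}} {e : T ⟶ L.tot}, L.GenFrame e → N.GenFrame (e ≫ P)

/-- `N` is an `m`-th power of `L`, via a power map. -/
def IsPow {X : Scheme.{u}} (L : LineBundle X) (m : ℕ) (N : LineBundle X) : Prop :=
  ∃ P, IsPowMap L.toVecBundleData m N.toVecBundleData P

theorem IsPow.trans {X : Scheme.{u}} {L M N : LineBundle X} {q m : ℕ} (h : IsPow L q M)
    (h' : IsPow M m N) : IsPow L (q * m) N := by
  obtain ⟨P, hP⟩ := h
  obtain ⟨P', hP'⟩ := h'
  exact ⟨P ≫ P', by rw [Category.assoc, hP'.comm, hP.comm],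
    fun f a => by rw [← Category.assoc, hP.smul, hP'.smul, ← pow_mul, Category.assoc],
    fun he => by rw [← Category.assoc]; exact hP'.frame (hP.frame he)⟩

theorem IsPow.pullback {Y X : Scheme.{u}} (g : Y ⟶ X) {L N : LineBundle X} {m : ℕ}
    (h : IsPow L m N) {L' N' : LineBundle Y} {τL τN}
    (hL : IsPB g L.toVecBundleData L'.toVecBundleData τL)
    (hN : IsPB g N.toVecBundleData N'.toVecBundleData τN) : IsPow L' m N' := by
  obtain ⟨P, hP⟩ := h
  obtain ⟨P', ⟨h1, h2⟩, -⟩ := hN.exu L'.π (τL ≫ P) (by rw [Category.assoc, hP.comm, hL.comm])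
  refine ⟨P', h1, fun f a => ?_, fun {T e} he => ?_⟩
  · apply hN.ext
    · rw [Category.assoc, h1, L'.smul_π, N'.smul_π, Category.assoc, h1]
    · rw [Category.assoc, h2, ← Category.assoc, hL.smul, hP.smul, hN.smul]
      simp only [Category.assoc, h2]
  · rw [hN.genFrame_iff, Category.assoc, h2, ← Category.assoc]
    exact hP.frame (hL.genFrame_iff.mp he)

theorem IsTensorPow.isPow {X : Scheme.{u}} {L : LineBundle X} {m : ℕ} {N : LineBundle X}
    (h : IsTensorPow L m N) : IsPow L m N := by
  induction m generalizing N with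
  | zero =>
    obtain ⟨s, hs⟩ := h
    obtain ⟨h1, h2⟩ := hs.genFrame
    refine ⟨L.π ≫ s 0, by rw [Category.assoc, h1, Category.comp_id], fun f a => ?_, fun he => ?_⟩
    · rw [pow_zero, N.one_smul, ← Category.assoc, L.smul_π, Category.assoc]
    · rw [← Category.assoc]; exact h2.comp _
  | succ m ih =>
    obtain ⟨M, hM, β, hπ, hnat, -, -, hs1, hs2, hfr⟩ := h
    obtain ⟨P, hP⟩ := ih hM
    have hc : P ≫ M.π = (𝟙 L.tot) ≫ L.π := by rw [hP.comm, Category.id_comp]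
    have hβ : ∀ {T : Scheme.{u}} (a : T ⟶ L.tot) (h : (a ≫ P) ≫ M.π = a ≫ L.π),
        a ≫ β P (𝟙 _) hc = β (a ≫ P) a h := by
      intro T a h
      have h' : (a ≫ P) ≫ M.π = (a ≫ 𝟙 _) ≫ L.π := by rw [Category.comp_id, h]
      rw [hnat a P (𝟙 _) hc h']
      congr 1
      try exact Category.comp_id _
    have hh : ∀ {T : Scheme.{u}} (a : T ⟶ L.tot), (a ≫ P) ≫ M.π = a ≫ L.π :=
      fun a => by rw [Category.assoc, hP.comm]
    have hcg : ∀ {T : Scheme.{u}} {a a' : T ⟶ M.tot} {b b' : T ⟶ L.tot} (_ : a = a') (_ : b = b')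
        (h h'), β a b h = β a' b' h' := by
      intro T a a' b b' ha hb h h'; subst ha; subst hb; rfl
    refine ⟨β P (𝟙 _) hc, by rw [hπ, hP.comm], fun {T} f a => ?_, fun {T e} he => ?_⟩
    · rw [hβ _ (hh _), hβ _ (hh _)]
      have h3 : (M.smul (f ^ m) (a ≫ P)) ≫ M.π = L.smul f a ≫ L.π := by
        rw [M.smul_π, L.smul_π, hh]
      have h4 : (a ≫ P) ≫ M.π = L.smul f a ≫ L.π := by
        rw [L.smul_π, hh]
      rw [hcg (hP.smul f a) rfl _ h3, hs1 _ _ _ _ h4, hs2 _ _ _ _ (hh a), ← N.mul_smul, pow_succ]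
    · rw [hβ _ (hh _)]
      apply GenFrame.of_local
      intro y
      obtain ⟨U1, s1, hU1, hs1'⟩ := L.locTriv ((e ≫ L.π) y)
      obtain ⟨U2, s2, hU2, hs2'⟩ := M.locTriv ((e ≫ L.π) y)
      let U := U1 ⊓ U2
      have hres1 := (isFrame_iff.mp hs1').2.comp (X.homOfLE (inf_le_left : U ≤ U1))
      have hres2 := (isFrame_iff.mp hs2').2.comp (X.homOfLE (inf_le_right : U ≤ U2))
      have e1 : (X.homOfLE (inf_le_left : U ≤ U1) ≫ s1 0) ≫ L.π = U.ι := by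
        rw [Category.assoc, (isFrame_iff.mp hs1').1, Scheme.homOfLE_ι]
      have e2 : (X.homOfLE (inf_le_right : U ≤ U2) ≫ s2 0) ≫ M.π = U.ι := by
        rw [Category.assoc, (isFrame_iff.mp hs2').1, Scheme.homOfLE_ι]
      set r1 := X.homOfLE (inf_le_left : U ≤ U1) ≫ s1 0
      set r2 := X.homOfLE (inf_le_right : U ≤ U2) ≫ s2 0
      have hF := (isFrame_iff.mp (hfr U (fun _ => r2) (fun _ => r1) (isFrame_iff.mpr ⟨e2, hres2⟩)
        (isFrame_iff.mpr ⟨e1, hres1⟩) (e2.trans e1.symm))).2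
      obtain ⟨V, hyV, r, hr⟩ : ∃ V : T.Opens, y ∈ V ∧ ∃ r : V.toScheme ⟶ U.toScheme,
          r ≫ U.ι = V.ι ≫ e ≫ L.π :=
        ⟨(e ≫ L.π) ⁻¹ᵁ U, ⟨hU1, hU2⟩, exists_restrict (e ≫ L.π) U⟩
      refine ⟨V, hyV, ?_⟩
      have p1 : (V.ι ≫ e) ≫ L.π = (r ≫ r1) ≫ L.π := by
        rw [Category.assoc, Category.assoc, e1, hr]
      have p2 : (V.ι ≫ e ≫ P) ≫ M.π = (r ≫ r2) ≫ M.π := by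
        rw [Category.assoc, Category.assoc, Category.assoc, e2, hr, hP.comm]
      obtain ⟨u1, hu1, hu1'⟩ := (hres1.comp r).exists_unit (he.comp V.ι) p1
      obtain ⟨u2, hu2, hu2'⟩ := (hres2.comp r).exists_unit ((hP.frame he).comp V.ι) p2
      have q0 : (V.ι ≫ e ≫ P) ≫ M.π = (V.ι ≫ e) ≫ L.π := by
        simp only [Category.assoc, hP.comm]
      have q1 : (r ≫ r2) ≫ M.π = (r ≫ r1) ≫ L.π := by
        simp only [Category.assoc, e1, e2]
      have q2 : (r ≫ r2) ≫ M.π = L.smul u1 (r ≫ r1) ≫ L.π := by rw [L.smul_π, q1]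
      have q3 : M.smul u2 (r ≫ r2) ≫ M.π = L.smul u1 (r ≫ r1) ≫ L.π := by rw [M.smul_π, q2]
      rw [hnat V.ι _ _ _ q0, hcg hu2' hu1' _ q3, hs1 _ _ _ _ q2, hs2 _ _ _ _ q1, ← N.mul_smul,
        ← hnat r r2 r1 (e2.trans e1.symm)]
      exact (hF.comp r).smul_unit (hu2.mul hu1)

theorem IsPow.trivial {X : Scheme.{u}} {L N : LineBundle X} (h : IsPow L 0 N) :
    IsTrivialBundle N := by
  obtain ⟨P, hP⟩ := h
  refine ⟨fun _ => L.zero ≫ P, isGlobalFrame_of (by rw [Category.assoc, hP.comm, L.zero_π]) ?_⟩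
  apply GenFrame.of_local
  intro y
  obtain ⟨U, hy, e, he, hg⟩ := L.exists_genFrame (𝟙 X) y
  refine ⟨U, hy, ?_⟩
  have := hP.smul 0 e
  rw [pow_zero, N.one_smul, L.zero_smul, he, Category.comp_id, Category.assoc] at this
  rw [this]
  exact hP.frame hg


theorem IsPowMap.isTensor {X : Scheme.{u}} {L M N : LineBundle X} {m : ℕ} {P P'}
    (hP : IsPowMap L.toVecBundleData m M.toVecBundleData P)
    (hP' : IsPowMap L.toVecBundleData (m + 1) N.toVecBundleData P') : IsTensor M L N := by
  -- the relation defining the pairing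
  let R : ∀ (T : Scheme.{u}), (T ⟶ M.tot) → (T ⟶ L.tot) → (T ⟶ N.tot) → Prop := fun T b a c =>
    c ≫ N.π = a ≫ L.π ∧ ∀ (S : Scheme.{u}) (s : S ⟶ T) (e : S ⟶ L.tot), L.GenFrame e →
      ∀ f g : Γ(S, ⊤), s ≫ b = M.smul f (e ≫ P) → s ≫ a = L.smul g e →
        s ≫ c = N.smul (f * g) (e ≫ P')
  have hnat : ∀ (T' T : Scheme.{u}) (t : T' ⟶ T) b a c, R T b a c → R T' (t ≫ b) (t ≫ a) (t ≫ c) := by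
    rintro T' T t b a c ⟨h1, h2⟩
    refine ⟨by rw [Category.assoc, h1, Category.assoc], fun S s e he f g hf hg => ?_⟩
    rw [← Category.assoc] at hf hg ⊢
    exact h2 S (s ≫ t) e he f g hf hg
  have hloc0 : ∀ (T : Scheme.{u}) (b : T ⟶ M.tot) (a : T ⟶ L.tot) (_ : b ≫ M.π = a ≫ L.π) (y : T),
      ∃ U : T.Opens, y ∈ U ∧ ∃ (e : U.toScheme ⟶ L.tot) (f g : Γ(U.toScheme, ⊤)), L.GenFrame e ∧
        U.ι ≫ b = M.smul f (e ≫ P) ∧ U.ι ≫ a = L.smul g e := by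
    intro T b a h y
    obtain ⟨U, hy, e, he, hg⟩ := L.exists_genFrame (a ≫ L.π) y
    obtain ⟨g, hg'⟩ := hg.exists_coef (U.ι ≫ a) (by rw [he, Category.assoc])
    obtain ⟨f, hf⟩ := (hP.frame hg).exists_coef (U.ι ≫ b) (by
      rw [Category.assoc, h, Category.assoc, hP.comm, he])
    exact ⟨U, hy, e, f, g, hg, hf, hg'⟩
  have hformula : ∀ (T : Scheme.{u}) (e : T ⟶ L.tot) (_ : L.GenFrame e) (f g : Γ(T, ⊤)),
      R T (M.smul f (e ≫ P)) (L.smul g e) (N.smul (f * g) (e ≫ P')) := by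
    intro T e he f g
    refine ⟨by rw [N.smul_π, L.smul_π, Category.assoc, hP'.comm], fun S s e' he' f' g' hf' hg' => ?_⟩
    have hπ : e' ≫ L.π = (s ≫ e) ≫ L.π := by
      have := congrArg (· ≫ L.π) hg'
      simp only [Category.assoc, L.smul_π] at this
      rw [Category.assoc, this]
    obtain ⟨u, hu, rfl⟩ := (he.comp s).exists_unit he' hπ
    rw [M.smul_natural, hP.smul, ← M.mul_smul, Category.assoc] at hf'
    rw [L.smul_natural, ← L.mul_smul] at hg'
    have h1 := ((hP.frame he).comp s).smul_inj hf'
    have h2 := (he.comp s).smul_inj hg'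
    rw [N.smul_natural, hP'.smul, ← N.mul_smul, map_mul, h1, h2, Category.assoc]
    congr 1
    ring
  have huniq : ∀ (T : Scheme.{u}) b a c c', R T b a c → R T b a c' → b ≫ M.π = a ≫ L.π → c = c' := by
    intro T b a c c' hc hc' h
    apply hom_ext_local
    intro y
    obtain ⟨U, hy, e, f, g, he, hf, hg⟩ := hloc0 T b a h y
    exact ⟨U, hy, by rw [hc.2 _ _ e he f g hf hg, hc'.2 _ _ e he f g hf hg]⟩
  have hloc : ∀ (T : Scheme.{u}) b a c, (∀ y : T, ∃ U : T.Opens, y ∈ U ∧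
      R U.toScheme (U.ι ≫ b) (U.ι ≫ a) (U.ι ≫ c)) → R T b a c := by
    intro T b a c h
    refine ⟨?_, fun S s e he f g hf hg => ?_⟩
    · apply hom_ext_local
      intro y
      obtain ⟨U, hy, hU, -⟩ := h y
      exact ⟨U, hy, by simpa only [Category.assoc] using hU⟩
    · apply hom_ext_local
      intro y
      obtain ⟨U, hy, -, hU⟩ := h (s y)
      obtain ⟨r, hr⟩ := exists_restrict s U
      refine ⟨s ⁻¹ᵁ U, hy, ?_⟩
      have := hU _ r ((s ⁻¹ᵁ U).ι ≫ e) (he.comp _) ((s ⁻¹ᵁ U).ι.appTop f) ((s ⁻¹ᵁ U).ι.appTop g)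
        (by rw [← Category.assoc, hr, Category.assoc, hf, M.smul_natural, Category.assoc])
        (by rw [← Category.assoc, hr, Category.assoc, hg, L.smul_natural])
      rw [← Category.assoc, hr, Category.assoc] at this
      rw [this, N.smul_natural, map_mul, Category.assoc]
  have hex : ∀ (T : Scheme.{u}) (b : T ⟶ M.tot) (a : T ⟶ L.tot), b ≫ M.π = a ≫ L.π →
      ∃ c, R T b a c := by
    intro T b a h
    obtain ⟨c, hc, -⟩ := exists_unique_hom (T := T) (Z := N.tot)
      (fun T' t c => R T' (t ≫ b) (t ≫ a) c)
      (fun T'' T' s t c hc => by simpa only [Category.assoc] using hnat _ _ s _ _ _ hc)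
      (fun c hc => hloc _ _ _ _ (by simpa only [Category.id_comp] using hc))
      (fun T' t c c' hc hc' => huniq _ _ _ _ _ hc hc' (by rw [Category.assoc, h, Category.assoc]))
      (fun y => by
        obtain ⟨U, hy, e, f, g, he, hf, hg⟩ := hloc0 T b a h y
        refine ⟨U, hy, N.smul (f * g) (e ≫ P'), ?_⟩
        rw [hf, hg]
        exact hformula _ e he f g)
    exact ⟨c, by simpa only [Category.id_comp] using hc⟩
  choose β hβ using hex
  have hβπ : ∀ (T : Scheme.{u}) (b : T ⟶ M.tot) (a : T ⟶ L.tot) (h), β T b a h ≫ N.π = a ≫ L.π :=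
    fun T b a h => (hβ T b a h).1
  have hβnat : ∀ {T' T : Scheme.{u}} (t : T' ⟶ T) (b : T ⟶ M.tot) (a : T ⟶ L.tot) (h h'),
      t ≫ β T b a h = β T' (t ≫ b) (t ≫ a) h' := fun t b a h h' =>
    huniq _ _ _ _ _ (hnat _ _ t _ _ _ (hβ _ b a h)) (hβ _ _ _ h') h'
  have hβf : ∀ {T : Scheme.{u}} (e : T ⟶ L.tot) (_ : L.GenFrame e) (f g : Γ(T, ⊤)) (b a h)
      (_ : b = M.smul f (e ≫ P)) (_ : a = L.smul g e), β T b a h = N.smul (f * g) (e ≫ P') := by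
    intro T e he f g b a h hb ha
    subst hb; subst ha
    exact huniq _ _ _ _ _ (hβ _ _ _ h) (hformula _ e he f g) h
  refine ⟨fun {T} b a h => β T b a h, fun b a h => (hβπ _ b a h).trans h.symm,
    fun t b a h h' => hβnat t b a h h', ?_, ?_, ?_, ?_, ?_⟩
  · intro T b b' a h₁ h₂ h₃ h₄ h₅
    apply hom_ext_local
    intro y
    obtain ⟨U, hy, e, f, g, he, hf, hg⟩ := hloc0 T b a h₃ y
    obtain ⟨f', hf'⟩ := (hP.frame he).exists_coef (U.ι ≫ b') (by
      rw [Category.assoc, ← h₁, ← Category.assoc, hf, M.smul_π])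
    refine ⟨U, hy, ?_⟩
    have k1 : (U.ι ≫ b) ≫ M.π = (U.ι ≫ b') ≫ M.π := by simp only [Category.assoc, h₁]
    have k3 : (U.ι ≫ b) ≫ M.π = (U.ι ≫ a) ≫ L.π := by simp only [Category.assoc, h₃]
    have k4 : (U.ι ≫ b') ≫ M.π = (U.ι ≫ a) ≫ L.π := by simp only [Category.assoc, h₄]
    have k2 : (M.add (U.ι ≫ b) (U.ι ≫ b') k1) ≫ M.π = (U.ι ≫ a) ≫ L.π := by rw [M.add_π, k3]
    have k2' : (U.ι ≫ M.add b b' h₁) ≫ M.π = (U.ι ≫ a) ≫ L.π := by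
      rw [M.add_natural _ _ _ _ k1, k2]
    have kN : N.smul (f * g) (e ≫ P') ≫ N.π = N.smul (f' * g) (e ≫ P') ≫ N.π := by
      rw [N.smul_π, N.smul_π]
    have kM : M.smul f (e ≫ P) ≫ M.π = M.smul f' (e ≫ P) ≫ M.π := by
      rw [M.smul_π, M.smul_π]
    have k5 : (U.ι ≫ β T b a h₃) ≫ N.π = (U.ι ≫ β T b' a h₄) ≫ N.π := by
      simp only [Category.assoc, h₅]
    rw [hβnat U.ι _ _ h₂ k2', hβf e he (f + f') g _ _ k2' ?_ hg, N.add_natural _ _ _ _ k5]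
    · rw [add_mul, N.add_smul _ _ _ kN]
      apply N.add_congr
      · rw [hβnat U.ι _ _ h₃ k3, hβf e he f g _ _ k3 hf hg]
      · rw [hβnat U.ι _ _ h₄ k4, hβf e he f' g _ _ k4 hf' hg]
    · rw [M.add_natural _ _ _ _ k1, M.add_smul _ _ _ kM]
      exact M.add_congr hf hf' _ _
  · intro T b a a' h₁ h₂ h₃ h₄ h₅
    apply hom_ext_local
    intro y
    obtain ⟨U, hy, e, f, g, he, hf, hg⟩ := hloc0 T b a h₃ y
    obtain ⟨g', hg'⟩ := he.exists_coef (U.ι ≫ a') (by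
      rw [Category.assoc, ← h₁, ← Category.assoc, hg, L.smul_π])
    refine ⟨U, hy, ?_⟩
    have k1 : (U.ι ≫ a) ≫ L.π = (U.ι ≫ a') ≫ L.π := by simp only [Category.assoc, h₁]
    have k3 : (U.ι ≫ b) ≫ M.π = (U.ι ≫ a) ≫ L.π := by simp only [Category.assoc, h₃]
    have k4 : (U.ι ≫ b) ≫ M.π = (U.ι ≫ a') ≫ L.π := by simp only [Category.assoc, h₄]
    have k2' : (U.ι ≫ b) ≫ M.π = (U.ι ≫ L.add a a' h₁) ≫ L.π := by
      rw [L.add_natural _ _ _ _ k1, L.add_π, k3]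
    have kN : N.smul (f * g) (e ≫ P') ≫ N.π = N.smul (f * g') (e ≫ P') ≫ N.π := by
      rw [N.smul_π, N.smul_π]
    have kL : L.smul g e ≫ L.π = L.smul g' e ≫ L.π := by
      rw [L.smul_π, L.smul_π]
    have k5 : (U.ι ≫ β T b a h₃) ≫ N.π = (U.ι ≫ β T b a' h₄) ≫ N.π := by
      simp only [Category.assoc, h₅]
    rw [hβnat U.ι _ _ h₂ k2', hβf e he f (g + g') _ _ k2' hf ?_, N.add_natural _ _ _ _ k5]
    · rw [mul_add, N.add_smul _ _ _ kN]
      apply N.add_congr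
      · rw [hβnat U.ι _ _ h₃ k3, hβf e he f g _ _ k3 hf hg]
      · rw [hβnat U.ι _ _ h₄ k4, hβf e he f g' _ _ k4 hf hg']
    · rw [L.add_natural _ _ _ _ k1, L.add_smul _ _ _ kL]
      exact L.add_congr hg hg' _ _
  · intro T r b a h₁ h₂
    apply hom_ext_local
    intro y
    obtain ⟨U, hy, e, f, g, he, hf, hg⟩ := hloc0 T b a h₂ y
    refine ⟨U, hy, ?_⟩
    have k1 : (U.ι ≫ M.smul r b) ≫ M.π = (U.ι ≫ a) ≫ L.π := by simp only [Category.assoc, h₁]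
    have k2 : (U.ι ≫ b) ≫ M.π = (U.ι ≫ a) ≫ L.π := by simp only [Category.assoc, h₂]
    rw [hβnat U.ι _ _ h₁ k1, hβf e he (U.ι.appTop r * f) g _ _ k1 ?_ hg, N.smul_natural,
      hβnat U.ι _ _ h₂ k2, hβf e he f g _ _ k2 hf hg, ← N.mul_smul, mul_assoc]
    rw [M.smul_natural, hf, M.mul_smul]
  · intro T r b a h₁ h₂
    apply hom_ext_local
    intro y
    obtain ⟨U, hy, e, f, g, he, hf, hg⟩ := hloc0 T b a h₂ y
    refine ⟨U, hy, ?_⟩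
    have k1 : (U.ι ≫ b) ≫ M.π = (U.ι ≫ L.smul r a) ≫ L.π := by simp only [Category.assoc, h₁]
    have k2 : (U.ι ≫ b) ≫ M.π = (U.ι ≫ a) ≫ L.π := by simp only [Category.assoc, h₂]
    rw [hβnat U.ι _ _ h₁ k1, hβf e he f (U.ι.appTop r * g) _ _ k1 hf ?_, N.smul_natural,
      hβnat U.ι _ _ h₂ k2, hβf e he f g _ _ k2 hf hg, ← N.mul_smul]
    · congr 1; ring
    · rw [L.smul_natural, hg, L.mul_smul]
  · intro U sM sL hsM hsL h
    obtain ⟨h1, h2⟩ := isFrame_iff.mp hsM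
    obtain ⟨h3, h4⟩ := isFrame_iff.mp hsL
    obtain ⟨u, hu, hu'⟩ := (hP.frame h4).exists_unit h2 (by
      rw [h1, Category.assoc, hP.comm, h3])
    refine isFrame_iff.mpr ⟨(hβπ _ _ _ h).trans h3, ?_⟩
    beta_reduce
    rw [hβf (sL 0) h4 u 1 _ _ h hu' (L.one_smul _).symm, mul_one]
    exact (hP'.frame h4).smul_unit hu

/-- The pullback along the absolute Frobenius is a power. -/
theorem isPow_frobenius {X : Scheme.{u}} (q : ℕ) {F : X ⟶ X} (hF : IsAbsoluteFrobenius X q F)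
    (hq : ∀ {T : Scheme.{u}} (_ : T ⟶ X), ∃ G : T ⟶ T, IsAbsoluteFrobenius T q G)
    {L N : LineBundle X} {τ} (H : IsPB F L.toVecBundleData N.toVecBundleData τ) : IsPow L q N := by
  obtain ⟨G, hG⟩ := hq L.π
  obtain ⟨P, ⟨h1, h2⟩, -⟩ := H.exu L.π G (hG.natural hF L.π).symm
  refine ⟨P, h1, fun {T} f a => ?_, fun {T e} he => ?_⟩
  · obtain ⟨G', hG'⟩ := hq (a ≫ L.π)
    apply H.ext
    · rw [Category.assoc, h1, L.smul_π, N.smul_π, Category.assoc, h1]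
    · rw [Category.assoc, h2, H.smul, Category.assoc, h2, hG'.natural hG, L.smul_natural,
        hG'.appTop_eq, hG'.natural hG]
  · obtain ⟨G', hG'⟩ := hq (e ≫ L.π)
    rw [H.genFrame_iff, Category.assoc, h2, hG'.natural hG]
    exact he.comp _


theorem section_eq_of_point {X S : Scheme.{u}} (π : S ⟶ X) (s s' : X ⟶ S) (hs : s ≫ π = 𝟙 X)
    (hs' : s' ≫ π = 𝟙 X) (x : X) (h : s x = s' x) :
    X.fromSpecResidueField x ≫ s = X.fromSpecResidueField x ≫ s' := by
  obtain ⟨e, he⟩ : ∃ e, s x = e := ⟨_, rfl⟩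
  have key : ∀ (s : X ⟶ S) (_ : s x = e), ∃ α : S.residueField e ⟶ X.residueField x,
      Spec.map α ≫ S.fromSpecResidueField e = X.fromSpecResidueField x ≫ s := by
    intro s hs
    subst hs
    exact ⟨s.residueFieldMap x, Scheme.Hom.SpecMap_residueFieldMap_fromSpecResidueField s x⟩
  have hx : π e = x := by
    rw [← he, ← Scheme.Hom.comp_apply, hs]; rfl
  have key2 : ∀ (x' : X) (_ : π e = x'), ∃ γ : X.residueField x' ⟶ S.residueField e,
      Spec.map γ ≫ X.fromSpecResidueField x' = S.fromSpecResidueField e ≫ π := by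
    intro x' hx'
    subst hx'
    exact ⟨π.residueFieldMap e, Scheme.Hom.SpecMap_residueFieldMap_fromSpecResidueField π e⟩
  obtain ⟨α, hα⟩ := key s he
  obtain ⟨β, hβ⟩ := key s' (h.symm.trans he)
  obtain ⟨γ, hγ⟩ := key2 x hx
  have h1 : γ ≫ α = 𝟙 _ := by
    apply Spec.map_injective
    rw [Spec.map_comp, Spec.map_id, ← cancel_mono (X.fromSpecResidueField x), Category.assoc, hγ,
      ← Category.assoc, hα, Category.assoc, hs, Category.comp_id, Category.id_comp]
  have h2 : γ ≫ β = 𝟙 _ := by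
    apply Spec.map_injective
    rw [Spec.map_comp, Spec.map_id, ← cancel_mono (X.fromSpecResidueField x), Category.assoc, hγ,
      ← Category.assoc, hβ, Category.assoc, hs', Category.comp_id, Category.id_comp]
  have hsurj : Function.Surjective γ.hom := by
    intro z
    refine ⟨α.hom z, ?_⟩
    apply α.hom.injective
    have := congrArg (fun r => r.hom (α.hom z)) h1
    exact this
  have : α = β := by
    ext z
    obtain ⟨w, rfl⟩ := hsurj z
    have a1 := congrArg (fun r => r.hom w) h1
    have a2 := congrArg (fun r => r.hom w) h2
    exact a1.trans a2.symm
  rw [← hα, ← hβ, this]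

theorem IsPB.nonvanishing {Y X : Scheme.{u}} {g : Y ⟶ X} {E : VecBundleData X} {F : VecBundleData Y}
    {τ : F.tot ⟶ E.tot} (H : IsPB g E F τ) {s : X ⟶ E.tot} (hs : s ≫ E.π = 𝟙 X)
    {t : Y ⟶ F.tot} (ht : t ≫ F.π = 𝟙 Y) (hts : t ≫ τ = g ≫ s) (y : Y) :
    t y ≠ F.zero y ↔ s (g y) ≠ E.zero (g y) := by
  rw [not_iff_not]
  constructor
  · intro h
    have := congrArg τ h
    rw [← Scheme.Hom.comp_apply, ← Scheme.Hom.comp_apply, hts, H.zero_comp,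
      Scheme.Hom.comp_apply, Scheme.Hom.comp_apply] at this
    exact this
  · intro h
    have h1 := section_eq_of_point E.π s E.zero hs E.zero_π (g y) h
    have h2 : Y.fromSpecResidueField y ≫ t = Y.fromSpecResidueField y ≫ F.zero := by
      apply H.ext
      · rw [Category.assoc, ht, Category.assoc, F.zero_π]
      · rw [Category.assoc, hts, Category.assoc, H.zero_comp, ← Category.assoc, ← Category.assoc,
          ← Scheme.Hom.SpecMap_residueFieldMap_fromSpecResidueField, Category.assoc, Category.assoc, h1]
    have hp : Y.fromSpecResidueField y (IsLocalRing.closedPoint (Y.residueField y)) = y :=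
      Scheme.fromSpecResidueField_apply _ _
    have h4 : ∀ w : Y ⟶ F.tot, w y = (Y.fromSpecResidueField y ≫ w)
        (IsLocalRing.closedPoint (Y.residueField y)) := by
      intro w
      refine Eq.trans ?_ (Scheme.Hom.comp_apply _ _ _).symm
      rw [hp]
    rw [h4 t, h4 F.zero, h2]


/-! ### Relative coequalizers -/

theorem isLocalization_eqLocus {A B C D E E' : Type u} [CommRing A] [CommRing B] [CommRing C]
    [CommRing D] [CommRing E] [CommRing E'] [Algebra A B] [Algebra C D] [Algebra E E']
    (r : A) (s : C) (e0 : E) [IsLocalization.Away r B] [IsLocalization.Away s D]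
    (α β : A →+* C) (α' β' : B →+* D)
    (hα : ∀ x, α' (algebraMap A B x) = algebraMap C D (α x))
    (hβ : ∀ x, β' (algebraMap A B x) = algebraMap C D (β x))
    (hαr : α r = s) (hβr : β r = s)
    (i : E →+* A) (j : E' →+* B) (hi : Function.Injective i) (hj : Function.Injective j)
    (hij : ∀ e, j (algebraMap E E' e) = algebraMap A B (i e))
    (hir : ∀ x, α x = β x ↔ ∃ e, i e = x) (hjr : ∀ x, α' x = β' x ↔ ∃ e, j e = x)
    (h0 : i e0 = r) : IsLocalization.Away e0 E' := by
  have hu : IsUnit (algebraMap A B r) := IsLocalization.Away.algebraMap_isUnit r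
  have huD : IsUnit (algebraMap C D s) := IsLocalization.Away.algebraMap_isUnit s
  obtain ⟨v, hv⟩ := hu.exists_right_inv
  have hvE : α' v = β' v := by
    have h1 : algebraMap C D s * α' v = 1 := by rw [← hαr, ← hα, ← map_mul, hv, map_one]
    have h2 : algebraMap C D s * β' v = 1 := by rw [← hβr, ← hβ, ← map_mul, hv, map_one]
    exact huD.mul_left_cancel (h1.trans h2.symm)
  obtain ⟨v', hv'⟩ := (hjr v).1 hvE
  have hu' : IsUnit (algebraMap E E' e0) := by
    refine IsUnit.of_mul_eq_one v' (hj ?_)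
    rw [map_mul, hij, h0, hv', hv, map_one]
  refine (isLocalization_iff _ _).2 ⟨?_, ?_, ?_⟩
  · rintro ⟨_, m, rfl⟩
    simpa using hu'.pow m
  · intro z
    obtain ⟨m, a, ha⟩ := IsLocalization.Away.surj r (j z)
    have h1 : algebraMap C D (α a) = algebraMap C D (β a) := by
      rw [← hα, ← hβ, ← ha, map_mul, map_mul, (hjr (j z)).2 ⟨z, rfl⟩, map_pow, map_pow, hα, hβ,
        hαr, hβr]
    obtain ⟨m', hm'⟩ := IsLocalization.Away.exists_of_eq s h1
    have h2 : α (r ^ m' * a) = β (r ^ m' * a) := by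
      rw [map_mul, map_mul, map_pow, map_pow, hαr, hβr, hm']
    obtain ⟨e, he⟩ := (hir _).1 h2
    refine ⟨⟨e, ⟨e0 ^ (m + m'), m + m', rfl⟩⟩, hj ?_⟩
    rw [map_mul, hij, hij, he, map_pow, h0, map_mul, map_pow, map_pow, pow_add, ← ha]
    ring
  · intro x y hxy
    have h1 : algebraMap A B (i x) = algebraMap A B (i y) := by rw [← hij, ← hij, hxy]
    obtain ⟨m, hm⟩ := IsLocalization.Away.exists_of_eq r h1
    refine ⟨⟨e0 ^ m, m, rfl⟩, hi ?_⟩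
    rw [map_mul, map_mul, map_pow, h0, hm]

section RelCoeq
variable {X P S : Scheme.{u}} (f : X ⟶ S) (w : P ⟶ S) (a b : P ⟶ X) (ha : a ≫ f = w)
  (hb : b ≫ f = w)

theorem relCoeq_le {a : P ⟶ X} {f : X ⟶ S} {w : P ⟶ S} (ha : a ≫ f = w) (U : S.Opens) :
    w ⁻¹ᵁ U ≤ a ⁻¹ᵁ f ⁻¹ᵁ U := by subst ha; exact le_rfl

/-- The ring of functions on which `a` and `b` agree. -/
def relCoeqRing (U : S.Opens) : Subring Γ(X, f ⁻¹ᵁ U) :=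
  RingHom.eqLocus (a.appLE (f ⁻¹ᵁ U) (w ⁻¹ᵁ U) (relCoeq_le ha U)).hom
    (b.appLE (f ⁻¹ᵁ U) (w ⁻¹ᵁ U) (relCoeq_le hb U)).hom

theorem mem_relCoeqRing (U : S.Opens) (x : Γ(X, f ⁻¹ᵁ U)) : x ∈ relCoeqRing f w a b ha hb U ↔
    a.appLE (f ⁻¹ᵁ U) (w ⁻¹ᵁ U) (relCoeq_le ha U) x =
    b.appLE (f ⁻¹ᵁ U) (w ⁻¹ᵁ U) (relCoeq_le hb U) x := Iff.rfl

theorem res_mem_relCoeqRing {U V : S.Opens} (h : V ≤ U) (x : Γ(X, f ⁻¹ᵁ U))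
    (hx : x ∈ relCoeqRing f w a b ha hb U) :
    X.presheaf.map (homOfLE (f.preimage_mono h)).op x ∈ relCoeqRing f w a b ha hb V := by
  rw [mem_relCoeqRing] at hx ⊢
  have key : ∀ (c : P ⟶ X) (hc : c ≫ f = w),
      c.appLE (f ⁻¹ᵁ V) (w ⁻¹ᵁ V) (relCoeq_le hc V)
        (X.presheaf.map (homOfLE (f.preimage_mono h)).op x) =
      P.presheaf.map (homOfLE (w.preimage_mono h)).op
        (c.appLE (f ⁻¹ᵁ U) (w ⁻¹ᵁ U) (relCoeq_le hc U) x) := by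
    intro c hc
    rw [← CommRingCat.comp_apply, ← CommRingCat.comp_apply, Scheme.Hom.map_appLE,
      Scheme.Hom.appLE_map]
  rw [key a ha, key b hb, hx]

theorem app_mem_relCoeqRing (U : S.Opens) (x : Γ(S, U)) :
    f.app U x ∈ relCoeqRing f w a b ha hb U := by
  rw [mem_relCoeqRing]
  have key : ∀ (c : P ⟶ X) (hc : c ≫ f = w),
      c.appLE (f ⁻¹ᵁ U) (w ⁻¹ᵁ U) (relCoeq_le hc U) (f.app U x) = w.app U x := by
    intro c hc
    subst hc
    rw [← CommRingCat.comp_apply, Scheme.Hom.app_eq_appLE, Scheme.Hom.appLE_comp_appLE,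
      Scheme.Hom.app_eq_appLE]
  rw [key a ha, key b hb]

/-- The presheaf of rings of functions on which `a` and `b` agree. -/
def relCoeqFunctor : S.Opensᵒᵖ ⥤ CommRingCat.{u} where
  obj U := CommRingCat.of (relCoeqRing f w a b ha hb U.unop)
  map {V U} i := CommRingCat.ofHom
    ((X.presheaf.map (homOfLE (f.preimage_mono i.unop.le)).op).hom.restrict _ _
      (fun x hx => res_mem_relCoeqRing f w a b ha hb i.unop.le x hx))
  map_id U := by
    ext x
    change X.presheaf.map _ x.1 = x.1
    rw [Subsingleton.elim (homOfLE _).op (𝟙 _), X.presheaf.map_id]; rfl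
  map_comp {U V W} i j := by
    ext x
    change X.presheaf.map _ x.1 = X.presheaf.map _ (X.presheaf.map _ x.1)
    rw [← CommRingCat.comp_apply, ← Functor.map_comp]; rfl

/-- The structure morphism of `relCoeqFunctor`. -/
def relCoeqMap : S.presheaf ⟶ relCoeqFunctor f w a b ha hb where
  app U := CommRingCat.ofHom ((f.app U.unop).hom.codRestrict (relCoeqRing f w a b ha hb U.unop)
    (fun x => app_mem_relCoeqRing f w a b ha hb U.unop x))
  naturality {U V} i := by
    ext x
    apply Subtype.ext
    exact congr($(f.naturality i) x)

theorem isLocalization_preimage_basicOpen {X S : Scheme.{u}} (f : X ⟶ S) [QuasiCompact f]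
    [QuasiSeparated f] {U : S.Opens} (hU : IsAffineOpen U) (r : Γ(S, U)) (V : X.Opens)
    (hV : V = f ⁻¹ᵁ S.basicOpen r) (h : V ≤ f ⁻¹ᵁ U) :
    letI := (X.presheaf.map (homOfLE h).op).hom.toAlgebra
    IsLocalization.Away (f.app U r) Γ(X, V) := by
  obtain rfl : V = X.basicOpen (f.app U r) := by rw [hV, Scheme.preimage_basicOpen]
  exact isLocalization_basicOpen_of_qcqs (f.isCompact_preimage hU.isCompact)
        (f.isQuasiSeparated_preimage hU.isQuasiSeparated) (f.app _ r)

theorem coequifibered_relCoeqMap [QuasiCompact f] [QuasiSeparated f] [QuasiCompact w]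
    [QuasiSeparated w] :
    (Functor.whiskerLeft (Scheme.AffineZariskiSite.toOpensFunctor S).op
      (relCoeqMap f w a b ha hb)).Coequifibered := by
  refine Scheme.AffineZariskiSite.coequifibered_iff_forall_isLocalizationAway.mpr fun U r ↦ ?_
  have hle : S.basicOpen r ≤ U.1 := S.basicOpen_le r
  letI i1 := (X.presheaf.map (homOfLE (f.preimage_mono hle)).op).hom.toAlgebra
  letI i2 := (P.presheaf.map (homOfLE (w.preimage_mono hle)).op).hom.toAlgebra
  letI i3 : Algebra (relCoeqRing f w a b ha hb U.1)
      (relCoeqRing f w a b ha hb (S.basicOpen r)) := ((relCoeqFunctor f w a b ha hb).map (homOfLE hle).op).hom.toAlgebra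
  have : IsLocalization.Away (f.app U.1 r) Γ(X, f ⁻¹ᵁ S.basicOpen r) :=
    isLocalization_preimage_basicOpen f U.2 r _ rfl _
  have : IsLocalization.Away (w.app U.1 r) Γ(P, w ⁻¹ᵁ S.basicOpen r) :=
    isLocalization_preimage_basicOpen w U.2 r _ rfl _
  have key : ∀ (c : P ⟶ X) (hc : c ≫ f = w) (x : Γ(X, f ⁻¹ᵁ U.1)),
      c.appLE (f ⁻¹ᵁ S.basicOpen r) (w ⁻¹ᵁ S.basicOpen r) (relCoeq_le hc _)
        (X.presheaf.map (homOfLE (f.preimage_mono hle)).op x) =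
      P.presheaf.map (homOfLE (w.preimage_mono hle)).op
        (c.appLE (f ⁻¹ᵁ U.1) (w ⁻¹ᵁ U.1) (relCoeq_le hc U.1) x) := by
    intro c hc x
    rw [← CommRingCat.comp_apply, ← CommRingCat.comp_apply, Scheme.Hom.map_appLE,
      Scheme.Hom.appLE_map]
  have key2 : ∀ (c : P ⟶ X) (hc : c ≫ f = w),
      c.appLE (f ⁻¹ᵁ U.1) (w ⁻¹ᵁ U.1) (relCoeq_le hc U.1) (f.app U.1 r) = w.app U.1 r := by
    intro c hc
    subst hc
    rw [← CommRingCat.comp_apply, Scheme.Hom.app_eq_appLE, Scheme.Hom.appLE_comp_appLE,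
      Scheme.Hom.app_eq_appLE]
  exact isLocalization_eqLocus (A := Γ(X, f ⁻¹ᵁ U.1)) (B := Γ(X, f ⁻¹ᵁ S.basicOpen r))
    (C := Γ(P, w ⁻¹ᵁ U.1)) (D := Γ(P, w ⁻¹ᵁ S.basicOpen r))
    (E := relCoeqRing f w a b ha hb U.1) (E' := relCoeqRing f w a b ha hb (S.basicOpen r))
    (f.app U.1 r) (w.app U.1 r) _ 
    (a.appLE (f ⁻¹ᵁ U.1) (w ⁻¹ᵁ U.1) (relCoeq_le ha _)).hom
    (b.appLE (f ⁻¹ᵁ U.1) (w ⁻¹ᵁ U.1) (relCoeq_le hb _)).hom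
    (a.appLE (f ⁻¹ᵁ S.basicOpen r) (w ⁻¹ᵁ S.basicOpen r) (relCoeq_le ha _)).hom
    (b.appLE (f ⁻¹ᵁ S.basicOpen r) (w ⁻¹ᵁ S.basicOpen r) (relCoeq_le hb _)).hom
    (key a ha) (key b hb) (key2 a ha) (key2 b hb)
    (Subring.subtype _) (Subring.subtype _) Subtype.val_injective Subtype.val_injective
    (fun e => rfl) (fun x => ⟨fun h => ⟨⟨x, h⟩, rfl⟩, fun ⟨e, he⟩ => he ▸ e.2⟩)
    (fun x => ⟨fun h => ⟨⟨x, h⟩, rfl⟩, fun ⟨e, he⟩ => he ▸ e.2⟩) rfl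
end RelCoeq


section
variable {X P S : Scheme.{u}} (f : X ⟶ S) (w : P ⟶ S) (a b : P ⟶ X) (ha : a ≫ f = w)
  (hb : b ≫ f = w)

theorem exists_relSpec {S : Scheme.{u}} (F : S.Opensᵒᵖ ⥤ CommRingCat.{u}) (m : S.presheaf ⟶ F)
    (H : (Functor.whiskerLeft (Scheme.AffineZariskiSite.toOpensFunctor S).op m).Coequifibered) :
    ∃ (N : Scheme.{u}) (ρ : N ⟶ S) (c : ∀ U : S.affineOpens, Spec (F.obj (op U.1)) ⟶ N),
      (∀ U : S.affineOpens, IsPullback (Spec.map (m.app (op U.1)) ≫ U.2.isoSpec.inv) (c U)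
        U.1.ι ρ) ∧
      ∀ (U : S.affineOpens) (r : Γ(S, U.1)),
        Spec.map (F.map (homOfLE (S.basicOpen_le r)).op) ≫ c U =
          c ⟨S.basicOpen r, U.2.basicOpen r⟩ := by
  let d := Scheme.AffineZariskiSite.relativeGluingData H
  have : (d.functor ⋙ Scheme.forget).IsLocallyDirected :=
    Scheme.Cover.RelativeGluingData.instIsLocallyDirectedI₀CompFunctorForgetOfIsThin ..
  refine ⟨d.glued, d.toBase, fun U => colimit.ι d.functor (show S.AffineZariskiSite from U), fun U => ?_, fun U r => ?_⟩
  · have h := d.isPullback_natTrans_ι_toBase (show S.AffineZariskiSite from U)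
    exact h
  · exact colimit.w d.functor (homOfLE (Scheme.AffineZariskiSite.basicOpen_le
      (show S.AffineZariskiSite from U) r))
end


/-- `φ : X ⟶ N` is a coequalizer of `a` and `b`, affine locally over `S`. -/
structure IsRelCoeq {X P S N : Scheme.{u}} (f : X ⟶ S) (a b : P ⟶ X) (φ : X ⟶ N)
    (ρ : N ⟶ S) : Prop where
  affine : IsAffineHom ρ
  fac : φ ≫ ρ = f
  inv : a ≫ φ = b ≫ φ
  univ : ∀ (U : S.Opens), IsAffineOpen U → ∀ (r : (f ⁻¹ᵁ U).toScheme ⟶ (ρ ⁻¹ᵁ U).toScheme),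
    r ≫ (ρ ⁻¹ᵁ U).ι = (f ⁻¹ᵁ U).ι ≫ φ → ∀ (Z : Scheme.{u}), IsAffine Z →
    ∀ (h : (f ⁻¹ᵁ U).toScheme ⟶ Z),
    (∀ (T : Scheme.{u}) (t : T ⟶ P) (x y : T ⟶ (f ⁻¹ᵁ U).toScheme), x ≫ (f ⁻¹ᵁ U).ι = t ≫ a →
      y ≫ (f ⁻¹ᵁ U).ι = t ≫ b → x ≫ h = y ≫ h) →
    ∃! v : (ρ ⁻¹ᵁ U).toScheme ⟶ Z, r ≫ v = h

theorem isIso_of_isPullback_ι {N S Y : Scheme.{u}} {ρ : N ⟶ S} {U : S.Opens}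
    {p : Y ⟶ U.toScheme} {c : Y ⟶ N} (h : IsPullback p c U.ι ρ) :
    ∃ j : Y ≅ (ρ ⁻¹ᵁ U).toScheme, j.hom ≫ (ρ ⁻¹ᵁ U).ι = c := by
  have h2 : IsPullback (ρ ∣_ U) (ρ ⁻¹ᵁ U).ι U.ι ρ := isPullback_morphismRestrict ρ U
  exact ⟨h.isoIsPullback _ _ h2, h.isoIsPullback_hom_snd _ _ h2⟩

section
variable {X P S : Scheme.{u}} (f : X ⟶ S) (w : P ⟶ S) (a b : P ⟶ X) (ha : a ≫ f = w)
  (hb : b ≫ f = w)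

/-- The inclusion of the ring of invariant functions. -/
def relCoeqIncl (U : S.Opens) : (relCoeqFunctor f w a b ha hb).obj (op U) ⟶ Γ(X, f ⁻¹ᵁ U) :=
  CommRingCat.ofHom (relCoeqRing f w a b ha hb U).subtype

theorem relCoeqMap_incl (U : S.Opens) :
    (relCoeqMap f w a b ha hb).app (op U) ≫ relCoeqIncl f w a b ha hb U = f.app U := by
  ext x; rfl

theorem relCoeqIncl_appLE (U : S.Opens) :
    relCoeqIncl f w a b ha hb U ≫ a.appLE (f ⁻¹ᵁ U) (w ⁻¹ᵁ U) (relCoeq_le ha U) =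
    relCoeqIncl f w a b ha hb U ≫ b.appLE (f ⁻¹ᵁ U) (w ⁻¹ᵁ U) (relCoeq_le hb U) := by
  ext x; exact x.2

theorem relCoeqIncl_lift (U : S.Opens) {R : CommRingCat.{u}} (i : R ⟶ Γ(X, f ⁻¹ᵁ U))
    (h : i ≫ a.appLE (f ⁻¹ᵁ U) (w ⁻¹ᵁ U) (relCoeq_le ha U) =
      i ≫ b.appLE (f ⁻¹ᵁ U) (w ⁻¹ᵁ U) (relCoeq_le hb U)) :
    ∃ i', i' ≫ relCoeqIncl f w a b ha hb U = i :=
  ⟨CommRingCat.ofHom (i.hom.codRestrict (relCoeqRing f w a b ha hb U)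
    (fun x => congr($h x))), by ext x; rfl⟩

theorem relCoeqIncl_inj (U : S.Opens) {R : CommRingCat.{u}}
    (i j : R ⟶ (relCoeqFunctor f w a b ha hb).obj (op U))
    (h : i ≫ relCoeqIncl f w a b ha hb U = j ≫ relCoeqIncl f w a b ha hb U) : i = j := by
  ext x
  exact Subtype.ext congr($h x)

theorem relCoeqIncl_res {U V : S.Opens} (h : V ≤ U) :
    relCoeqIncl f w a b ha hb U ≫ X.presheaf.map (homOfLE (f.preimage_mono h)).op =
    (relCoeqFunctor f w a b ha hb).map (homOfLE h).op ≫ relCoeqIncl f w a b ha hb V := by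
  ext x; rfl

/-- The local quotient map. -/
def relCoeqQ (U : S.Opens) :
    (f ⁻¹ᵁ U).toScheme ⟶ Spec ((relCoeqFunctor f w a b ha hb).obj (op U)) :=
  (f ⁻¹ᵁ U).toSpecΓ ≫ Spec.map (relCoeqIncl f w a b ha hb U)

theorem relCoeqQ_res {U V : S.Opens} (h : V ≤ U) :
    X.homOfLE (f.preimage_mono h) ≫ relCoeqQ f w a b ha hb U =
    relCoeqQ f w a b ha hb V ≫ Spec.map ((relCoeqFunctor f w a b ha hb).map (homOfLE h).op) := by
  rw [relCoeqQ, relCoeqQ, ← Scheme.Opens.toSpecΓ_SpecMap_presheaf_map_assoc, Category.assoc,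
    ← Spec.map_comp, ← Spec.map_comp, relCoeqIncl_res]

theorem relCoeqQ_base {U : S.Opens} (hU : IsAffineOpen U) :
    relCoeqQ f w a b ha hb U ≫ (Spec.map ((relCoeqMap f w a b ha hb).app (op U)) ≫
      hU.isoSpec.inv) ≫ U.ι = (f ⁻¹ᵁ U).ι ≫ f := by
  rw [relCoeqQ, Category.assoc, Category.assoc, ← Spec.map_comp_assoc, relCoeqMap_incl,
    Scheme.Opens.toSpecΓ_naturality_assoc, IsAffineOpen.toSpecΓ_isoSpec_inv_assoc,
    morphismRestrict_ι]

theorem relCoeqQ_inv (U : S.Opens) :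
    a.resLE (f ⁻¹ᵁ U) (w ⁻¹ᵁ U) (relCoeq_le ha U) ≫ relCoeqQ f w a b ha hb U =
    b.resLE (f ⁻¹ᵁ U) (w ⁻¹ᵁ U) (relCoeq_le hb U) ≫ relCoeqQ f w a b ha hb U := by
  rw [relCoeqQ, ← Scheme.Opens.toSpecΓ_SpecMap_appLE_assoc,
    ← Scheme.Opens.toSpecΓ_SpecMap_appLE_assoc, ← Spec.map_comp, ← Spec.map_comp,
    relCoeqIncl_appLE]

/-- Morphisms from an open subset to an affine scheme. -/
theorem toSpecΓ_factor {V : X.Opens} {Z : Scheme.{u}} [IsAffine Z] (h : V.toScheme ⟶ Z) :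
    V.toSpecΓ ≫ Spec.map (h.appTop ≫ V.topIso.hom) ≫ Z.isoSpec.inv = h := by
  rw [Scheme.Opens.toSpecΓ, Category.assoc, ← Spec.map_comp_assoc, Category.assoc,
    Iso.hom_inv_id, Category.comp_id, ← Scheme.toSpecΓ_naturality_assoc,
    Scheme.toSpecΓ_isoSpec_inv, Category.comp_id]

theorem toSpecΓ_SpecMap_inj {V : X.Opens} {R : CommRingCat.{u}} (i j : R ⟶ Γ(X, V))
    (h : V.toSpecΓ ≫ Spec.map i = V.toSpecΓ ≫ Spec.map j) : i = j := by
  have h1 := congrArg Scheme.Hom.appTop h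
  rw [Scheme.Hom.comp_appTop, Scheme.Hom.comp_appTop, Scheme.Opens.toSpecΓ_appTop] at h1
  rw [← Category.assoc, ← Category.assoc, cancel_mono, Scheme.ΓSpecIso_naturality,
    Scheme.ΓSpecIso_naturality, cancel_epi] at h1
  exact h1

theorem relCoeqQ_univ (U : S.Opens) (Z : Scheme.{u}) [IsAffine Z]
    (h : (f ⁻¹ᵁ U).toScheme ⟶ Z)
    (hh : ∀ (T : Scheme.{u}) (t : T ⟶ P) (x y : T ⟶ (f ⁻¹ᵁ U).toScheme),
      x ≫ (f ⁻¹ᵁ U).ι = t ≫ a → y ≫ (f ⁻¹ᵁ U).ι = t ≫ b → x ≫ h = y ≫ h) :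
    ∃! v, relCoeqQ f w a b ha hb U ≫ v = h := by
  have h1 := hh _ (w ⁻¹ᵁ U).ι (a.resLE (f ⁻¹ᵁ U) (w ⁻¹ᵁ U) (relCoeq_le ha U))
    (b.resLE (f ⁻¹ᵁ U) (w ⁻¹ᵁ U) (relCoeq_le hb U)) (by simp) (by simp)
  obtain ⟨i', hi'⟩ := relCoeqIncl_lift f w a b ha hb U (h.appTop ≫ (f ⁻¹ᵁ U).topIso.hom) (by
    apply toSpecΓ_SpecMap_inj
    rw [Spec.map_comp _ (a.appLE _ _ _), Spec.map_comp _ (b.appLE _ _ _), Scheme.Opens.toSpecΓ_SpecMap_appLE_assoc,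
      Scheme.Opens.toSpecΓ_SpecMap_appLE_assoc, ← cancel_mono Z.isoSpec.inv]
    simp only [Category.assoc]
    rw [toSpecΓ_factor, h1])
  refine ⟨Spec.map i' ≫ Z.isoSpec.inv, ?_, fun v hv => ?_⟩
  · dsimp only
    rw [relCoeqQ, Category.assoc, ← Spec.map_comp_assoc, hi', toSpecΓ_factor]
  · rw [← cancel_mono Z.isoSpec.hom, Category.assoc, Iso.inv_hom_id, Category.comp_id]
    obtain ⟨j, hj⟩ := Spec.map_surjective (v ≫ Z.isoSpec.hom)
    rw [← hj]
    congr 1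
    apply relCoeqIncl_inj
    apply toSpecΓ_SpecMap_inj
    rw [hi', Spec.map_comp, hj]
    have : (f ⁻¹ᵁ U).toSpecΓ ≫ Spec.map (relCoeqIncl f w a b ha hb U) ≫ v = h := by
      rw [← hv, relCoeqQ, Category.assoc]
    rw [← cancel_mono Z.isoSpec.inv]
    simp only [Category.assoc, Iso.hom_inv_id, Category.comp_id]
    rw [toSpecΓ_factor, this]

end


/-- Restricting a morphism to an open subset containing its image. -/
theorem exists_lift_opens {T X : Scheme.{u}} (U : X.Opens) (t : T ⟶ X) (h : ∀ y, t y ∈ U) :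
    ∃ r : T ⟶ U.toScheme, r ≫ U.ι = t := by
  refine ⟨IsOpenImmersion.lift U.ι t ?_, IsOpenImmersion.lift_fac _ _ _⟩
  rintro _ ⟨y, rfl⟩
  rw [Scheme.Opens.range_ι]
  exact h y

theorem mem_of_lift_opens {T X : Scheme.{u}} {U : X.Opens} {t : T ⟶ X} {r : T ⟶ U.toScheme}
    (h : r ≫ U.ι = t) (y : T) : t y ∈ U := by
  rw [← h, Scheme.Hom.comp_apply]
  exact (r y).2

/-- Relative coequalizers exist. -/
theorem exists_relCoeq {X P S : Scheme.{u}} (f : X ⟶ S) (a b : P ⟶ X) (hab : a ≫ f = b ≫ f)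
    [QuasiCompact f] [QuasiSeparated f] [QuasiCompact (b ≫ f)] [QuasiSeparated (b ≫ f)] :
    ∃ (N : Scheme.{u}) (φ : X ⟶ N) (ρ : N ⟶ S), IsRelCoeq f a b φ ρ := by
  obtain ⟨N, ρ, c, hc, hcr⟩ := exists_relSpec (relCoeqFunctor f (b ≫ f) a b hab rfl)
    (relCoeqMap f (b ≫ f) a b hab rfl) (coequifibered_relCoeqMap f (b ≫ f) a b hab rfl)
  let q := fun U : S.affineOpens => relCoeqQ f (b ≫ f) a b hab rfl U.1
  have qbase : ∀ U : S.affineOpens, q U ≫ c U ≫ ρ = (f ⁻¹ᵁ U.1).ι ≫ f := by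
    intro U
    rw [← (hc U).w, ← relCoeqQ_base f (b ≫ f) a b hab rfl U.2]
  have hbasic : ∀ (U : S.affineOpens) (r : Γ(S, U.1)),
      X.homOfLE (f.preimage_mono (S.basicOpen_le r)) ≫ q U ≫ c U =
        q ⟨S.basicOpen r, U.2.basicOpen r⟩ ≫ c ⟨S.basicOpen r, U.2.basicOpen r⟩ := by
    intro U r
    rw [← hcr U r, ← Category.assoc]
    simp only [q]
    rw [relCoeqQ_res f (b ≫ f) a b hab rfl (S.basicOpen_le r), Category.assoc]
  have hbasic' : ∀ (U : S.affineOpens) (r : Γ(S, U.1)) (T : Scheme.{u})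
      (t : T ⟶ (f ⁻¹ᵁ U.1).toScheme)
      (x : T ⟶ (f ⁻¹ᵁ S.basicOpen r).toScheme), t ≫ (f ⁻¹ᵁ U.1).ι = x ≫ (f ⁻¹ᵁ S.basicOpen r).ι →
      t ≫ q U ≫ c U =
        x ≫ q ⟨S.basicOpen r, U.2.basicOpen r⟩ ≫ c ⟨S.basicOpen r, U.2.basicOpen r⟩ := by
    intro U r T t x h
    rw [← hbasic, ← Category.assoc x]
    congr 1
    rw [← cancel_mono (f ⁻¹ᵁ U.1).ι, h, Category.assoc, Scheme.homOfLE_ι]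
  have hagree : ∀ (U V : S.affineOpens) (T : Scheme.{u}) (t : T ⟶ (f ⁻¹ᵁ U.1).toScheme)
      (x : T ⟶ (f ⁻¹ᵁ V.1).toScheme), t ≫ (f ⁻¹ᵁ U.1).ι = x ≫ (f ⁻¹ᵁ V.1).ι →
      t ≫ q U ≫ c U = x ≫ q V ≫ c V := by
    intro U V T t x h
    apply hom_ext_local
    intro y
    have hyU : f ((t ≫ (f ⁻¹ᵁ U.1).ι) y) ∈ U.1 := mem_of_lift_opens (U := f ⁻¹ᵁ U.1) rfl y
    have hyV : f ((t ≫ (f ⁻¹ᵁ U.1).ι) y) ∈ V.1 := by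
      rw [h]; exact mem_of_lift_opens (U := f ⁻¹ᵁ V.1) rfl y
    obtain ⟨r, s, hrs, hy⟩ := exists_basicOpen_le_affine_inter U.2 V.2 _ ⟨hyU, hyV⟩
    obtain ⟨x', hx'⟩ := exists_restrict (t ≫ (f ⁻¹ᵁ U.1).ι) (f ⁻¹ᵁ S.basicOpen r)
    refine ⟨(t ≫ (f ⁻¹ᵁ U.1).ι) ⁻¹ᵁ (f ⁻¹ᵁ S.basicOpen r), hy, ?_⟩
    rw [← Category.assoc, hbasic' U r _ (_ ≫ t) x' (by rw [hx', Category.assoc])]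
    have key : ∀ (W W' : S.affineOpens) (hW : W = W') (x' : ((t ≫ (f ⁻¹ᵁ U.1).ι) ⁻¹ᵁ (f ⁻¹ᵁ S.basicOpen r)).toScheme ⟶ (f ⁻¹ᵁ W.1).toScheme),
        x' ≫ q W ≫ c W = (x' ≫ X.homOfLE (f.preimage_mono (by rw [hW]))) ≫ q W' ≫ c W' := by
      rintro W _ rfl x'
      rw [Scheme.homOfLE_rfl, Category.comp_id]
    rw [key ⟨S.basicOpen r, U.2.basicOpen r⟩ ⟨S.basicOpen s, V.2.basicOpen s⟩
      (Subtype.ext hrs)]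
    symm
    rw [← Category.assoc]
    apply hbasic'
    simp only [Category.assoc, Scheme.homOfLE_ι]
    rw [← h]
    exact hx'.symm
  obtain ⟨φ, hφ⟩ := glue_hom (T := X) (Z := N)
    (fun W c' => ∀ (U : S.affineOpens) (T : Scheme.{u}) (t : T ⟶ W.toScheme)
      (x : T ⟶ (f ⁻¹ᵁ U.1).toScheme), x ≫ (f ⁻¹ᵁ U.1).ι = t ≫ W.ι → t ≫ c' = x ≫ q U ≫ c U)
    (by
      intro U V h c' hc' W T t x e
      rw [← Category.assoc]
      exact hc' W T _ x (by rw [Category.assoc, Scheme.homOfLE_ι, e]))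
    (by
      intro W c₁ c₂ h₁ h₂
      apply hom_ext_local
      intro y
      obtain ⟨V, hV, hy, -⟩ := exists_isAffineOpen_mem_and_subset (U := ⊤) (x := f y.1) trivial
      obtain ⟨x', hx'⟩ := exists_restrict W.ι (f ⁻¹ᵁ V)
      refine ⟨W.ι ⁻¹ᵁ (f ⁻¹ᵁ V), hy, ?_⟩
      rw [h₁ ⟨V, hV⟩ _ _ x' hx', h₂ ⟨V, hV⟩ _ _ x' hx'])
    (by
      intro y
      obtain ⟨V, hV, hy, -⟩ := exists_isAffineOpen_mem_and_subset (U := ⊤) (x := f y) trivial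
      exact ⟨f ⁻¹ᵁ V, hy, q ⟨V, hV⟩ ≫ c ⟨V, hV⟩, fun U T t x e =>
        hagree ⟨V, hV⟩ U T t x e.symm⟩)
  have hφU : ∀ U : S.affineOpens, (f ⁻¹ᵁ U.1).ι ≫ φ = q U ≫ c U := by
    intro U
    apply hom_ext_local
    intro y
    obtain ⟨W, hyW, hW⟩ := hφ y.1
    obtain ⟨x', hx'⟩ := exists_restrict (f ⁻¹ᵁ U.1).ι W
    refine ⟨(f ⁻¹ᵁ U.1).ι ⁻¹ᵁ W, hyW, ?_⟩
    rw [← Category.assoc, ← hx', Category.assoc]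
    exact hW U _ _ _ hx'.symm
  have hcover : ∀ y : S, ∃ U : S.affineOpens, y ∈ U.1 := by
    intro y
    obtain ⟨V, hV, hy, -⟩ := exists_isAffineOpen_mem_and_subset (U := ⊤) (x := y) trivial
    exact ⟨⟨V, hV⟩, hy⟩
  refine ⟨N, φ, ρ, ⟨⟨fun U hU => ?_⟩, ?_, ?_, ?_⟩⟩
  · obtain ⟨j, hj⟩ := isIso_of_isPullback_ι (hc ⟨U, hU⟩)
    exact IsAffine.of_isIso j.inv
  · apply hom_ext_local
    intro y
    obtain ⟨U, hU⟩ := hcover (f y)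
    refine ⟨f ⁻¹ᵁ U.1, hU, ?_⟩
    rw [← Category.assoc, hφU, Category.assoc, qbase]
  · apply hom_ext_local
    intro y
    obtain ⟨U, hU⟩ := hcover ((b ≫ f) y)
    refine ⟨(b ≫ f) ⁻¹ᵁ U.1, hU, ?_⟩
    have := relCoeqQ_inv f (b ≫ f) a b hab rfl U.1
    rw [← Scheme.Hom.resLE_comp_ι_assoc a (relCoeq_le hab U.1),
      ← Scheme.Hom.resLE_comp_ι_assoc b (relCoeq_le rfl U.1), hφU]
    simp only [q]
    rw [reassoc_of% this]
  · intro U hU r hr Z hZ h hh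
    obtain ⟨j, hj⟩ := isIso_of_isPullback_ι (hc ⟨U, hU⟩)
    have hrj : r = q ⟨U, hU⟩ ≫ j.hom := by
      rw [← cancel_mono (ρ ⁻¹ᵁ U).ι, hr, Category.assoc, hj]
      exact hφU ⟨U, hU⟩
    obtain ⟨v, hv, hv'⟩ := relCoeqQ_univ f (b ≫ f) a b hab rfl U Z h hh
    refine ⟨j.inv ≫ v, ?_, fun v' hv'' => ?_⟩
    · dsimp only
      rw [hrj, Category.assoc, Iso.hom_inv_id_assoc]
      exact hv
    · rw [← hv' (j.hom ≫ v') (by rw [← hv'', hrj, Category.assoc]), Iso.inv_hom_id_assoc]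


theorem IsAbsoluteFrobenius.isAffineHom {X : Scheme.{u}} {q : ℕ} {F : X ⟶ X}
    (hF : IsAbsoluteFrobenius X q F) : IsAffineHom F :=
  ⟨fun U hU => by rw [hF.preimage]; exact hU⟩

theorem IsRelCoeq.rho_phi {X P N : Scheme.{u}} {F : X ⟶ X} {a b : P ⟶ X} {φ : X ⟶ N} {ρ : N ⟶ X}
    (H : IsRelCoeq F a b φ ρ) {q : ℕ} (hF : IsAbsoluteFrobenius X q F) {G : N ⟶ N}
    (hG : IsAbsoluteFrobenius N q G) : ρ ≫ φ = G := by
  apply hom_ext_local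
  intro y
  obtain ⟨U, hU, hy, -⟩ := exists_isAffineOpen_mem_and_subset (U := ⊤) (x := ρ y) trivial
  have := H.affine
  have hD : IsAffineOpen (ρ ⁻¹ᵁ U) := hU.preimage ρ
  refine ⟨ρ ⁻¹ᵁ U, hy, ?_⟩
  have hφρ : ∀ x, ρ (φ x) = x := by
    intro x
    rw [← Scheme.Hom.comp_apply, H.fac]
    exact hF.1 x
  have hGn : ∀ y, G y = y := hG.1
  obtain ⟨w, hw⟩ := exists_lift_opens (ρ ⁻¹ᵁ U) ((ρ ⁻¹ᵁ U).ι ≫ ρ ≫ φ) (by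
    intro d
    change ρ (φ (ρ d.1)) ∈ U
    rw [hφρ]
    exact d.2)
  obtain ⟨w', hw'⟩ := exists_lift_opens (ρ ⁻¹ᵁ U) ((ρ ⁻¹ᵁ U).ι ≫ G) (by
    intro d
    change ρ (G d.1) ∈ U
    rw [hGn]
    exact d.2)
  obtain ⟨r, hr⟩ := exists_lift_opens (ρ ⁻¹ᵁ U) ((F ⁻¹ᵁ U).ι ≫ φ) (by
    intro d
    change ρ (φ d.1) ∈ U
    rw [hφρ]
    exact (hF.preimage U).le d.2)
  rw [← hw, ← hw']
  congr 1
  refine (H.univ U hU r hr _ hD (r ≫ w') ?_).unique ?_ rfl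
  · intro T t x y hx hy
    rw [← cancel_mono (ρ ⁻¹ᵁ U).ι]
    simp only [Category.assoc, hw']
    rw [reassoc_of% hr, reassoc_of% hx, reassoc_of% hy, reassoc_of% H.inv]
  · rw [← cancel_mono (ρ ⁻¹ᵁ U).ι]
    simp only [Category.assoc, hw', hw]
    rw [reassoc_of% hr, reassoc_of% hr, hF.natural hG φ, reassoc_of% H.fac]

theorem IsRelCoeq.uniq {X P N Z : Scheme.{u}} {F : X ⟶ X} {a b : P ⟶ X} {φ : X ⟶ N} {ρ : N ⟶ X}
    (H : IsRelCoeq F a b φ ρ) {q : ℕ} (hF : IsAbsoluteFrobenius X q F)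
    (hφ : ∀ y, φ (ρ y) = y) (V : N.Opens) (c c' : V.toScheme ⟶ Z)
    (h : ∀ (T : Scheme.{u}) (t : T ⟶ V.toScheme) (x : T ⟶ X), t ≫ V.ι = x ≫ φ →
      t ≫ c = t ≫ c') : c = c' := by
  have hφρ : ∀ x, ρ (φ x) = x := by
    intro x
    rw [← Scheme.Hom.comp_apply, H.fac]
    exact hF.1 x
  have hpt : ∀ y : V.toScheme, c y = c' y := by
    intro y
    obtain ⟨r0, hr0⟩ := exists_restrict φ V
    have hy : ρ y.1 ∈ φ ⁻¹ᵁ V := by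
      change φ (ρ y.1) ∈ V
      rw [hφ]; exact y.2
    have h1 : r0 ⟨ρ y.1, hy⟩ = y := by
      apply V.ι.isOpenEmbedding.injective
      have h2 : (r0 ≫ V.ι) ⟨ρ y.1, hy⟩ = ((φ ⁻¹ᵁ V).ι ≫ φ) ⟨ρ y.1, hy⟩ := by rw [hr0]
      exact h2.trans (hφ y.1)
    rw [← h1]
    have h3 : (r0 ≫ c) ⟨ρ y.1, hy⟩ = (r0 ≫ c') ⟨ρ y.1, hy⟩ := by rw [h _ r0 _ hr0]
    exact h3
  apply hom_ext_local
  intro y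
  obtain ⟨W, hW, hyW, -⟩ := exists_isAffineOpen_mem_and_subset (U := ⊤) (x := c y) trivial
  have hyV : ρ y.1 ∈ φ ⁻¹ᵁ (V.ι.opensFunctor.obj (c ⁻¹ᵁ W)) := by
    change φ (ρ y.1) ∈ V.ι.opensFunctor.obj (c ⁻¹ᵁ W)
    rw [hφ]
    exact ⟨y, hyW, rfl⟩
  obtain ⟨U, hU, hyU, hUV⟩ := exists_isAffineOpen_mem_and_subset hyV
  have hDV1 : ρ ⁻¹ᵁ U ≤ V.ι.opensFunctor.obj (c ⁻¹ᵁ W) := by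
    intro d hd
    have := hUV (show ρ d ∈ U from hd)
    change φ (ρ d) ∈ V.ι.opensFunctor.obj (c ⁻¹ᵁ W) at this
    rwa [hφ] at this
  have hDV : ρ ⁻¹ᵁ U ≤ V := by
    intro d hd
    obtain ⟨d', _, rfl⟩ := hDV1 hd
    exact d'.2
  have hcW : ∀ d : V.toScheme, d.1 ∈ ρ ⁻¹ᵁ U → c d ∈ W := by
    intro d hd
    obtain ⟨d', hd', h2⟩ := hDV1 hd
    have : d' = d := V.ι.isOpenEmbedding.injective h2
    rw [← this]; exact hd'
  let j := N.homOfLE hDV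
  have hj : ∀ d, (j d).1 = d.1 := by
    intro d
    exact congr($(N.homOfLE_ι hDV) d)
  obtain ⟨w, hw⟩ := exists_lift_opens W (j ≫ c) (by
    intro d
    rw [Scheme.Hom.comp_apply]
    exact hcW _ (by rw [hj]; exact d.2))
  obtain ⟨w', hw'⟩ := exists_lift_opens W (j ≫ c') (by
    intro d
    rw [Scheme.Hom.comp_apply, ← hpt]
    exact hcW _ (by rw [hj]; exact d.2))
  obtain ⟨r, hr⟩ := exists_lift_opens (ρ ⁻¹ᵁ U) ((F ⁻¹ᵁ U).ι ≫ φ) (by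
    intro d
    change ρ (φ d.1) ∈ U
    rw [hφρ]
    exact (hF.preimage U).le d.2)
  have hww : w = w' := by
    refine (H.univ U hU r hr _ hW (r ≫ w') ?_).unique ?_ rfl
    · intro T t x y hx hy
      have : x ≫ r = y ≫ r := by
        rw [← cancel_mono (ρ ⁻¹ᵁ U).ι]
        simp only [Category.assoc, hr]
        rw [reassoc_of% hx, reassoc_of% hy, H.inv]
      rw [reassoc_of% this]
    · rw [← cancel_mono W.ι]
      simp only [Category.assoc, hw', hw]
      rw [← Category.assoc, ← Category.assoc]
      exact h _ _ ((F ⁻¹ᵁ U).ι) (by rw [Category.assoc, N.homOfLE_ι, hr])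
  refine ⟨V.ι ⁻¹ᵁ (ρ ⁻¹ᵁ U), hyU, ?_⟩
  obtain ⟨l, hl⟩ := exists_restrict V.ι (ρ ⁻¹ᵁ U)
  have hl' : (V.ι ⁻¹ᵁ (ρ ⁻¹ᵁ U)).ι = l ≫ j := by
    rw [← cancel_mono V.ι, Category.assoc, N.homOfLE_ι, hl]
  rw [hl', Category.assoc, Category.assoc, ← hw, ← hw', hww]

theorem IsRelCoeq.exu {X P N Z : Scheme.{u}} {F : X ⟶ X} {a b : P ⟶ X} {φ : X ⟶ N} {ρ : N ⟶ X}
    (H : IsRelCoeq F a b φ ρ) {q : ℕ} (hF : IsAbsoluteFrobenius X q F)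
    (hφ : ∀ y, φ (ρ y) = y) (u : X ⟶ Z) (hu : a ≫ u = b ≫ u) : ∃! v : N ⟶ Z, φ ≫ v = u := by
  have hφρ : ∀ x, ρ (φ x) = x := by
    intro x
    rw [← Scheme.Hom.comp_apply, H.fac]
    exact hF.1 x
  have hFx : ∀ x, F x = x := hF.1
  obtain ⟨v, hv⟩ := glue_hom (T := N) (Z := Z)
    (fun V c => ∀ (T : Scheme.{u}) (t : T ⟶ V.toScheme) (x : T ⟶ X), t ≫ V.ι = x ≫ φ →
      t ≫ c = x ≫ u)
    (by
      intro U V h c' hc' T t x e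
      rw [← Category.assoc]
      exact hc' T _ x (by rw [Category.assoc, Scheme.homOfLE_ι, e]))
    (by
      intro V c c' h h'
      exact H.uniq hF hφ V c c' (fun T t x e => by rw [h T t x e, h' T t x e]))
    (by
      intro y
      obtain ⟨W, hW, hyW, -⟩ := exists_isAffineOpen_mem_and_subset (U := ⊤) (x := u (ρ y)) trivial
      obtain ⟨U, hU, hyU, hUV⟩ := exists_isAffineOpen_mem_and_subset
        (show ρ y ∈ u ⁻¹ᵁ W from hyW)
      refine ⟨ρ ⁻¹ᵁ U, hyU, ?_⟩
      obtain ⟨r, hr⟩ := exists_lift_opens (ρ ⁻¹ᵁ U) ((F ⁻¹ᵁ U).ι ≫ φ) (by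
        intro d
        change ρ (φ d.1) ∈ U
        rw [hφρ]
        exact (hF.preimage U).le d.2)
      obtain ⟨h, hh⟩ := exists_lift_opens W ((F ⁻¹ᵁ U).ι ≫ u) (by
        intro d
        exact hUV ((hF.preimage U).le d.2))
      obtain ⟨v, hv, -⟩ := H.univ U hU r hr _ hW h (by
        intro T t x y hx hy
        rw [← cancel_mono W.ι]
        simp only [Category.assoc, hh]
        rw [reassoc_of% hx, reassoc_of% hy, hu])
      refine ⟨v ≫ W.ι, fun T t x e => ?_⟩
      obtain ⟨x', hx'⟩ := exists_lift_opens (F ⁻¹ᵁ U) x (by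
        intro z
        change F (x z) ∈ U
        rw [← H.fac]
        change ρ ((x ≫ φ) z) ∈ U
        rw [← e]
        exact (t z).2)
      have ht : t = x' ≫ r := by
        rw [← cancel_mono (ρ ⁻¹ᵁ U).ι, Category.assoc, hr, reassoc_of% hx', e]
      rw [ht, Category.assoc, reassoc_of% hv, hh, reassoc_of% hx'])
  refine ⟨v, ?_, fun v' hv' => ?_⟩
  · apply hom_ext_local
    intro x
    obtain ⟨V, hV, hVv⟩ := hv (φ x)
    obtain ⟨l, hl⟩ := exists_restrict φ V
    refine ⟨φ ⁻¹ᵁ V, hV, ?_⟩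
    rw [← Category.assoc, ← hl, Category.assoc]
    exact hVv _ l _ hl
  · apply hom_ext_local
    intro y
    obtain ⟨V, hV, hVv⟩ := hv y
    refine ⟨V, hV, H.uniq hF hφ V _ _ (fun T t x e => ?_)⟩
    rw [hVv T t x e, reassoc_of% e, hv']

theorem quotient_affine
    {k : Type u} [Field k] (p : ℕ) [Fact p.Prime] [CharP k p]
    (I : GroupSchemeOver k) (hI : I.IsInfinitesimal)
    (X : SchemeOver k) (α : ActionOver I X)
    (n : ℕ) (hheight : FrobKillsAt k p I n)
    (Q : SchemeOver k) (φ : X.carrier ⟶ Q.carrier) (hquot : IsCatQuotient α Q φ)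
    (F : X.carrier ⟶ X.carrier) (hF : IsAbsoluteFrobenius X.carrier (p ^ n) F)
    (ρ : Q.carrier ⟶ X.carrier) (hρ : φ ≫ ρ = F) : IsAffineHom ρ ∧ IsAffineHom φ := by
  have := hI.2.1
  have := hF.isAffineHom
  let b := pullback.snd I.str X.str
  let a := α.act (pullback.fst I.str X.str) (pullback.snd I.str X.str) pullback.condition
  have hab : a ≫ F = b ≫ F := act_frob_invariant p n I hheight X α hF _ _ _
  have hb : IsAffineHom b := inferInstanceAs (IsAffineHom (pullback.snd I.str X.str))
  obtain ⟨N, φ', ρ', H⟩ := exists_relCoeq F a b hab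
  obtain ⟨G, hG⟩ := exists_absFrob (T := N) (p ^ n) (pow_pos (Fact.out : p.Prime).pos n)
    (fun U a b => add_pow_of_over p n (ρ' ≫ X.str) U a b)
  have hφ : ∀ y, φ' (ρ' y) = y := by
    intro y
    rw [← Scheme.Hom.comp_apply, H.rho_phi hF hG]
    exact hG.1 y
  have hinv : ∀ {Z : Scheme.{u}} (u : X.carrier ⟶ Z), a ≫ u = b ≫ u →
      ∀ {T : Scheme.{u}} (g : T ⟶ I.carrier) (x : T ⟶ X.carrier) (h),
        α.act g x h ≫ u = x ≫ u := by
    intro Z u hu T g x h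
    have h1 : pullback.lift g x h ≫ a = α.act g x h := by
      simp only [a]
      rw [α.act_natural _ _ _ _ (by rw [Category.assoc, Category.assoc, pullback.condition])]
      exact α.act_congr (pullback.lift_fst _ _ _) (pullback.lift_snd _ _ _) _ _
    have h2 : pullback.lift g x h ≫ b = x := pullback.lift_snd _ _ _
    rw [← h1, Category.assoc, hu, ← Category.assoc, h2]
  obtain ⟨e, he, -⟩ := H.exu hF hφ φ (hquot.2.1 _ _ _)
  obtain ⟨s, hs, -⟩ := H.exu hF hφ X.str (α.act_str _ _ _)
  obtain ⟨e', he', -⟩ := hquot.2.2 ⟨N, s⟩ φ' hs (hinv φ' H.inv)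
  have h1 : e ≫ e' = 𝟙 N := by
    refine (H.exu hF hφ φ' H.inv).unique ?_ (Category.comp_id _)
    rw [← Category.assoc, he, he']
  have h2 : e' ≫ e = 𝟙 _ := by
    refine (hquot.2.2 Q φ hquot.1 hquot.2.1).unique ?_ (Category.comp_id _)
    rw [← Category.assoc, he', he]
  have h3 : e ≫ ρ = ρ' := by
    refine (H.exu hF hφ F hab).unique ?_ H.fac
    rw [← Category.assoc, he, hρ]
  have : IsIso e' := ⟨e, h2, h1⟩
  have := H.affine
  have hρa : IsAffineHom ρ := by
    have : ρ = e' ≫ ρ' := by rw [← h3, reassoc_of% h2]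
    rw [this]; infer_instance
  refine ⟨hρa, ?_⟩
  have : IsAffineHom (φ ≫ ρ) := by rw [hρ]; infer_instance
  exact IsAffineHom.of_comp φ ρ


/-- A space with a scalar multiplication, locally free of rank one. -/
structure PreLine (X : Scheme.{u}) where
  tot : Scheme.{u}
  π : tot ⟶ X
  smul : ∀ {T : Scheme.{u}} (f : Γ(T, ⊤)) (a : T ⟶ tot), T ⟶ tot
  smul_π : ∀ {T : Scheme.{u}} (f : Γ(T, ⊤)) (a : T ⟶ tot), smul f a ≫ π = a ≫ π
  smul_natural : ∀ {T' T : Scheme.{u}} (g : T' ⟶ T) (f : Γ(T, ⊤)) (a : T ⟶ tot),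
    g ≫ smul f a = smul (g.appTop f) (g ≫ a)
  one_smul : ∀ {T : Scheme.{u}} (a : T ⟶ tot), smul 1 a = a
  mul_smul : ∀ {T : Scheme.{u}} (f g : Γ(T, ⊤)) (a : T ⟶ tot), smul (f * g) a = smul f (smul g a)
  loc : ∀ x : X, ∃ U : X.Opens, x ∈ U ∧ ∃ e : U.toScheme ⟶ tot, e ≫ π = U.ι ∧
    ∀ (T' : Scheme.{u}) (t : T' ⟶ U.toScheme) (a : T' ⟶ tot), a ≫ π = t ≫ e ≫ π →
      ∃! f : Γ(T', ⊤), a = smul f (t ≫ e)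

namespace PreLine
variable {X : Scheme.{u}} (E : PreLine X)

/-- Frames. -/
def Gen {T : Scheme.{u}} (e : T ⟶ E.tot) : Prop :=
  ∀ (T' : Scheme.{u}) (t : T' ⟶ T) (a : T' ⟶ E.tot), a ≫ E.π = t ≫ e ≫ E.π →
    ∃! f : Γ(T', ⊤), a = E.smul f (t ≫ e)

variable {E}

theorem Gen.comp {T' T : Scheme.{u}} {e : T ⟶ E.tot} (he : E.Gen e) (g : T' ⟶ T) :
    E.Gen (g ≫ e) := by
  intro T'' t a h
  have := he T'' (t ≫ g) a (by rw [h]; simp only [Category.assoc])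
  simpa only [Category.assoc] using this

theorem Gen.exists_coef {T : Scheme.{u}} {e : T ⟶ E.tot} (he : E.Gen e)
    (a : T ⟶ E.tot) (h : a ≫ E.π = e ≫ E.π) : ∃ f : Γ(T, ⊤), a = E.smul f e := by
  obtain ⟨f, hf, -⟩ := he T (𝟙 T) a (by rw [Category.id_comp, h])
  exact ⟨f, by rwa [Category.id_comp] at hf⟩

theorem Gen.smul_inj {T : Scheme.{u}} {e : T ⟶ E.tot} (he : E.Gen e)
    {f g : Γ(T, ⊤)} (h : E.smul f e = E.smul g e) : f = g := by
  have := (he T (𝟙 T) (E.smul f e) (by rw [Category.id_comp, E.smul_π])).unique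
    (y₁ := f) (y₂ := g) (by rw [Category.id_comp]) (by rw [Category.id_comp, h])
  exact this

variable (E)

theorem exists_gen {T : Scheme.{u}} (x : T ⟶ X) (y : T) :
    ∃ U : T.Opens, y ∈ U ∧ ∃ e : U.toScheme ⟶ E.tot, e ≫ E.π = U.ι ≫ x ∧ E.Gen e := by
  obtain ⟨V, hV, e, h1, h2⟩ := E.loc (x y)
  obtain ⟨r, hr⟩ := exists_restrict x V
  exact ⟨x ⁻¹ᵁ V, hV, r ≫ e, by rw [Category.assoc, h1, hr], Gen.comp h2 r⟩

/-- To prove two points equal one may work locally, with a frame. -/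
theorem ext_gen {T : Scheme.{u}} (x : T ⟶ X) {Z : Scheme.{u}} (c c' : T ⟶ Z)
    (h : ∀ (T' : Scheme.{u}) (t : T' ⟶ T) (e : T' ⟶ E.tot), E.Gen e → e ≫ E.π = t ≫ x →
      t ≫ c = t ≫ c') : c = c' := by
  apply hom_ext_local
  intro y
  obtain ⟨U, hy, e, he, hg⟩ := E.exists_gen x y
  exact ⟨U, hy, h _ _ e hg he⟩

theorem exu_add {T : Scheme.{u}} (a b : T ⟶ E.tot) (h : a ≫ E.π = b ≫ E.π) :
    ∃! d : T ⟶ E.tot, ∀ (T' : Scheme.{u}) (t : T' ⟶ T) (e : T' ⟶ E.tot) (z w : Γ(T', ⊤)),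
      E.Gen e → t ≫ a = E.smul z e → t ≫ b = E.smul w e → t ≫ d = E.smul (z + w) e := by
  have := exists_unique_hom (T := T) (Z := E.tot)
    (fun T₁ t₁ d => ∀ (T' : Scheme.{u}) (t : T' ⟶ T₁) (e : T' ⟶ E.tot) (z w : Γ(T', ⊤)),
      E.Gen e → t ≫ t₁ ≫ a = E.smul z e → t ≫ t₁ ≫ b = E.smul w e → t ≫ d = E.smul (z + w) e)
    ?_ ?_ ?_ ?_
  · simpa only [Category.id_comp] using this
  · intro T'' T₁ s t c hc T' t' e z w he hz hw
    rw [← Category.assoc]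
    exact hc T' (t' ≫ s) e z w he (by rw [← hz]; simp only [Category.assoc])
      (by rw [← hw]; simp only [Category.assoc])
  · intro c hc T' t e z w he hz hw
    apply hom_ext_local
    intro y
    obtain ⟨U, hy, hU⟩ := hc (t y)
    obtain ⟨r, hr⟩ := exists_restrict t U
    refine ⟨t ⁻¹ᵁ U, hy, ?_⟩
    rw [Category.id_comp] at hz hw
    have := hU _ r ((t ⁻¹ᵁ U).ι ≫ e) ((t ⁻¹ᵁ U).ι.appTop z) ((t ⁻¹ᵁ U).ι.appTop w) (he.comp _)
      (by rw [reassoc_of% hr, hz, E.smul_natural]) (by rw [reassoc_of% hr, hw, E.smul_natural])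
    rw [← reassoc_of% hr, this, E.smul_natural, map_add]
  · intro T₁ t₁ c c' hc hc'
    refine E.ext_gen (t₁ ≫ a ≫ E.π) _ _ (fun T' t e he h1 => ?_)
    obtain ⟨z, hz⟩ := he.exists_coef (t ≫ t₁ ≫ a) (by simp only [h1, Category.assoc])
    obtain ⟨w, hw⟩ := he.exists_coef (t ≫ t₁ ≫ b) (by simp only [h1, Category.assoc, h])
    rw [hc _ t e z w he hz hw, hc' _ t e z w he hz hw]
  · intro y
    obtain ⟨U, hy, e, h1, he⟩ := E.exists_gen (a ≫ E.π) y
    obtain ⟨z, hz⟩ := he.exists_coef (U.ι ≫ a) (by simp only [h1, Category.assoc])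
    obtain ⟨w, hw⟩ := he.exists_coef (U.ι ≫ b) (by simp only [h1, Category.assoc, h])
    refine ⟨U, hy, E.smul (z + w) e, fun T' t e' z' w' he' hz' hw' => ?_⟩
    have hπ : t ≫ e ≫ E.π = e' ≫ E.π := by
      rw [← E.smul_π z' e', ← hz', h1, Category.assoc, Category.assoc]
    obtain ⟨v, hv⟩ := he'.exists_coef (t ≫ e) (by rw [Category.assoc, hπ])
    rw [hz, E.smul_natural, hv, ← E.mul_smul] at hz'
    rw [hw, E.smul_natural, hv, ← E.mul_smul] at hw'
    rw [E.smul_natural, hv, ← E.mul_smul, ← he'.smul_inj hz', ← he'.smul_inj hw', map_add, add_mul]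

theorem exu_zero : ∃! d : X ⟶ E.tot, ∀ (T' : Scheme.{u}) (t : T' ⟶ X) (e : T' ⟶ E.tot),
      E.Gen e → e ≫ E.π = t → t ≫ d = E.smul 0 e := by
  have := exists_unique_hom (T := X) (Z := E.tot)
    (fun T₁ t₁ d => ∀ (T' : Scheme.{u}) (t : T' ⟶ T₁) (e : T' ⟶ E.tot),
      E.Gen e → e ≫ E.π = t ≫ t₁ → t ≫ d = E.smul 0 e)
    ?_ ?_ ?_ ?_
  · simpa only [Category.comp_id] using this
  · intro T'' T₁ s t c hc T' t' e he hz
    rw [← Category.assoc]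
    exact hc T' (t' ≫ s) e he (by rw [hz]; simp only [Category.assoc])
  · intro c hc T' t e he hz
    apply hom_ext_local
    intro y
    obtain ⟨U, hy, hU⟩ := hc (t y)
    obtain ⟨r, hr⟩ := exists_restrict t U
    refine ⟨t ⁻¹ᵁ U, hy, ?_⟩
    rw [Category.comp_id] at hz
    have := hU _ r ((t ⁻¹ᵁ U).ι ≫ e) (he.comp _)
      (by rw [hr, Category.assoc, hz])
    rw [← reassoc_of% hr, this, E.smul_natural, map_zero]
  · intro T₁ t₁ c c' hc hc'
    refine E.ext_gen t₁ _ _ (fun T' t e he h1 => ?_)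
    rw [hc _ t e he h1, hc' _ t e he h1]
  · intro y
    obtain ⟨U, hy, e, h1, he⟩ := E.exists_gen (𝟙 X) y
    refine ⟨U, hy, E.smul 0 e, fun T' t e' he' h2 => ?_⟩
    obtain ⟨v, hv⟩ := he'.exists_coef (t ≫ e) (by rw [Category.assoc, h1, h2, Category.comp_id])
    rw [E.smul_natural, hv, ← E.mul_smul, map_zero, zero_mul]

/-- The zero section. -/
def zero : X ⟶ E.tot := E.exu_zero.choose

theorem zero_spec {T' : Scheme.{u}} (t : T' ⟶ X) {e : T' ⟶ E.tot} (he : E.Gen e)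
    (h : e ≫ E.π = t) : t ≫ E.zero = E.smul 0 e := E.exu_zero.choose_spec.1 T' t e he h

/-- Addition. -/
def add {T : Scheme.{u}} (a b : T ⟶ E.tot) (h : a ≫ E.π = b ≫ E.π) : T ⟶ E.tot :=
  (E.exu_add a b h).choose

theorem add_spec {T : Scheme.{u}} (a b : T ⟶ E.tot) (h : a ≫ E.π = b ≫ E.π)
    {e : T ⟶ E.tot} (he : E.Gen e) {z w : Γ(T, ⊤)} (hz : a = E.smul z e) (hw : b = E.smul w e) :
    E.add a b h = E.smul (z + w) e := by
  have := (E.exu_add a b h).choose_spec.1 T (𝟙 T) e z w he (by rw [← hz, Category.id_comp])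
    (by rw [← hw, Category.id_comp])
  rwa [Category.id_comp] at this

theorem add_natural {T' T : Scheme.{u}} (g : T' ⟶ T) (a b : T ⟶ E.tot) (h h') :
    g ≫ E.add a b h = E.add (g ≫ a) (g ≫ b) h' := by
  apply ((E.exu_add (g ≫ a) (g ≫ b) h').unique _ (E.exu_add (g ≫ a) (g ≫ b) h').choose_spec.1)
  intro T₁ t e z w he hz hw
  rw [← Category.assoc]
  exact (E.exu_add a b h).choose_spec.1 T₁ (t ≫ g) e z w he (by rw [← hz, Category.assoc])
    (by rw [← hw, Category.assoc])

theorem add_π {T : Scheme.{u}} (a b : T ⟶ E.tot) (h) : E.add a b h ≫ E.π = a ≫ E.π := by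
  refine E.ext_gen (a ≫ E.π) _ _ (fun T' t e he h1 => ?_)
  obtain ⟨z, hz⟩ := he.exists_coef (t ≫ a) (by simp only [h1, Category.assoc])
  obtain ⟨w, hw⟩ := he.exists_coef (t ≫ b) (by simp only [h1, Category.assoc, h])
  rw [← Category.assoc, E.add_natural t a b h (by simp only [Category.assoc, h]),
    E.add_spec _ _ _ he hz hw, E.smul_π, h1]

theorem add_congr {T : Scheme.{u}} {a a' b b' : T ⟶ E.tot} (ha : a = a') (hb : b = b')
    (h h') : E.add a b h = E.add a' b' h' := by subst ha; subst hb; rfl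

/-- The bundle data of a pre-line bundle. -/
def toData : VecBundleData X where
  tot := E.tot
  π := E.π
  zero := E.zero
  zero_π := by
    refine E.ext_gen (𝟙 X) _ _ (fun T' t e he h1 => ?_)
    rw [Category.comp_id] at h1
    rw [← Category.assoc, E.zero_spec t he h1, E.smul_π, Category.comp_id, h1]
  add := E.add
  smul := E.smul
  add_π := E.add_π
  smul_π := E.smul_π
  add_natural := E.add_natural
  smul_natural := E.smul_natural
  add_comm a b h h' := by
    refine E.ext_gen (a ≫ E.π) _ _ (fun T' t e he h1 => ?_)
    have h2 : (t ≫ a) ≫ E.π = (t ≫ b) ≫ E.π := by simp only [Category.assoc, h]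
    obtain ⟨z, hz⟩ := he.exists_coef (t ≫ a) (by simp only [h1, Category.assoc])
    obtain ⟨w, hw⟩ := he.exists_coef (t ≫ b) (by simp only [h1, Category.assoc, h])
    rw [E.add_natural t a b h h2, E.add_natural t b a h' h2.symm,
      E.add_spec _ _ _ he hz hw, E.add_spec _ _ _ he hw hz, _root_.add_comm]
  add_assoc a b c h₁ h₂ h₃ h₄ := by
    refine E.ext_gen (a ≫ E.π) _ _ (fun T' t e he h1 => ?_)
    have h5 : a ≫ E.π = c ≫ E.π := h₁.trans h₃
    have h2 : (t ≫ a) ≫ E.π = (t ≫ b) ≫ E.π := by simp only [Category.assoc, h₁]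
    have h3 : (t ≫ b) ≫ E.π = (t ≫ c) ≫ E.π := by simp only [Category.assoc, h₃]
    obtain ⟨z, hz⟩ := he.exists_coef (t ≫ a) (by simp only [h1, Category.assoc])
    obtain ⟨w, hw⟩ := he.exists_coef (t ≫ b) (by simp only [h1, Category.assoc, h₁])
    obtain ⟨v, hv⟩ := he.exists_coef (t ≫ c) (by simp only [h1, Category.assoc, h5])
    rw [E.add_natural t (E.add a b h₁) c h₂ (by simp only [Category.assoc, h₂]),
      E.add_natural t a (E.add b c h₃) h₄ (by simp only [Category.assoc, h₄])]
    have e1 := E.add_natural t a b h₁ h2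
    have e2 := E.add_natural t b c h₃ h3
    rw [E.add_spec _ _ _ he hz hw] at e1
    rw [E.add_spec _ _ _ he hw hv] at e2
    rw [E.add_spec _ _ _ he e1 hv, E.add_spec _ _ _ he hz e2, _root_.add_assoc]
  zero_add a h := by
    refine E.ext_gen (a ≫ E.π) _ _ (fun T' t e he h1 => ?_)
    obtain ⟨z, hz⟩ := he.exists_coef (t ≫ a) (by simp only [h1, Category.assoc])
    have e1 := E.zero_spec (t ≫ a ≫ E.π) he h1
    rw [E.add_natural t _ a h (by simp only [Category.assoc] at h ⊢; rw [h]),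
      E.add_spec _ _ _ he (by rw [← e1]; simp only [Category.assoc]) hz, _root_.zero_add, hz]
  one_smul := E.one_smul
  mul_smul := E.mul_smul
  smul_add f a b h h' := by
    refine E.ext_gen (a ≫ E.π) _ _ (fun T' t e he h1 => ?_)
    have h2 : (t ≫ a) ≫ E.π = (t ≫ b) ≫ E.π := by simp only [Category.assoc, h]
    obtain ⟨z, hz⟩ := he.exists_coef (t ≫ a) (by simp only [h1, Category.assoc])
    obtain ⟨w, hw⟩ := he.exists_coef (t ≫ b) (by simp only [h1, Category.assoc, h])
    rw [E.smul_natural, E.add_natural t a b h h2, E.add_natural t _ _ h'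
      (by simp only [Category.assoc, h']),
      E.add_spec _ _ _ he hz hw, E.add_spec _ _ _ he (z := t.appTop f * z) (w := t.appTop f * w)
      (by rw [E.smul_natural, hz, E.mul_smul]) (by rw [E.smul_natural, hw, E.mul_smul]),
      ← E.mul_smul, mul_add]
  add_smul f g a h := by
    refine E.ext_gen (a ≫ E.π) _ _ (fun T' t e he h1 => ?_)
    obtain ⟨z, hz⟩ := he.exists_coef (t ≫ a) (by simp only [h1, Category.assoc])
    rw [E.smul_natural, E.add_natural t _ _ h
      (by simp only [Category.assoc, h]),
      E.add_spec _ _ _ he (z := t.appTop f * z) (w := t.appTop g * z)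
      (by rw [E.smul_natural, hz, E.mul_smul]) (by rw [E.smul_natural, hz, E.mul_smul]), hz,
      ← E.mul_smul, map_add, add_mul]
  zero_smul a := by
    refine E.ext_gen (a ≫ E.π) _ _ (fun T' t e he h1 => ?_)
    obtain ⟨z, hz⟩ := he.exists_coef (t ≫ a) (by simp only [h1, Category.assoc])
    have e1 := E.zero_spec (t ≫ a ≫ E.π) he h1
    rw [E.smul_natural, hz, ← E.mul_smul, map_zero, zero_mul, ← e1]
    simp only [Category.assoc]
  smul_zero f x := by
    refine E.ext_gen x _ _ (fun T' t e he h1 => ?_)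
    have e1 := E.zero_spec (t ≫ x) he h1
    rw [Category.assoc] at e1
    rw [E.smul_natural, e1, ← E.mul_smul, mul_zero]

/-- The line bundle of a pre-line bundle. -/
def toLine : LineBundle X := mkLineBundle E.toData E.loc

theorem toLine_genFrame {T : Scheme.{u}} {e : T ⟶ E.tot} (he : E.Gen e) :
    E.toLine.toVecBundleData.GenFrame e := he

end PreLine


/-- The affine line over the integers. -/
abbrev A1z : Scheme.{u} := Spec (CommRingCat.of (MvPolynomial PUnit.{u+1} (ULift.{u} ℤ)))

/-- The product with the affine line. -/
def pA (X : Scheme.{u}) : Scheme.{u} := pullback (terminal.from X) (terminal.from A1z.{u})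

/-- The projection. -/
def pA1 (X : Scheme.{u}) : pA X ⟶ X := pullback.fst _ _

/-- The other projection. -/
def pA2 (X : Scheme.{u}) : pA X ⟶ A1z.{u} := pullback.snd _ _

instance : IsAffineHom (terminal.from A1z.{u}) := by
  have : IsAffine (⊤_ Scheme.{u}) := inferInstance
  exact isAffineHom_of_isAffine _

instance (X : Scheme.{u}) : IsAffineHom (pA1 X) :=
  MorphismProperty.of_isPullback (P := @IsAffineHom.{u})
    (IsPullback.of_hasPullback (terminal.from X) (terminal.from A1z.{u})).flip
    (inferInstance : IsAffineHom (terminal.from A1z.{u}))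

/-- The point of the product with the affine line with given coordinates. -/
def lA {T X : Scheme.{u}} (x : T ⟶ X) (z : Γ(T, ⊤)) : T ⟶ pA X :=
  pullback.lift x (funHom z) (terminal.hom_ext _ _)

theorem lA_pA1 {T X : Scheme.{u}} (x : T ⟶ X) (z : Γ(T, ⊤)) : lA x z ≫ pA1 X = x :=
  pullback.lift_fst _ _ _

theorem lA_pA2 {T X : Scheme.{u}} (x : T ⟶ X) (z : Γ(T, ⊤)) : lA x z ≫ pA2 X = funHom z :=
  pullback.lift_snd _ _ _

theorem pA_hom_ext {T X : Scheme.{u}} {a b : T ⟶ pA X} (h : a ≫ pA1 X = b ≫ pA1 X)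
    (h' : a ≫ pA2 X = b ≫ pA2 X) : a = b :=
  pullback.hom_ext h h'

theorem comp_lA {T' T X : Scheme.{u}} (t : T' ⟶ T) (x : T ⟶ X) (z : Γ(T, ⊤)) :
    t ≫ lA x z = lA (t ≫ x) (t.appTop z) := by
  apply pA_hom_ext
  · rw [Category.assoc, lA_pA1, lA_pA1]
  · rw [Category.assoc, lA_pA2, lA_pA2, comp_funHom]

theorem lA_inj {T X : Scheme.{u}} {x x' : T ⟶ X} {z z' : Γ(T, ⊤)} (h : lA x z = lA x' z') :
    z = z' := by
  apply funHom_inj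
  rw [← lA_pA2 x, h, lA_pA2]

theorem lA_surj {T X : Scheme.{u}} (c : T ⟶ pA X) : ∃ z, c = lA (c ≫ pA1 X) z := by
  obtain ⟨z, hz⟩ := funHom_surj (c ≫ pA2 X)
  refine ⟨z, ?_⟩
  apply pA_hom_ext
  · rw [lA_pA1]
  · rw [lA_pA2, hz]

/-- The coordinate. -/
def cA {T X : Scheme.{u}} (c : T ⟶ pA X) : Γ(T, ⊤) := (lA_surj c).choose

theorem lA_cA {T X : Scheme.{u}} (c : T ⟶ pA X) : lA (c ≫ pA1 X) (cA c) = c :=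
  (lA_surj c).choose_spec.symm

theorem cA_lA {T X : Scheme.{u}} (x : T ⟶ X) (z : Γ(T, ⊤)) : cA (lA x z) = z :=
  lA_inj (lA_cA (lA x z))

theorem pA_ext {T X : Scheme.{u}} {c c' : T ⟶ pA X} (h : c ≫ pA1 X = c' ≫ pA1 X)
    (h' : cA c = cA c') : c = c' := by
  rw [← lA_cA c, ← lA_cA c', h, h']

theorem cA_comp {T' T X : Scheme.{u}} (t : T' ⟶ T) (c : T ⟶ pA X) :
    cA (t ≫ c) = t.appTop (cA c) := by
  conv_lhs => rw [← lA_cA c, comp_lA, cA_lA]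

/-- The trivial line bundle. -/
def trivPre (X : Scheme.{u}) : PreLine X where
  tot := pA X
  π := pA1 X
  smul f a := lA (a ≫ pA1 X) (f * cA a)
  smul_π f a := lA_pA1 _ _
  smul_natural g f a := by rw [comp_lA, cA_comp, map_mul, Category.assoc]
  one_smul a := by rw [one_mul, lA_cA]
  mul_smul f g a := by rw [lA_pA1, cA_lA, mul_assoc]
  loc x := by
    refine ⟨⊤, trivial, lA (⊤ : X.Opens).ι 1, lA_pA1 _ _, ?_⟩
    intro T t a h
    rw [lA_pA1] at h
    refine ⟨cA a, ?_, fun f hf => ?_⟩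
    · dsimp only
      rw [Category.assoc, lA_pA1, cA_comp, cA_lA, map_one, mul_one, ← h, lA_cA]
    · dsimp only at hf
      rw [hf, cA_lA, cA_comp, cA_lA, map_one, mul_one]

theorem exists_trivial (X : Scheme.{u}) : ∃ N : LineBundle X, IsTrivialBundle N := by
  refine ⟨(trivPre X).toLine, fun _ => lA (𝟙 X) 1, isGlobalFrame_of (lA_pA1 _ _) ?_⟩
  apply PreLine.toLine_genFrame
  intro T t a h
  change a ≫ pA1 X = t ≫ lA (𝟙 X) 1 ≫ pA1 X at h
  change ∃! f, a = lA ((t ≫ lA (𝟙 X) 1) ≫ pA1 X) (f * cA (t ≫ lA (𝟙 X) 1))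
  rw [lA_pA1, Category.comp_id] at h
  refine ⟨cA a, ?_, fun f hf => ?_⟩
  · dsimp only
    rw [Category.assoc, lA_pA1, cA_comp, cA_lA, map_one, mul_one, Category.comp_id, ← h]
    exact (lA_cA (X := X) a).symm
  · dsimp only at hf
    rw [hf, cA_lA, cA_comp, cA_lA, map_one, mul_one]

instance lineBundle_isAffineHom {X : Scheme.{u}} (L : LineBundle X) : IsAffineHom L.π := by
  apply isAffineHom_of_forall_exists_isAffineOpen
  intro x
  obtain ⟨V, hV, e, h1, he⟩ := VecBundle.exists_genFrame L (𝟙 X) x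
  rw [Category.comp_id] at h1
  obtain ⟨U, hU, hxU, hUV⟩ := exists_isAffineOpen_mem_and_subset hV
  refine ⟨U, hxU, hU, ?_⟩
  have hUV' : U ≤ V := hUV
  let e' := X.homOfLE hUV' ≫ e
  have he' : L.GenFrame e' := he.comp _
  have h1' : e' ≫ L.π = U.ι := by simp only [e', Category.assoc, h1, X.homOfLE_ι]
  obtain ⟨r, hr⟩ := exists_restrict L.π U
  have hW : IsAffine (pA U.toScheme) := by
    have : IsAffine U.toScheme := hU
    exact isAffine_of_isAffineHom (pA1 U.toScheme)
  obtain ⟨z, hz⟩ := (he'.comp r).exists_coef ((L.π ⁻¹ᵁ U).ι) (by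
    rw [Category.assoc, h1', hr])
  obtain ⟨w, hw⟩ := exists_lift_opens (L.π ⁻¹ᵁ U) (L.smul (cA (𝟙 _)) (pA1 U.toScheme ≫ e')) (by
    intro y
    change L.π _ ∈ U
    rw [← Scheme.Hom.comp_apply, L.smul_π, Category.assoc, h1']
    exact (pA1 U.toScheme y).2)
  have hwr : w ≫ r = pA1 U.toScheme := by
    rw [← cancel_mono U.ι, Category.assoc, hr, reassoc_of% hw, L.smul_π, Category.assoc, h1']
  have e1 : lA r z ≫ w = 𝟙 _ := by
    rw [← cancel_mono (L.π ⁻¹ᵁ U).ι, Category.assoc, hw, L.smul_natural, ← cA_comp,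
      Category.comp_id, cA_lA, ← Category.assoc, lA_pA1, Category.id_comp, hz]
  have e2 : w ≫ lA r z = 𝟙 _ := by
    rw [comp_lA, hwr]
    apply pA_ext
    · rw [lA_pA1, Category.id_comp]
    · rw [cA_lA]
      apply (he'.comp (pA1 U.toScheme)).smul_inj
      rw [← hw, hz, L.smul_natural, reassoc_of% hwr]
  have : IsIso (lA r z) := ⟨w, e1, e2⟩
  exact IsAffine.of_isIso (lA r z)


section TensorProducts
variable {X : Scheme.{u}} (M L : LineBundle X)

/-- The fibre product of two line bundles. -/
def tpX : Scheme.{u} := pullback M.π L.π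

/-- First projection. -/
def tp1 : tpX M L ⟶ M.tot := pullback.fst M.π L.π

/-- Second projection. -/
def tp2 : tpX M L ⟶ L.tot := pullback.snd M.π L.π

theorem tp_comm : tp1 M L ≫ M.π = tp2 M L ≫ L.π := pullback.condition

instance : IsAffineHom (tp1 M L) :=
  MorphismProperty.of_isPullback (P := @IsAffineHom.{u})
    (IsPullback.of_hasPullback M.π L.π).flip (inferInstance : IsAffineHom L.π)

variable {M L}

/-- The universal property of the fibre product. -/
def tpl {T : Scheme.{u}} (m : T ⟶ M.tot) (l : T ⟶ L.tot) (h : m ≫ M.π = l ≫ L.π) : T ⟶ tpX M L :=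
  pullback.lift m l h

theorem tpl_1 {T : Scheme.{u}} (m : T ⟶ M.tot) (l : T ⟶ L.tot) (h : m ≫ M.π = l ≫ L.π) :
    tpl m l h ≫ tp1 M L = m := pullback.lift_fst _ _ _

theorem tpl_2 {T : Scheme.{u}} (m : T ⟶ M.tot) (l : T ⟶ L.tot) (h : m ≫ M.π = l ≫ L.π) :
    tpl m l h ≫ tp2 M L = l := pullback.lift_snd _ _ _

theorem tpX_ext {T : Scheme.{u}} {a b : T ⟶ tpX M L} (h1 : a ≫ tp1 M L = b ≫ tp1 M L)
    (h2 : a ≫ tp2 M L = b ≫ tp2 M L) : a = b := pullback.hom_ext h1 h2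

theorem comp_tpl {T' T : Scheme.{u}} (t : T' ⟶ T) (m : T ⟶ M.tot) (l : T ⟶ L.tot)
    (h : m ≫ M.π = l ≫ L.π) (h') : t ≫ tpl m l h = tpl (t ≫ m) (t ≫ l) h' := by
  apply tpX_ext
  · rw [Category.assoc, tpl_1, tpl_1]
  · rw [Category.assoc, tpl_2, tpl_2]

variable (M L)

/-- The first map of the coequalizer diagram. -/
def tpa : pA (tpX M L) ⟶ tpX M L :=
  tpl (M.smul (cA (𝟙 _)) (pA1 _ ≫ tp1 M L)) (pA1 _ ≫ tp2 M L)
    (by rw [M.smul_π, Category.assoc, Category.assoc, tp_comm])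

/-- The second map of the coequalizer diagram. -/
def tpb : pA (tpX M L) ⟶ tpX M L :=
  tpl (pA1 _ ≫ tp1 M L) (L.smul (cA (𝟙 _)) (pA1 _ ≫ tp2 M L))
    (by rw [L.smul_π, Category.assoc, Category.assoc, tp_comm])

theorem tpa_1 {T : Scheme.{u}} (t : T ⟶ pA (tpX M L)) :
    t ≫ tpa M L ≫ tp1 M L = M.smul (cA t) (t ≫ pA1 _ ≫ tp1 M L) := by
  rw [tpa, tpl_1, M.smul_natural, ← cA_comp, Category.comp_id]

theorem tpa_2 {T : Scheme.{u}} (t : T ⟶ pA (tpX M L)) :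
    t ≫ tpa M L ≫ tp2 M L = t ≫ pA1 _ ≫ tp2 M L := by
  rw [tpa, tpl_2]

theorem tpb_1 {T : Scheme.{u}} (t : T ⟶ pA (tpX M L)) :
    t ≫ tpb M L ≫ tp1 M L = t ≫ pA1 _ ≫ tp1 M L := by
  rw [tpb, tpl_1]

theorem tpb_2 {T : Scheme.{u}} (t : T ⟶ pA (tpX M L)) :
    t ≫ tpb M L ≫ tp2 M L = L.smul (cA t) (t ≫ pA1 _ ≫ tp2 M L) := by
  rw [tpb, tpl_2, L.smul_natural, ← cA_comp, Category.comp_id]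

theorem tpa_base : tpa M L ≫ tp1 M L ≫ M.π = pA1 _ ≫ tp1 M L ≫ M.π := by
  rw [tpa, ← Category.assoc, tpl_1, M.smul_π, Category.assoc]

theorem tpb_base : tpb M L ≫ tp1 M L ≫ M.π = pA1 _ ≫ tp1 M L ≫ M.π := by
  rw [tpb, ← Category.assoc, tpl_1, Category.assoc]

/-- A candidate for the tensor product. -/
structure TP where
  N : Scheme.{u}
  φ : tpX M L ⟶ N
  ρ : N ⟶ X
  H : IsRelCoeq (tp1 M L ≫ M.π) (tpa M L) (tpb M L) φ ρ

theorem exists_TP : Nonempty (TP M L) := by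
  have : IsAffineHom (tpb M L ≫ tp1 M L ≫ M.π) := by
    rw [tpb_base]; infer_instance
  obtain ⟨N, φ, ρ, H⟩ := exists_relCoeq (tp1 M L ≫ M.π) (tpa M L) (tpb M L)
    ((tpa_base M L).trans (tpb_base M L).symm)
  exact ⟨⟨N, φ, ρ, H⟩⟩

namespace TP
variable {M L} (D : TP M L)

/-- The pairing. -/
def β {T : Scheme.{u}} (m : T ⟶ M.tot) (l : T ⟶ L.tot) (h : m ≫ M.π = l ≫ L.π) : T ⟶ D.N :=
  tpl m l h ≫ D.φ

theorem β_congr {T : Scheme.{u}} {m m' : T ⟶ M.tot} {l l' : T ⟶ L.tot} (hm : m = m') (hl : l = l')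
    (h h') : D.β m l h = D.β m' l' h' := by subst hm; subst hl; rfl

theorem β_ρ {T : Scheme.{u}} (m : T ⟶ M.tot) (l : T ⟶ L.tot) (h : m ≫ M.π = l ≫ L.π) :
    D.β m l h ≫ D.ρ = m ≫ M.π := by
  rw [β, Category.assoc, D.H.fac, ← Category.assoc, tpl_1]

theorem β_nat {T' T : Scheme.{u}} (t : T' ⟶ T) (m : T ⟶ M.tot) (l : T ⟶ L.tot)
    (h : m ≫ M.π = l ≫ L.π) (h') : t ≫ D.β m l h = D.β (t ≫ m) (t ≫ l) h' := by
  rw [β, β, ← Category.assoc, comp_tpl]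

theorem β_smul {T : Scheme.{u}} (f : Γ(T, ⊤)) (m : T ⟶ M.tot) (l : T ⟶ L.tot)
    (h : m ≫ M.π = l ≫ L.π) (h₁ h₂) : D.β (M.smul f m) l h₁ = D.β m (L.smul f l) h₂ := by
  have e1 : tpl (M.smul f m) l h₁ = lA (tpl m l h) f ≫ tpa M L := by
    apply tpX_ext
    · rw [tpl_1, Category.assoc, tpa_1, cA_lA, ← Category.assoc, lA_pA1, tpl_1]
    · rw [tpl_2, Category.assoc, tpa_2, ← Category.assoc, lA_pA1, tpl_2]
  have e2 : tpl m (L.smul f l) h₂ = lA (tpl m l h) f ≫ tpb M L := by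
    apply tpX_ext
    · rw [tpl_1, Category.assoc, tpb_1, ← Category.assoc, lA_pA1, tpl_1]
    · rw [tpl_2, Category.assoc, tpb_2, cA_lA, ← Category.assoc, lA_pA1, tpl_2]
  rw [β, β, e1, e2, Category.assoc, Category.assoc, D.H.inv]

theorem β_coord {T : Scheme.{u}} (f g : Γ(T, ⊤)) (m : T ⟶ M.tot) (l : T ⟶ L.tot)
    (h : m ≫ M.π = l ≫ L.π) (h₁ h₂) :
    D.β (M.smul f m) (L.smul g l) h₁ = D.β m (L.smul (f * g) l) h₂ := by
  rw [D.β_smul f m (L.smul g l) (by rw [h, L.smul_π]) h₁ (by rw [h, L.smul_π, L.smul_π])]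
  exact D.β_congr rfl (L.mul_smul _ _ _).symm _ _

/-- Uniqueness and existence of coordinates over an affine open subset with frames. -/
theorem K0 {U : X.Opens} (hU : IsAffineOpen U) {eM : U.toScheme ⟶ M.tot} {eL : U.toScheme ⟶ L.tot}
    (hM : M.GenFrame eM) (hL : L.GenFrame eL) (hMπ : eM ≫ M.π = U.ι) (hLπ : eL ≫ L.π = U.ι)
    {T : Scheme.{u}} (t : T ⟶ U.toScheme) (c : T ⟶ D.N) (hc : c ≫ D.ρ = t ≫ U.ι)
    (hz : ∀ z : Γ(T, ⊤), (t ≫ eM) ≫ M.π = L.smul z (t ≫ eL) ≫ L.π) :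
    ∃! z : Γ(T, ⊤), c = D.β (t ≫ eM) (L.smul z (t ≫ eL)) (hz z) := by
  let f1 := tp1 M L ≫ M.π
  let W := f1 ⁻¹ᵁ U
  let V := D.ρ ⁻¹ᵁ U
  obtain ⟨rW, hrW⟩ := exists_restrict f1 U
  obtain ⟨rV, hrV⟩ := exists_restrict D.ρ U
  obtain ⟨zM, hzM⟩ := (hM.comp rW).exists_coef (W.ι ≫ tp1 M L) (by
    rw [Category.assoc, Category.assoc, hMπ, hrW])
  obtain ⟨zL, hzL⟩ := (hL.comp rW).exists_coef (W.ι ≫ tp2 M L) (by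
    rw [Category.assoc, Category.assoc, hLπ, hrW, ← tp_comm])
  obtain ⟨r, hr⟩ := exists_lift_opens V (W.ι ≫ D.φ) (by
    intro y
    change D.ρ _ ∈ U
    rw [← Scheme.Hom.comp_apply, Category.assoc, D.H.fac]
    exact mem_of_lift_opens hrW y)
  have hrr : r ≫ rV = rW := by
    rw [← cancel_mono U.ι, Category.assoc, hrV, reassoc_of% hr, D.H.fac, hrW]
  have hVaff : IsAffine V.toScheme := by
    have := D.H.affine
    exact hU.preimage D.ρ
  have univ := D.H.univ U hU r hr
  obtain ⟨v, hv, -⟩ := univ A1z inferInstance (funHom (zM * zL)) (by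
    intro T s x y hx hy
    rw [comp_funHom, comp_funHom]
    congr 1
    have hxy : x ≫ rW = y ≫ rW := by
      rw [← cancel_mono U.ι, Category.assoc, Category.assoc, hrW, reassoc_of% hx, reassoc_of% hy]
      simp only [f1]
      rw [tpa_base, tpb_base]
    have e1 := tpa_1 M L s
    have e2 := tpa_2 M L s
    have e3 := tpb_1 M L s
    have e4 := tpb_2 M L s
    rw [← reassoc_of% hx, hzM, M.smul_natural] at e1
    rw [← reassoc_of% hx, hzL, L.smul_natural] at e2
    rw [← reassoc_of% hy, hzM, M.smul_natural] at e3
    rw [← reassoc_of% hy, hzL, L.smul_natural] at e4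
    rw [← e3, ← M.mul_smul, reassoc_of% hxy] at e1
    rw [← e2, ← L.mul_smul, reassoc_of% hxy] at e4
    have k1 := ((hM.comp rW).comp y).smul_inj e1
    have k2 := ((hL.comp rW).comp y).smul_inj e4
    rw [map_mul, map_mul, k1, k2]
    ring)
  obtain ⟨vf, rfl⟩ := funHom_surj v
  rw [comp_funHom] at hv
  have hv := funHom_inj hv
  obtain ⟨cV, hcV⟩ := exists_lift_opens V c (by
    intro y
    change D.ρ _ ∈ U
    rw [← Scheme.Hom.comp_apply]
    exact mem_of_lift_opens hc.symm y)
  have hcr : cV ≫ rV = t := by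
    rw [← cancel_mono U.ι, Category.assoc, hrV, reassoc_of% hcV, hc]
  have hd0 : (rV ≫ eM) ≫ M.π = L.smul vf (rV ≫ eL) ≫ L.π := by
    rw [L.smul_π, Category.assoc, Category.assoc, hMπ, hLπ]
  obtain ⟨dV, hdV⟩ := exists_lift_opens V (D.β (rV ≫ eM) (L.smul vf (rV ≫ eL)) hd0) (by
    intro y
    change D.ρ _ ∈ U
    rw [← Scheme.Hom.comp_apply, D.β_ρ, Category.assoc, hMπ]
    exact mem_of_lift_opens rfl y)
  have hrd : r ≫ dV = r := by
    rw [← cancel_mono V.ι, Category.assoc, hdV, D.β_nat _ _ _ _ (by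
      rw [Category.assoc, hd0, Category.assoc]), hr]
    have hh : M.smul zM (rW ≫ eM) ≫ M.π = L.smul zL (rW ≫ eL) ≫ L.π := by
      rw [L.smul_π, M.smul_π, Category.assoc, Category.assoc, hMπ, hLπ]
    have : W.ι = tpl (M.smul zM (rW ≫ eM)) (L.smul zL (rW ≫ eL)) hh := by
      apply tpX_ext
      · rw [tpl_1, hzM]
      · rw [tpl_2, hzL]
    have e : W.ι ≫ D.φ = D.β (M.smul zM (rW ≫ eM)) (L.smul zL (rW ≫ eL)) hh := by
      rw [β, ← this]
    rw [e, D.β_coord zM zL (rW ≫ eM) (rW ≫ eL) (by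
      rw [Category.assoc, Category.assoc, hMπ, hLπ]) hh (by
      rw [L.smul_π, Category.assoc, Category.assoc, hMπ, hLπ])]
    refine D.β_congr ?_ ?_ _ _
    · rw [reassoc_of% hrr]
    · rw [L.smul_natural, reassoc_of% hrr, hv]
  have hdV1 : dV = 𝟙 _ := by
    refine (univ V.toScheme hVaff r ?_).unique hrd (Category.comp_id _)
    intro T s x y hx hy
    rw [← cancel_mono V.ι, Category.assoc, Category.assoc, hr, reassoc_of% hx, reassoc_of% hy,
      D.H.inv]
  rw [hdV1, Category.id_comp] at hdV
  refine ⟨cV.appTop vf, ?_, fun z h => ?_⟩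
  · dsimp only
    rw [← hcV, hdV, D.β_nat _ _ _ _ (by rw [Category.assoc, hd0, Category.assoc])]
    refine D.β_congr ?_ ?_ _ _
    · rw [reassoc_of% hcr]
    · rw [L.smul_natural, reassoc_of% hcr]
  · obtain ⟨g, hg⟩ := exists_lift_opens W (tpl (t ≫ eM) (L.smul z (t ≫ eL)) (hz z)) (by
      intro y
      change f1 _ ∈ U
      rw [← Scheme.Hom.comp_apply, ← Category.assoc, tpl_1, Category.assoc, hMπ]
      exact mem_of_lift_opens rfl y)
    have hgr : g ≫ r = cV := by
      rw [← cancel_mono V.ι, Category.assoc, hr, hcV, h, reassoc_of% hg, β]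
    have hgW : g ≫ rW = t := by rw [← hrr, reassoc_of% hgr, hcr]
    have e1 : tpl (t ≫ eM) (L.smul z (t ≫ eL)) (hz z) ≫ tp1 M L = t ≫ eM := tpl_1 _ _ _
    have e2 : tpl (t ≫ eM) (L.smul z (t ≫ eL)) (hz z) ≫ tp2 M L = _ := tpl_2 _ _ _
    rw [← hg, Category.assoc, hzM, M.smul_natural, reassoc_of% hgW] at e1
    rw [← hg, Category.assoc, hzL, L.smul_natural, reassoc_of% hgW] at e2
    have k1 := (hM.comp t).smul_inj (e1.trans (M.one_smul _).symm)
    have k2 := (hL.comp t).smul_inj e2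
    rw [← hgr, appTop_comp_apply, hv, map_mul, k1, k2, one_mul]

end TP
end TensorProducts


namespace TP
variable {X : Scheme.{u}} {M L : LineBundle X} (D : TP M L)

theorem exists_frames {T : Scheme.{u}} (x : T ⟶ X) (y : T) :
    ∃ U : T.Opens, y ∈ U ∧ ∃ (eM : U.toScheme ⟶ M.tot) (eL : U.toScheme ⟶ L.tot),
      eM ≫ M.π = U.ι ≫ x ∧ eL ≫ L.π = U.ι ≫ x ∧ M.GenFrame eM ∧ L.GenFrame eL := by
  obtain ⟨V, hV, e, h1, he⟩ := VecBundle.exists_genFrame M x y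
  obtain ⟨V', hV', e', h1', he'⟩ := VecBundle.exists_genFrame L x y
  refine ⟨V ⊓ V', ⟨hV, hV'⟩, T.homOfLE inf_le_left ≫ e, T.homOfLE inf_le_right ≫ e', ?_, ?_,
    he.comp _, he'.comp _⟩
  · rw [Category.assoc, h1, ← Category.assoc, T.homOfLE_ι]
  · rw [Category.assoc, h1', ← Category.assoc, T.homOfLE_ι]

theorem Kloc {T : Scheme.{u}} {eM : T ⟶ M.tot} {eL : T ⟶ L.tot}
    (hM : M.GenFrame eM) (hL : L.GenFrame eL) (h : eM ≫ M.π = eL ≫ L.π) (y : T) :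
    ∃ U : T.Opens, y ∈ U ∧ ∀ (c : U.toScheme ⟶ D.N), c ≫ D.ρ = U.ι ≫ eM ≫ M.π →
      ∀ hz : (∀ z : Γ(U.toScheme, ⊤), (U.ι ≫ eM) ≫ M.π = L.smul z (U.ι ≫ eL) ≫ L.π),
      ∃! z : Γ(U.toScheme, ⊤), c = D.β (U.ι ≫ eM) (L.smul z (U.ι ≫ eL)) (hz z) := by
  obtain ⟨V, hV, fM0, fL0, hfM0, hfL0, gM0, gL0⟩ :=
    exists_frames (M := M) (L := L) (𝟙 X) ((eM ≫ M.π) y)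
  rw [Category.comp_id] at hfM0 hfL0
  obtain ⟨U, hU, hxU, hUV⟩ := exists_isAffineOpen_mem_and_subset hV
  have hUV' : U ≤ V := hUV
  have gM := gM0.comp (X.homOfLE hUV')
  have gL := gL0.comp (X.homOfLE hUV')
  have hfM : (X.homOfLE hUV' ≫ fM0) ≫ M.π = U.ι := by rw [Category.assoc, hfM0, X.homOfLE_ι]
  have hfL : (X.homOfLE hUV' ≫ fL0) ≫ L.π = U.ι := by rw [Category.assoc, hfL0, X.homOfLE_ι]
  generalize X.homOfLE hUV' ≫ fM0 = fM at *
  generalize X.homOfLE hUV' ≫ fL0 = fL at *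
  obtain ⟨r, hr⟩ := exists_restrict (eM ≫ M.π) U
  refine ⟨(eM ≫ M.π) ⁻¹ᵁ U, hxU, ?_⟩
  generalize hW : (eM ≫ M.π) ⁻¹ᵁ U = W at *
  intro c hc hz
  obtain ⟨a, ⟨a', ha⟩, hae⟩ := (gM.comp r).exists_unit (hM.comp W.ι) (by
    rw [Category.assoc, Category.assoc, hfM, hr])
  obtain ⟨b, ⟨b', hb⟩, hbe⟩ := (gL.comp r).exists_unit (hL.comp W.ι) (by
    rw [Category.assoc, Category.assoc, hfL, hr, h])
  have hz' : ∀ z : Γ(W.toScheme, ⊤), (r ≫ fM) ≫ M.π = L.smul z (r ≫ fL) ≫ L.π := by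
    intro z
    rw [L.smul_π, Category.assoc, Category.assoc, hfL, hfM]
  obtain ⟨z, hz1, hz2⟩ := D.K0 hU gM gL hfM hfL r c (by rw [hc, hr]) hz'
  have key : ∀ w : Γ(W.toScheme, ⊤), D.β (W.ι ≫ eM) (L.smul w (W.ι ≫ eL)) (hz w) =
      D.β (r ≫ fM) (L.smul (a * (w * b)) (r ≫ fL)) (hz' _) := by
    intro w
    rw [← D.β_coord a (w * b) (r ≫ fM) (r ≫ fL) (by
      rw [Category.assoc, Category.assoc, hfL, hfM]) (by
      rw [M.smul_π, L.smul_π, Category.assoc, Category.assoc, hfL, hfM])]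
    refine D.β_congr hae ?_ _ _
    rw [L.mul_smul, hbe]
  refine ⟨↑(a'⁻¹) * z * ↑(b'⁻¹), ?_, fun w hw => ?_⟩
  · dsimp only
    rw [key, hz1]
    refine D.β_congr rfl ?_ _ _
    congr 1
    rw [← ha, ← hb]
    simp [mul_assoc]
  · dsimp only at hw
    rw [key] at hw
    have := hz2 _ hw
    rw [← this, ← ha, ← hb]
    simp [← mul_assoc]

/-- Existence and uniqueness of coordinates. -/
theorem K {T : Scheme.{u}} {eM : T ⟶ M.tot} {eL : T ⟶ L.tot}
    (hM : M.GenFrame eM) (hL : L.GenFrame eL) (h : eM ≫ M.π = eL ≫ L.π)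
    (c : T ⟶ D.N) (hc : c ≫ D.ρ = eM ≫ M.π)
    (hz : ∀ z : Γ(T, ⊤), eM ≫ M.π = L.smul z eL ≫ L.π) :
    ∃! z : Γ(T, ⊤), c = D.β eM (L.smul z eL) (hz z) := by
  have hz' : ∀ {T' : Scheme.{u}} (t : T' ⟶ T) (z : Γ(T', ⊤)),
      (t ≫ eM) ≫ M.π = L.smul z (t ≫ eL) ≫ L.π := by
    intro T' t z
    rw [L.smul_π, Category.assoc, Category.assoc, h]
  have nat : ∀ {T'' T' : Scheme.{u}} (s : T'' ⟶ T') (t : T' ⟶ T) (z : Γ(T', ⊤)),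
      s ≫ D.β (t ≫ eM) (L.smul z (t ≫ eL)) (hz' t z) =
        D.β ((s ≫ t) ≫ eM) (L.smul (s.appTop z) ((s ≫ t) ≫ eL)) (hz' _ _) := by
    intro T'' T' s t z
    rw [D.β_nat _ _ _ _ (by rw [Category.assoc, hz' t z, Category.assoc])]
    refine D.β_congr ?_ ?_ _ _
    · rw [Category.assoc]
    · rw [L.smul_natural, Category.assoc]
  have := exists_unique_fun (T := T)
    (fun T' t z => t ≫ c = D.β (t ≫ eM) (L.smul z (t ≫ eL)) (hz' t z)) ?_ ?_ ?_ ?_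
  · simpa only [Category.id_comp] using this
  · intro T'' T' s t z hz
    rw [Category.assoc, hz, nat]
  · intro z hz
    apply hom_ext_local
    intro y
    obtain ⟨U, hy, hU⟩ := hz y
    refine ⟨U, hy, ?_⟩
    rw [nat]
    rw [Category.id_comp, hU]
    refine D.β_congr ?_ ?_ _ _
    · rw [Category.comp_id]
    · rw [Category.comp_id]
  · intro T' t z w hz hw
    apply fun_ext_local
    intro y
    obtain ⟨U, hy, hU⟩ := D.Kloc (hM.comp t) (hL.comp t)
      (by rw [Category.assoc, Category.assoc, h]) y
    refine ⟨U, hy, (hU (U.ι ≫ t ≫ c) (by simp only [Category.assoc, hc]) (by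
      intro z; simp only [L.smul_π, Category.assoc, h])).unique ?_ ?_⟩
    · rw [hz, nat]
      exact D.β_congr (by simp) (by simp) _ _
    · rw [hw, nat]
      exact D.β_congr (by simp) (by simp) _ _
  · intro y
    obtain ⟨U, hy, hU⟩ := D.Kloc hM hL h y
    exact ⟨U, hy, (hU (U.ι ≫ c) (by simp only [Category.assoc, hc]) (hz' _)).exists⟩

theorem loc_β {T : Scheme.{u}} (c : T ⟶ D.N) (y : T) : ∃ U : T.Opens, y ∈ U ∧
    ∃ (eM : U.toScheme ⟶ M.tot) (eL : U.toScheme ⟶ L.tot) (z : Γ(U.toScheme, ⊤))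
      (h : eM ≫ M.π = L.smul z eL ≫ L.π),
      M.GenFrame eM ∧ L.GenFrame eL ∧ eM ≫ M.π = eL ≫ L.π ∧
      U.ι ≫ c = D.β eM (L.smul z eL) h := by
  obtain ⟨U, hy, eM, eL, h1, h2, h3, h4⟩ := exists_frames (M := M) (L := L) (c ≫ D.ρ) y
  obtain ⟨z, hz, -⟩ := D.K h3 h4 (h1.trans h2.symm) (U.ι ≫ c) (by rw [h1, Category.assoc])
    (by intro z; rw [L.smul_π, h1, h2])
  exact ⟨U, hy, eM, eL, z, _, h3, h4, h1.trans h2.symm, hz⟩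

/-- The defining property of scalar multiplication. -/
def SmulSpec {T : Scheme.{u}} (f : Γ(T, ⊤)) (c d : T ⟶ D.N) : Prop :=
  ∀ (T' : Scheme.{u}) (t : T' ⟶ T) (m : T' ⟶ M.tot) (l : T' ⟶ L.tot) (h : m ≫ M.π = l ≫ L.π)
    (h'), t ≫ c = D.β m l h → t ≫ d = D.β (M.smul (t.appTop f) m) l h'

theorem SmulSpec.comp {T₁ T : Scheme.{u}} {f : Γ(T, ⊤)} {c d : T ⟶ D.N} (H : D.SmulSpec f c d)
    (s : T₁ ⟶ T) : D.SmulSpec (s.appTop f) (s ≫ c) (s ≫ d) := by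
  intro T' t m l h h' hc
  have := H T' (t ≫ s) m l h (by rw [M.smul_π, h]) (by rw [← hc, Category.assoc])
  rw [← Category.assoc, this]
  refine D.β_congr ?_ rfl _ _
  rw [appTop_comp_apply]

theorem SmulSpec.uniq {T : Scheme.{u}} {f : Γ(T, ⊤)} {c d d' : T ⟶ D.N} (H : D.SmulSpec f c d)
    (H' : D.SmulSpec f c d') : d = d' := by
  apply hom_ext_local
  intro y
  obtain ⟨U, hy, eM, eL, z, h, -, -, -, hc⟩ := D.loc_β c y
  refine ⟨U, hy, ?_⟩
  rw [H _ U.ι _ _ h (by rw [M.smul_π, h]) hc, H' _ U.ι _ _ h (by rw [M.smul_π, h]) hc]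

theorem exu_smul {T : Scheme.{u}} (f : Γ(T, ⊤)) (c : T ⟶ D.N) : ∃! d, D.SmulSpec f c d := by
  have := exists_unique_hom (T := T)
    (fun T' t d => D.SmulSpec (t.appTop f) (t ≫ c) d) ?_ ?_ ?_ ?_
  · simpa only [Category.id_comp, appTop_id_apply] using this
  · intro T'' T' s t d H
    have := H.comp D s
    rwa [← appTop_comp_apply, ← Category.assoc] at this
  · intro d hd T' t m l h h' hc
    apply hom_ext_local
    intro y
    obtain ⟨U, hy, hU⟩ := hd (t y)
    obtain ⟨r, hr⟩ := exists_restrict t U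
    refine ⟨t ⁻¹ᵁ U, hy, ?_⟩
    rw [Category.id_comp] at hc
    have h3 : ((t ⁻¹ᵁ U).ι ≫ m) ≫ M.π = ((t ⁻¹ᵁ U).ι ≫ l) ≫ L.π := by
      rw [Category.assoc, h, Category.assoc]
    have := hU _ r ((t ⁻¹ᵁ U).ι ≫ m) ((t ⁻¹ᵁ U).ι ≫ l) h3 (by rw [M.smul_π, h3]) (by
      rw [reassoc_of% hr, hc, D.β_nat _ _ _ _ h3])
    rw [← reassoc_of% hr, this, D.β_nat _ _ _ _ (by rw [Category.assoc, h', Category.assoc])]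
    refine D.β_congr ?_ rfl _ _
    rw [M.smul_natural, appTop_id_apply, ← appTop_comp_apply, ← appTop_comp_apply, hr]
  · intro T' t d d' H H'
    exact H.uniq D H'
  · intro y
    obtain ⟨U, hy, eM, eL, z, h, hM, hL, hh, hc⟩ := D.loc_β c y
    refine ⟨U, hy, D.β eM (L.smul (U.ι.appTop f * z) eL) (by rw [L.smul_π, hh]), ?_⟩
    intro T' t m l h1 h2 hm
    have hb : m ≫ M.π = (t ≫ eM) ≫ M.π := by
      rw [← D.β_ρ m l h1, ← hm, hc, Category.assoc, D.β_ρ, Category.assoc]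
    have hh' : (t ≫ eM) ≫ M.π = (t ≫ eL) ≫ L.π := by
      rw [Category.assoc, hh, Category.assoc]
    have hz : ∀ z, (t ≫ eM) ≫ M.π = L.smul z (t ≫ eL) ≫ L.π := by
      intro z; rw [L.smul_π, hh']
    obtain ⟨zm, rfl⟩ := (hM.comp t).exists_coef m hb
    obtain ⟨zl, rfl⟩ := (hL.comp t).exists_coef l (by rw [← h1, hb, hh'])
    rw [D.β_coord _ _ _ _ hh' h1 (hz _), hc, D.β_nat _ _ _ _ (by
      rw [Category.assoc, h, Category.assoc])] at hm
    have e := (D.K (hM.comp t) (hL.comp t) hh'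
      (D.β (t ≫ eM) (L.smul (zm * zl) (t ≫ eL)) (hz _)) (D.β_ρ _ _ _) hz).unique
      (y₁ := t.appTop z) (y₂ := zm * zl) (by
        rw [← hm]
        exact D.β_congr rfl (L.smul_natural _ _ _) _ _) rfl
    rw [D.β_nat _ _ _ _ (by rw [Category.assoc, hh, Category.assoc, L.smul_π])]
    have : M.smul (t.appTop (U.ι.appTop f)) (M.smul zm (t ≫ eM)) =
      M.smul (t.appTop (U.ι.appTop f) * zm) (t ≫ eM) := (M.mul_smul _ _ _).symm
    rw [D.β_congr this rfl h2 (by rw [← this, h2]), D.β_coord _ _ _ _ hh' _ (hz _)]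
    refine D.β_congr rfl ?_ _ _
    rw [L.smul_natural, map_mul, e, mul_assoc]

/-- Scalar multiplication. -/
def smul {T : Scheme.{u}} (f : Γ(T, ⊤)) (c : T ⟶ D.N) : T ⟶ D.N := (D.exu_smul f c).choose

theorem smul_spec {T : Scheme.{u}} (f : Γ(T, ⊤)) (c : T ⟶ D.N) : D.SmulSpec f c (D.smul f c) :=
  (D.exu_smul f c).choose_spec.1

theorem smul_β {T : Scheme.{u}} (f : Γ(T, ⊤)) (m : T ⟶ M.tot) (l : T ⟶ L.tot) (h h') :
    D.smul f (D.β m l h) = D.β (M.smul f m) l h' := by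
  have := D.smul_spec f (D.β m l h) T (𝟙 T) m l h (by rw [M.smul_π, h]) (Category.id_comp _)
  rw [Category.id_comp] at this
  rw [this]
  exact D.β_congr (by rw [appTop_id_apply]) rfl _ _

theorem smul_natural {T' T : Scheme.{u}} (g : T' ⟶ T) (f : Γ(T, ⊤)) (c : T ⟶ D.N) :
    g ≫ D.smul f c = D.smul (g.appTop f) (g ≫ c) :=
  ((D.smul_spec f c).comp D g).uniq D (D.smul_spec _ _)

/-- Points are locally in the image of the pairing. -/
theorem ext_β {T Z : Scheme.{u}} (c : T ⟶ D.N) (a b : T ⟶ Z)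
    (H : ∀ (T' : Scheme.{u}) (t : T' ⟶ T) (m l h), t ≫ c = D.β m l h → t ≫ a = t ≫ b) : a = b := by
  apply hom_ext_local
  intro y
  obtain ⟨U, hy, eM, eL, z, h, -, -, -, hc⟩ := D.loc_β c y
  exact ⟨U, hy, H _ _ _ _ h hc⟩

theorem smul_β' {T : Scheme.{u}} (f : Γ(T, ⊤)) (m : T ⟶ M.tot) (l : T ⟶ L.tot) (h h') :
    D.smul f (D.β m l h) = D.β m (L.smul f l) h' := by
  rw [D.smul_β f m l h (by rw [M.smul_π, h]), D.β_smul f m l h]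

theorem gen {T : Scheme.{u}} {eM : T ⟶ M.tot} {eL : T ⟶ L.tot}
    (hM : M.GenFrame eM) (hL : L.GenFrame eL) (h : eM ≫ M.π = eL ≫ L.π) (T' : Scheme.{u})
    (t : T' ⟶ T) (a : T' ⟶ D.N) (ha : a ≫ D.ρ = t ≫ D.β eM eL h ≫ D.ρ) :
    ∃! f : Γ(T', ⊤), a = D.smul f (t ≫ D.β eM eL h) := by
  have hh : (t ≫ eM) ≫ M.π = (t ≫ eL) ≫ L.π := by
    rw [Category.assoc, h, Category.assoc]
  have hz : ∀ z, (t ≫ eM) ≫ M.π = L.smul z (t ≫ eL) ≫ L.π := by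
    intro z; rw [L.smul_π, hh]
  have := D.K (hM.comp t) (hL.comp t) hh a (by rw [ha, D.β_ρ, Category.assoc]) hz
  refine (existsUnique_congr fun f => ?_).mp this
  rw [D.β_nat t eM eL h hh, D.smul_β' _ _ _ _ (hz f)]

/-- The tensor product as a line. -/
def pre : PreLine X where
  tot := D.N
  π := D.ρ
  smul f c := D.smul f c
  smul_π f c := by
    apply D.ext_β c
    intro T' t m l h hc
    rw [← Category.assoc, ← Category.assoc, D.smul_natural, hc,
      D.smul_β _ _ _ _ (by rw [M.smul_π, h]), D.β_ρ, D.β_ρ, M.smul_π]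
  smul_natural g f c := D.smul_natural g f c
  one_smul c := by
    apply D.ext_β c
    intro T' t m l h hc
    rw [D.smul_natural, hc, D.smul_β _ _ _ _ (by rw [M.smul_π, h]), map_one]
    exact D.β_congr (M.one_smul _) rfl _ _
  mul_smul f g c := by
    apply D.ext_β c
    intro T' t m l h hc
    rw [D.smul_natural, D.smul_natural, D.smul_natural, hc,
      D.smul_β _ _ _ _ (by rw [M.smul_π, h]), D.smul_β _ _ _ _ (by rw [M.smul_π, h]),
      D.smul_β _ _ _ _ (by rw [M.smul_π, M.smul_π, h]), map_mul]
    exact D.β_congr (M.mul_smul _ _ _) rfl _ _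
  loc x := by
    obtain ⟨U, hy, eM, eL, h1, h2, h3, h4⟩ := exists_frames (M := M) (L := L) (𝟙 X) x
    refine ⟨U, hy, D.β eM eL (h1.trans h2.symm), ?_, D.gen h3 h4 _⟩
    rw [D.β_ρ, h1, Category.comp_id]

end TP


namespace TP
variable {X : Scheme.{u}} {M L : LineBundle X} (D : TP M L)

theorem pre_gen {T : Scheme.{u}} {eM : T ⟶ M.tot} {eL : T ⟶ L.tot}
    (hM : M.GenFrame eM) (hL : L.GenFrame eL) (h : eM ≫ M.π = eL ≫ L.π) :
    D.pre.Gen (D.β eM eL h) := D.gen hM hL h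

theorem ext_frames {T Z : Scheme.{u}} (x : T ⟶ X) (a b : T ⟶ Z)
    (H : ∀ (T' : Scheme.{u}) (t : T' ⟶ T) (eM : T' ⟶ M.tot) (eL : T' ⟶ L.tot),
      M.GenFrame eM → L.GenFrame eL → eM ≫ M.π = t ≫ x → eL ≫ L.π = t ≫ x → t ≫ a = t ≫ b) :
    a = b := by
  apply hom_ext_local
  intro y
  obtain ⟨U, hy, eM, eL, h1, h2, h3, h4⟩ := exists_frames (M := M) (L := L) x y
  exact ⟨U, hy, H _ _ eM eL h3 h4 h1 h2⟩

theorem β_coord' {T : Scheme.{u}} (f g : Γ(T, ⊤)) (m : T ⟶ M.tot) (l : T ⟶ L.tot)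
    (h : m ≫ M.π = l ≫ L.π) (h₁) :
    D.β (M.smul f m) (L.smul g l) h₁ = D.pre.smul (f * g) (D.β m l h) := by
  rw [D.β_coord f g m l h h₁ (by rw [L.smul_π, h])]
  exact (D.smul_β' _ _ _ _ _).symm

theorem β_add_left {T : Scheme.{u}} (a a' : T ⟶ M.tot) (b : T ⟶ L.tot) (h₁ h₂ h₃ h₄ h₅) :
    D.β (M.add a a' h₁) b h₂ = D.pre.add (D.β a b h₃) (D.β a' b h₄) h₅ := by
  refine ext_frames (M := M) (L := L) (a ≫ M.π) _ _ (fun T' t eM eL hM hL e1 e2 => ?_)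
  have hh := e1.trans e2.symm
  obtain ⟨z, hz⟩ := hM.exists_coef (t ≫ a) (by rw [Category.assoc, e1])
  obtain ⟨w, hw⟩ := hM.exists_coef (t ≫ a') (by rw [Category.assoc, e1, h₁])
  obtain ⟨v, hv⟩ := hL.exists_coef (t ≫ b) (by rw [Category.assoc, e2, h₃])
  have c1 : t ≫ D.β a b h₃ = D.pre.smul (z * v) (D.β eM eL hh) := by
    rw [D.β_nat t a b h₃ (by rw [Category.assoc, h₃, Category.assoc]),
      D.β_congr hz hv _ (by rw [M.smul_π, L.smul_π, hh]), D.β_coord' _ _ _ _ hh]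
  have c2 : t ≫ D.β a' b h₄ = D.pre.smul (w * v) (D.β eM eL hh) := by
    rw [D.β_nat t a' b h₄ (by rw [Category.assoc, h₄, Category.assoc]),
      D.β_congr hw hv _ (by rw [M.smul_π, L.smul_π, hh]), D.β_coord' _ _ _ _ hh]
  have c3 : t ≫ D.pre.add (D.β a b h₃) (D.β a' b h₄) h₅ =
      D.pre.smul (z * v + w * v) (D.β eM eL hh) := by
    have h6 : (t ≫ D.β a b h₃) ≫ D.pre.π = (t ≫ D.β a' b h₄) ≫ D.pre.π :=
      (Category.assoc _ _ _).trans ((congrArg (t ≫ ·) h₅).trans (Category.assoc _ _ _).symm)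
    exact (D.pre.add_natural t _ _ h₅ h6).trans (D.pre.add_spec _ _ h6 (D.pre_gen hM hL hh) c1 c2)
  have c4 : t ≫ M.add a a' h₁ = M.smul (z + w) eM := by
    rw [M.add_natural t a a' h₁ (by rw [Category.assoc, h₁, Category.assoc]),
      M.add_congr hz hw _ (by rw [M.smul_π, M.smul_π]), M.add_smul]
  refine Eq.trans ?_ c3.symm
  rw [D.β_nat t _ b h₂ (by rw [Category.assoc, h₂, Category.assoc]),
    D.β_congr c4 hv _ (by rw [M.smul_π, L.smul_π, hh]), D.β_coord' _ _ _ _ hh, add_mul]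

theorem β_add_right {T : Scheme.{u}} (a : T ⟶ M.tot) (b b' : T ⟶ L.tot) (h₁ h₂ h₃ h₄ h₅) :
    D.β a (L.add b b' h₁) h₂ = D.pre.add (D.β a b h₃) (D.β a b' h₄) h₅ := by
  refine ext_frames (M := M) (L := L) (a ≫ M.π) _ _ (fun T' t eM eL hM hL e1 e2 => ?_)
  have hh := e1.trans e2.symm
  obtain ⟨v, hv⟩ := hM.exists_coef (t ≫ a) (by rw [Category.assoc, e1])
  obtain ⟨z, hz⟩ := hL.exists_coef (t ≫ b) (by rw [Category.assoc, e2, h₃])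
  obtain ⟨w, hw⟩ := hL.exists_coef (t ≫ b') (by rw [Category.assoc, e2, h₄])
  have c1 : t ≫ D.β a b h₃ = D.pre.smul (v * z) (D.β eM eL hh) := by
    rw [D.β_nat t a b h₃ (by rw [Category.assoc, h₃, Category.assoc]),
      D.β_congr hv hz _ (by rw [M.smul_π, L.smul_π, hh]), D.β_coord' _ _ _ _ hh]
  have c2 : t ≫ D.β a b' h₄ = D.pre.smul (v * w) (D.β eM eL hh) := by
    rw [D.β_nat t a b' h₄ (by rw [Category.assoc, h₄, Category.assoc]),
      D.β_congr hv hw _ (by rw [M.smul_π, L.smul_π, hh]), D.β_coord' _ _ _ _ hh]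
  have c3 : t ≫ D.pre.add (D.β a b h₃) (D.β a b' h₄) h₅ =
      D.pre.smul (v * z + v * w) (D.β eM eL hh) := by
    have h6 : (t ≫ D.β a b h₃) ≫ D.pre.π = (t ≫ D.β a b' h₄) ≫ D.pre.π :=
      (Category.assoc _ _ _).trans ((congrArg (t ≫ ·) h₅).trans (Category.assoc _ _ _).symm)
    exact (D.pre.add_natural t _ _ h₅ h6).trans (D.pre.add_spec _ _ h6 (D.pre_gen hM hL hh) c1 c2)
  have c4 : t ≫ L.add b b' h₁ = L.smul (z + w) eL := by
    rw [L.add_natural t b b' h₁ (by rw [Category.assoc, h₁, Category.assoc]),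
      L.add_congr hz hw _ (by rw [L.smul_π, L.smul_π]), L.add_smul]
  refine Eq.trans ?_ c3.symm
  rw [D.β_nat t a _ h₂ (by rw [Category.assoc, h₂, Category.assoc]),
    D.β_congr hv c4 _ (by rw [M.smul_π, L.smul_π, hh]), D.β_coord' _ _ _ _ hh, mul_add]

theorem isTensor : IsTensor M L D.pre.toLine := by
  refine ⟨fun a b h => D.β a b h, ?_, ?_, ?_, ?_, ?_, ?_, ?_⟩
  · intro T a b h
    exact D.β_ρ a b h
  · intro T' T g a b h h'
    exact D.β_nat g a b h h'
  · intro T a a' b h₁ h₂ h₃ h₄ h₅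
    exact D.β_add_left a a' b h₁ h₂ h₃ h₄ h₅
  · intro T a b b' h₁ h₂ h₃ h₄ h₅
    exact D.β_add_right a b b' h₁ h₂ h₃ h₄ h₅
  · intro T f a b h₁ h₂
    exact (D.smul_β f a b h₂ h₁).symm
  · intro T f a b h₁ h₂
    exact (D.smul_β' f a b h₂ h₁).symm
  · intro U sM sL hM hL h
    rw [isFrame_iff] at hM hL
    refine isFrame_iff.mpr ?_
    exact ⟨(D.β_ρ _ _ _).trans hM.1, PreLine.toLine_genFrame _ (D.pre_gen hM.2 hL.2 h)⟩

end TP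

theorem exists_isTensorPow {X : Scheme.{u}} (L : LineBundle X) (m : ℕ) :
    ∃ N, IsTensorPow L m N := by
  induction m with
  | zero => exact exists_trivial X
  | succ m ih =>
    obtain ⟨M, hM⟩ := ih
    obtain ⟨D⟩ := exists_TP M L
    exact ⟨D.pre.toLine, M, hM, D.isTensor⟩

theorem IsPow.isTensorPow {X : Scheme.{u}} {L : LineBundle X} {m : ℕ} {N : LineBundle X}
    (h : IsPow L m N) : IsTensorPow L m N := by
  cases m with
  | zero => exact h.trivial
  | succ m =>
    obtain ⟨M, hM⟩ := exists_isTensorPow L m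
    obtain ⟨P, hP⟩ := hM.isPow
    obtain ⟨P', hP'⟩ := h
    exact ⟨M, hM, hP.isTensor hP'⟩


theorem IsPow.refl {X : Scheme.{u}} (L : LineBundle X) : IsPow L 1 L :=
  ⟨𝟙 _, Category.id_comp _, fun f a => by rw [Category.comp_id, Category.comp_id, pow_one],
    fun he => by rwa [Category.comp_id]⟩

/-- Ampleness descends from powers of pullbacks along affine morphisms. -/
theorem IsAmple.of_affine {Y X : Scheme.{u}} (g : Y ⟶ X) [IsAffineHom g] {L : LineBundle X}
    (hL : IsAmple L) {L' L₀ : LineBundle Y} {τ}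
    (H : IsPB g L.toVecBundleData L'.toVecBundleData τ) {q : ℕ} (hq : 0 < q)
    (h₀ : IsPow L₀ q L') : IsAmple L₀ := by
  obtain ⟨hc, hqs, h⟩ := hL
  refine ⟨QuasiCompact.compactSpace_of_compactSpace g, quasiSeparatedSpace_of_quasiSeparated g, ?_⟩
  intro y
  obtain ⟨m, hm, N, hN, s, hs, U, hU, hy, hUs⟩ := h (g y)
  have HN := pullbackBundle_isPB g N
  obtain ⟨t, ⟨ht1, ht2⟩, -⟩ := HN.exu (𝟙 Y) (g ≫ s) (by
    rw [Category.assoc, hs, Category.comp_id, Category.id_comp])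
  refine ⟨q * m, Nat.mul_pos hq hm, pullbackBundle g N,
    (h₀.trans (hN.isPow.pullback g H HN)).isTensorPow, t, ht1, g ⁻¹ᵁ U, hU.preimage g, hy, ?_⟩
  ext z
  have e : (g z ∈ (U : Set X)) ↔ s (g z) ≠ N.zero (g z) := by rw [hUs]; rfl
  exact e.trans (HN.nonvanishing hs ht1 ht2 z).symm

/-- In the situation of the quotient of `X` by an infinitesimal group
scheme `I` and the factorization `ψ : X/I ⟶ X^{(pⁿ)}` of the `n`-th relative Frobenius
(`n ≥ h(I)`): for a line bundle `L` on `X`, the line bundle `M := ψ^*(L^{(pⁿ)})` on `X/I`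
satisfies `φ^*(M) ≅ L^{⊗ pⁿ}`; moreover `L` is ample if and only if `M` is ample. -/
theorem quotient_line_bundle_power
    {k : Type u} [Field k] (p : ℕ) [Fact p.Prime] [CharP k p]
    (I : GroupSchemeOver k) (hI : I.IsInfinitesimal)
    (X : SchemeOver k) (hXft : X.IsFiniteType) (α : ActionOver I X)
    (n : ℕ) (hn : 0 < n) (hheight : FrobKillsAt k p I n)
    (Q : SchemeOver k) (φ : X.carrier ⟶ Q.carrier) (hquot : IsCatQuotient α Q φ)
    (FD : FrobeniusData k p n X)
    (ψ : Q.carrier ⟶ FD.tw.carrier) (hψ : φ ≫ ψ = FD.rel)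
    (L : LineBundle X.carrier)
    (Ltw : LineBundle FD.tw.carrier) (hLtw : IsPullbackBundle FD.pr L Ltw)
    (M : LineBundle Q.carrier) (hM : IsPullbackBundle ψ Ltw M) :
    (∃ PM : LineBundle X.carrier, IsPullbackBundle φ M PM ∧
      ∃ LP : LineBundle X.carrier, IsTensorPow L (p ^ n) LP ∧ VBIso PM LP) ∧
    (IsAmple L ↔ IsAmple M) := by
  have hq : 0 < p ^ n := pow_pos (Fact.out : p.Prime).pos n
  obtain ⟨τ, H⟩ := (isPullbackBundle_iff _ _ _).mp hLtw
  obtain ⟨τ', H'⟩ := (isPullbackBundle_iff _ _ _).mp hM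
  have HM := H.trans H'
  have hρ : φ ≫ ψ ≫ FD.pr = FD.abs := by rw [← Category.assoc, hψ, FD.rel_pr]
  obtain ⟨aρ, aφ⟩ := quotient_affine p I hI X α n hheight Q φ hquot FD.abs FD.abs_frob _ hρ
  have HP := pullbackBundle_isPB φ M
  have HPL := HM.trans HP
  rw [hρ] at HPL
  have hpow : IsPow L (p ^ n) (pullbackBundle φ M) :=
    isPow_frobenius (p ^ n) FD.abs_frob (fun {T} t =>
      exists_absFrob (T := T) (p ^ n) hq (fun U a b => add_pow_of_over p n (t ≫ X.str) U a b)) HPL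
  refine ⟨⟨pullbackBundle φ M, (isPullbackBundle_iff _ _ _).mpr ⟨_, HP⟩, pullbackBundle φ M,
    hpow.isTensorPow, 𝟙 _, ⟨Category.id_comp _, ?_, ?_⟩, inferInstance⟩, ?_, ?_⟩
  · intro T a b h h'
    rw [Category.comp_id]
    exact (VecBundleData.add_congr _ (Category.comp_id _).symm (Category.comp_id _).symm _ _)
  · intro T f a
    rw [Category.comp_id, Category.comp_id]
  · intro h
    exact h.of_affine (ψ ≫ FD.pr) HM one_pos (IsPow.refl M)
  · intro h
    exact h.of_affine φ HP hq hpow
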